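/- There exist absolute constants C and d such that for every undirected edge-weighted buy-at-bulk instance on an n-vertex graph (n ≥ 2) there is a randomized online algorithm whose expected objective value on every finite request sequence, in every arrival order, is at most C·(log n)^d times the optimal objective value of that multicommodity instance. -/

import Mathlib

open MeasureTheory

namespace BaB

/-- A walk from `s` to `t` using edges from `E`, given as the list of traversed edges. -/
def IsWalk {W : Type} (E : Set (W × W)) : W → W → List (W × W) → Prop
  | s, t, [] => s = t
  | s, t, e :: p => e.1 = s ∧ e ∈ E ∧ IsWalk E e.2 t p

/-- Buy-at-bulk (two-metric) objective value of a collection of paths (lists of edges):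
the buying cost of every edge used, plus the length of every path. -/
def objVal {A : Type} [DecidableEq A] (c ℓ : A → ℝ) {k : ℕ} (P : Fin k → List A) : ℝ :=
  (∑ e ∈ Finset.univ.biUnion fun i => (P i).toFinset, c e) + ∑ i, ((P i).map ℓ).sum

/-- `Opt(G,X)`: the optimal objective value for connecting the pairs of `X`. -/
noncomputable def optVal {W : Type} [DecidableEq W] (E : Set (W × W)) (c ℓ : W × W → ℝ)
    (X : List (W × W)) : ℝ :=
  sInf { v | ∃ P : Fin X.length → List (W × W),
    (∀ m, IsWalk E (X.get m).1 (X.get m).2 (P m)) ∧ v = objVal c ℓ P }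

/-- The instance admits some feasible solution. -/
def Routable {W : Type} (E : Set (W × W)) (X : List (W × W)) : Prop :=
  ∀ p ∈ X, ∃ w, IsWalk E p.1 p.2 w

/-- A randomized online algorithm: a random seed drawn in advance from a probability
space, and an action that, given the seed and the prefix of requests seen so far,
irrevocably outputs the path for the most recent request. -/
structure OnlineAlg (V : Type) : Type 1 where
  Ω : Type
  m : MeasurableSpace Ω
  μ : @Measure Ω m
  prob : @IsProbabilityMeasure Ω m μ
  act : Ω → List (V × V) → List (V × V)

/-- Expected objective value of the online algorithm on request sequence `X`. -/
noncomputable def expObj {V : Type} [DecidableEq V] (A : OnlineAlg V) (c ℓ : V × V → ℝ)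
    (X : List (V × V)) : ℝ :=
  letI := A.m
  ∫ ω, objVal c ℓ (fun i : Fin X.length => A.act ω (X.take (i.1 + 1))) ∂A.μ

/-- `A` is `γ`-competitive on the request sequence `X`: whenever the instance is
routable, the algorithm surely outputs feasible paths and its expected objective
value is at most `γ · Opt`. -/
def CompetitiveOn {V : Type} [DecidableEq V] (A : OnlineAlg V) (E : Set (V × V))
    (c ℓ : V × V → ℝ) (γ : ℝ) (X : List (V × V)) : Prop :=
  Routable E X →
    (∀ ω (i : Fin X.length), IsWalk E (X.get i).1 (X.get i).2 (A.act ω (X.take (i.1 + 1)))) ∧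
    expObj A c ℓ X ≤ γ * optVal E c ℓ X

def SingleSink {V : Type} (X : List (V × V)) : Prop := ∃ r, ∀ p ∈ X, p.2 = r

def SingleSource {V : Type} (X : List (V × V)) : Prop := ∃ r, ∀ p ∈ X, p.1 = r

/-- An undirected graph modeled by a symmetric directed edge set with symmetric
costs and lengths. -/
def Undirected {V : Type} (E : Set (V × V)) (c ℓ : V × V → ℝ) : Prop :=
  ∀ u v : V, ((u, v) ∈ E ↔ (v, u) ∈ E) ∧ c (u, v) = c (v, u) ∧ ℓ (u, v) = ℓ (v, u)

/-!
A step from a node is labelled by a target and a cost budget and follows the shortest path within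
that budget, so that a list of labels describes a chain of steps. Charging every chain for its last
step turns buy-at-bulk on the graph into connecting the requested pairs in a forest with one tree of
chains of logarithmic length per root vertex.

* This loses only polylogarithmic factors: recursive region growing groups the requests of an
  optimal solution into junctions, and recursive splitting at centroids replaces each path in the
  shortest path tree of a junction by a chain of logarithmic length.
* A fractional solution on the forest is maintained online. For the length budgets `0, 1, 2, …` in
  turn, counters are raised on minimum cuts for the current pair until the pair is fractionally
  connected within the budget; the capacity of a node doubles whenever its counter has grown by its
  cost. A raise increases a potential comparable to the fractional cost by at most `2`. Once the
  budget has reached the length of the optimal route, every further raise hits a node of that route,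
  so that it can be charged to the cost of the node.
* The fractional solution is rounded online by revealing nodes with random seeds drawn in advance.
  With low probability the rounding fails for a request, which is then served by its cheapest valid
  route.
-/

section Walks

variable {V : Type} {E E' : Set (V × V)} {s t u : V} {p q : List (V × V)}

/-- The total weight of the edges traversed by a walk, counted with multiplicity. -/
def weight {M : Type*} [AddCommMonoid M] (f : V × V → M) (p : List (V × V)) : M :=
  (p.map f).sum

section Weight

variable {M : Type*} [AddCommMonoid M] {f : V × V → M}

@[simp] theorem weight_nil : weight f [] = 0 := rfl

@[simp] theorem weight_cons (e : V × V) (p : List (V × V)) :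
    weight f (e :: p) = f e + weight f p := by simp [weight]

@[simp] theorem weight_append (p q : List (V × V)) :
    weight f (p ++ q) = weight f p + weight f q := by simp [weight]

variable [PartialOrder M] [IsOrderedAddMonoid M]

theorem weight_nonneg (hf : ∀ e, 0 ≤ f e) (p : List (V × V)) : 0 ≤ weight f p :=
  List.sum_nonneg (List.forall_mem_map.2 fun e _ => hf e)

theorem weight_le_of_sublist (hf : ∀ e, 0 ≤ f e) (h : p.Sublist q) :
    weight f p ≤ weight f q :=
  (h.map f).sum_le_sum (List.forall_mem_map.2 fun e _ => hf e)

theorem sum_toFinset_le_weight [DecidableEq V] (hf : ∀ e, 0 ≤ f e) (p : List (V × V)) :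
    ∑ e ∈ p.toFinset, f e ≤ weight f p :=
  calc ∑ e ∈ p.toFinset, f e = weight f p.dedup := rfl
    _ ≤ weight f p := weight_le_of_sublist hf p.dedup_sublist

end Weight

/-- The walk `p` traversed backwards. -/
def reverseWalk (p : List (V × V)) : List (V × V) := (p.map Prod.swap).reverse

theorem weight_reverseWalk {M : Type*} [AddCommMonoid M] {f : V × V → M}
    (hf : ∀ e, f e.swap = f e) (p : List (V × V)) : weight f (reverseWalk p) = weight f p := by
  simp [weight, reverseWalk, List.map_reverse, List.sum_reverse, Function.comp_def, hf]

theorem isWalk_append_iff :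
    IsWalk E s t (p ++ q) ↔ ∃ u, IsWalk E s u p ∧ IsWalk E u t q := by
  induction p generalizing s with
  | nil => simp [IsWalk]
  | cons e p ih => simp [IsWalk, ih, and_assoc]

theorem IsWalk.append (hp : IsWalk E s u p) (hq : IsWalk E u t q) : IsWalk E s t (p ++ q) :=
  isWalk_append_iff.2 ⟨u, hp, hq⟩

theorem IsWalk.reverse (hE : ∀ e ∈ E, e.swap ∈ E) (hp : IsWalk E s t p) :
    IsWalk E t s (reverseWalk p) := by
  induction p generalizing s with
  | nil => exact hp.symm
  | cons e p ih =>
    obtain ⟨rfl, he, htail⟩ := hp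
    have hstep : IsWalk E e.2 e.1 [e.swap] := ⟨rfl, hE e he, rfl⟩
    simpa [reverseWalk] using (ih htail).append hstep

theorem IsWalk.mem_of_mem (hp : IsWalk E s t p) {e : V × V} (he : e ∈ p) : e ∈ E := by
  induction p generalizing s with
  | nil => simp at he
  | cons e' p ih =>
    rcases List.mem_cons.1 he with rfl | he
    · exact hp.2.1
    · exact ih hp.2.2 he

theorem IsWalk.of_forall_mem (hp : IsWalk E s t p) (h : ∀ e ∈ p, e ∈ E') :
    IsWalk E' s t p := by
  induction p generalizing s with
  | nil => exact hp
  | cons e p ih =>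
    exact ⟨hp.1, h e (by simp), ih hp.2.2 fun x hx => h x (by simp [hx])⟩

theorem IsWalk.exists_nodup_sublist (hp : IsWalk E s t p) :
    ∃ q, IsWalk E s t q ∧ q.Sublist p ∧ (q.map Prod.fst).Nodup := by
  induction p generalizing s with
  | nil => exact ⟨[], hp, by simp, by simp⟩
  | cons e p ih =>
    obtain ⟨rfl, he, htail⟩ := hp
    obtain ⟨q, hq, hsub, hnodup⟩ := ih htail
    by_cases hmem : e.1 ∈ q.map Prod.fst
    · obtain ⟨e', he', hfst⟩ := List.mem_map.1 hmem
      obtain ⟨before, after, rfl⟩ := List.append_of_mem he'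
      obtain ⟨_, -, hshort⟩ := isWalk_append_iff.1 hq
      refine ⟨e' :: after, ⟨hfst, hshort.2⟩, ?_, ?_⟩
      · exact ((List.sublist_append_right before _).trans hsub).cons e
      · exact hnodup.sublist ((List.sublist_append_right before _).map _)
    · exact ⟨e :: q, ⟨rfl, he, hq⟩, hsub.cons_cons e, by simpa using ⟨by simpa using hmem, hnodup⟩⟩

theorem exists_minimalFor_walk [Finite V] {c : V × V → ℝ} (hc : ∀ e, 0 ≤ c e) {β : Type*}
    [LinearOrder β] {f : List (V × V) → β} (hf : ∀ ⦃p q⦄, p.Sublist q → f p ≤ f q) {B : ℝ}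
    (hp : IsWalk E s t p) (hB : weight c p ≤ B) :
    ∃ q, MinimalFor (fun q => IsWalk E s t q ∧ weight c q ≤ B) f q := by
  have := Fintype.ofFinite V
  let simple : Set (List (V × V)) :=
    {q | (q.map Prod.fst).Nodup ∧ IsWalk E s t q ∧ weight c q ≤ B}
  have hfin : simple.Finite :=
    (List.finite_length_le (V × V) (Fintype.card V)).subset fun q hq => by
      simpa using hq.1.length_le_card
  have hdominated : ∀ q, IsWalk E s t q ∧ weight c q ≤ B → ∃ q' ∈ simple, f q' ≤ f q := by
    intro q ⟨hq, hqB⟩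
    obtain ⟨q', hq', hsub, hnodup⟩ := hq.exists_nodup_sublist
    exact ⟨q', ⟨hnodup, hq', (weight_le_of_sublist hc hsub).trans hqB⟩, hf hsub⟩
  obtain ⟨q₀, hq₀, -⟩ := hdominated p ⟨hp, hB⟩
  obtain ⟨q, hq, hmin⟩ := hfin.exists_minimalFor f simple ⟨q₀, hq₀⟩
  refine ⟨q, hq.2, fun q₁ hq₁ _ => ?_⟩
  obtain ⟨q₂, hq₂, hle⟩ := hdominated q₁ hq₁
  exact ((le_total _ _).elim id (hmin hq₂)).trans hle

theorem IsWalk.exists_eq_append_singleton (hp : IsWalk E s t p) (hst : s ≠ t) :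
    ∃ x q, p = q ++ [(x, t)] ∧ IsWalk E s x q ∧ (x, t) ∈ E := by
  rcases p.eq_nil_or_concat with rfl | ⟨q, e, rfl⟩
  · exact absurd hp hst
  · obtain ⟨x, hq, rfl, he, rfl⟩ := isWalk_append_iff.1 (by simpa using hp)
    exact ⟨e.1, q, by simp, hq, he⟩

end Walks

theorem sum_union_le {ι : Type*} [DecidableEq ι] {f : ι → ℝ} (hf : ∀ i, 0 ≤ f i) (s t : Finset ι) :
    ∑ i ∈ s ∪ t, f i ≤ ∑ i ∈ s, f i + ∑ i ∈ t, f i := by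
  rw [← Finset.sum_union_inter]
  exact le_add_of_nonneg_right (Finset.sum_nonneg fun i _ => hf i)

theorem sum_biUnion_le {ι κ : Type*} [DecidableEq ι] {f : ι → ℝ} (hf : ∀ i, 0 ≤ f i)
    (s : Finset κ) (t : κ → Finset ι) :
    ∑ i ∈ s.biUnion t, f i ≤ ∑ k ∈ s, ∑ i ∈ t k, f i := by
  classical
  induction s using Finset.induction_on with
  | empty => simp
  | insert k s hk ih =>
    rw [Finset.biUnion_insert, Finset.sum_insert hk]
    exact (sum_union_le hf _ _).trans (add_le_add_right ih _)

section NonnilPrefixes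

variable {α : Type*} [DecidableEq α]

/-- The nonempty prefixes of a list. When lists are read as nodes of a tree of lists, these are
the nodes other than the root on the path from the root to `q`. -/
def nonnilPrefixes (q : List α) : Finset (List α) := q.inits.toFinset.erase []

theorem mem_nonnilPrefixes {p q : List α} : p ∈ nonnilPrefixes q ↔ p ≠ [] ∧ p <+: q := by
  simp [nonnilPrefixes]

@[simp] theorem nonnilPrefixes_nil : nonnilPrefixes ([] : List α) = ∅ := rfl

theorem nonnilPrefixes_cons (a : α) (q : List α) :
    nonnilPrefixes (a :: q) = insert [a] ((nonnilPrefixes q).image (List.cons a)) := by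
  ext p
  rcases p with - | ⟨b, p⟩
  · simp [mem_nonnilPrefixes]
  · rcases eq_or_ne p [] with rfl | hp
    · simp [mem_nonnilPrefixes, eq_comm]
    · simp [mem_nonnilPrefixes, List.cons_prefix_cons, hp, eq_comm, and_comm]

variable {ι : Type*}

/-- The nodes other than the root on the paths to the nodes `q u` in the tree of lists. -/
def prefixTree (U : Finset ι) (q : ι → List α) : Finset (List α) :=
  U.biUnion fun u => nonnilPrefixes (q u)

theorem ne_nil_of_mem_prefixTree {U : Finset ι} {q : ι → List α} {p : List α}
    (hp : p ∈ prefixTree U q) : p ≠ [] := by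
  obtain ⟨u, -, hpu⟩ := Finset.mem_biUnion.1 hp
  exact (mem_nonnilPrefixes.1 hpu).1

end NonnilPrefixes

/-- A network with buying costs and lengths on its directed edges. -/
structure Network (V : Type) where
  edges : Set (V × V)
  cost : V × V → ℝ
  len : V × V → ℝ
  cost_nonneg : ∀ e, 0 ≤ cost e
  len_nonneg : ∀ e, 0 ≤ len e

section Steps

variable {V : Type}

theorem exists_two_approx_weight [Nonempty V] {c : V × V → ℝ} (hc : ∀ e, 0 ≤ c e)
    (p : List (V × V)) :
    ∃ (e : V × V) (k : ℕ), k ≤ p.length ∧ weight c p ≤ k * c e ∧ k * c e ≤ 2 * weight c p := by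
  classical
  rcases eq_or_ne p [] with rfl | hp
  · exact ⟨Classical.arbitrary _, 0, by simp⟩
  obtain ⟨e, he, hmax⟩ := p.toFinset.exists_max_image c (List.toFinset_nonempty_iff p |>.2 hp)
  have hupper : weight c p ≤ p.length * c e := by
    simpa [weight] using List.sum_le_card_nsmul (p.map c) (c e)
      (List.forall_mem_map.2 fun e' he' => hmax e' (List.mem_toFinset.2 he'))
  have hlower : c e ≤ weight c p := by
    simpa using weight_le_of_sublist hc (List.singleton_sublist.2 (List.mem_toFinset.1 he))
  rcases (hc e).eq_or_lt with hzero | hpos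
  · exact ⟨e, 0, Nat.zero_le _, by simpa [← hzero] using hupper, by simpa using weight_nonneg hc p⟩
  · refine ⟨e, ⌈weight c p / c e⌉₊, ?_, ?_, ?_⟩
    · exact Nat.ceil_le.2 ((div_le_iff₀ hpos).2 hupper)
    · exact (div_le_iff₀ hpos).1 (Nat.le_ceil _)
    · have hceil := (Nat.ceil_lt_add_one (div_nonneg (weight_nonneg hc p) hpos.le)).le
      have := mul_le_mul_of_nonneg_right hceil hpos.le
      rw [add_mul, div_mul_cancel₀ _ hpos.ne', one_mul] at this
      linarith

/-- The label of a step: a target vertex together with a cost budget of the form `k * c e`. There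
are only polynomially many labels, and by `exists_two_approx_weight` the budgets approximate the
cost of every simple walk within a factor two. -/
abbrev StepLabel (V : Type) [Fintype V] : Type := V × (V × V) × Fin (Fintype.card V + 1)

namespace Network

variable [Fintype V] (N : Network V)

/-- `p` is a shortest walk from `u` to the target of the label `a` within the budget of `a`. -/
def IsStepPath (u : V) (a : StepLabel V) (p : List (V × V)) : Prop :=
  MinimalFor (fun p => IsWalk N.edges u a.1 p ∧ weight N.cost p ≤ a.2.2 * N.cost a.2.1)
    (weight N.len) p

open Classical in
/-- The walk taken by a step with label `a` from `u`; the step stays at `u` if the target of `a`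
cannot be reached within the budget. -/
noncomputable def stepPath (u : V) (a : StepLabel V) : List (V × V) :=
  if h : ∃ p, N.IsStepPath u a p then h.choose else []

open Classical in
/-- The vertex at which a step with label `a` from `u` ends. -/
noncomputable def stepEnd (u : V) (a : StepLabel V) : V :=
  if ∃ p, N.IsStepPath u a p then a.1 else u

theorem isWalk_stepPath (u : V) (a : StepLabel V) :
    IsWalk N.edges u (N.stepEnd u a) (N.stepPath u a) := by
  unfold stepEnd stepPath
  split_ifs with h
  · exact h.choose_spec.1.1
  · rfl

theorem exists_stepLabel {u v : V} {p : List (V × V)} (hp : IsWalk N.edges u v p) :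
    ∃ a, N.stepEnd u a = v ∧ weight N.cost (N.stepPath u a) ≤ 2 * weight N.cost p ∧
      weight N.len (N.stepPath u a) ≤ weight N.len p := by
  classical
  have : Nonempty V := ⟨u⟩
  obtain ⟨q, hq, hsub, hnodup⟩ := hp.exists_nodup_sublist
  obtain ⟨e, k, hk, hqk, hkq⟩ := exists_two_approx_weight N.cost_nonneg q
  have hkcard : k ≤ Fintype.card V := hk.trans (by simpa using hnodup.length_le_card)
  let a : StepLabel V := (v, e, ⟨k, Nat.lt_succ_of_le hkcard⟩)
  have hex : ∃ p, N.IsStepPath u a p :=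
    exists_minimalFor_walk N.cost_nonneg (fun _ _ => weight_le_of_sublist N.len_nonneg) hq hqk
  have hmin : N.IsStepPath u a (N.stepPath u a) := by
    rw [stepPath, dif_pos hex]; exact hex.choose_spec
  refine ⟨a, if_pos hex, ?_, ?_⟩
  · exact (hmin.1.2.trans hkq).trans (mul_le_mul_of_nonneg_left
      (weight_le_of_sublist N.cost_nonneg hsub) zero_le_two)
  · have hlen : weight N.len (N.stepPath u a) ≤ weight N.len q :=
      (le_total _ _).elim id (hmin.2 ⟨hq, hqk⟩)
    exact hlen.trans (weight_le_of_sublist N.len_nonneg hsub)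

end Network

end Steps

namespace Network

section Chains

variable {V : Type} [Fintype V] (N : Network V)

/-- The end of the chain of steps with labels `q` starting at `u`. -/
noncomputable def chainEnd (u : V) (q : List (StepLabel V)) : V := q.foldl N.stepEnd u

/-- The walk followed by the chain of steps with labels `q` starting at `u`. -/
noncomputable def chainPath : V → List (StepLabel V) → List (V × V)
  | _, [] => []
  | u, a :: q => N.stepPath u a ++ chainPath (N.stepEnd u a) q

/-- The walk taken by the last step of the chain with labels `q` starting at `u`. -/
noncomputable def lastStep : V → List (StepLabel V) → List (V × V)
  | _, [] => []
  | u, [a] => N.stepPath u a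
  | u, a :: b :: q => lastStep (N.stepEnd u a) (b :: q)

/-- The length of the chain with labels `q` starting at `u`. -/
noncomputable def chainLen (u : V) (q : List (StepLabel V)) : ℝ :=
  weight N.len (N.chainPath u q)

/-- The cost of the last step of a chain. Charging it to the node `q` in the tree of label lists,
the chain to `q` costs at most the sum over `nonnilPrefixes q`. -/
noncomputable def lastCost (u : V) (q : List (StepLabel V)) : ℝ :=
  weight N.cost (N.lastStep u q)

theorem isWalk_chainPath (u : V) (q : List (StepLabel V)) :
    IsWalk N.edges u (N.chainEnd u q) (N.chainPath u q) := by
  induction q generalizing u with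
  | nil => rfl
  | cons a q ih => exact (N.isWalk_stepPath u a).append (ih _)

theorem chainLen_nonneg (u : V) (q : List (StepLabel V)) : 0 ≤ N.chainLen u q :=
  weight_nonneg N.len_nonneg _

theorem lastCost_nonneg (u : V) (q : List (StepLabel V)) : 0 ≤ N.lastCost u q :=
  weight_nonneg N.cost_nonneg _

@[simp] theorem chainLen_nil (u : V) : N.chainLen u [] = 0 := rfl

theorem chainLen_cons (u : V) (a : StepLabel V) (q : List (StepLabel V)) :
    N.chainLen u (a :: q) = weight N.len (N.stepPath u a) + N.chainLen (N.stepEnd u a) q :=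
  weight_append _ _

theorem lastStep_cons (u : V) (a : StepLabel V) {q : List (StepLabel V)} (hq : q ≠ []) :
    N.lastStep u (a :: q) = N.lastStep (N.stepEnd u a) q := by
  obtain ⟨b, q, rfl⟩ := List.exists_cons_of_ne_nil hq
  rfl

theorem lastCost_cons (u : V) (a : StepLabel V) {q : List (StepLabel V)} (hq : q ≠ []) :
    N.lastCost u (a :: q) = N.lastCost (N.stepEnd u a) q := by
  rw [lastCost, N.lastStep_cons u a hq, lastCost]

theorem exists_mem_lastStep [DecidableEq V] {u : V} {q : List (StepLabel V)} {e : V × V}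
    (he : e ∈ N.chainPath u q) : ∃ p ∈ nonnilPrefixes q, e ∈ N.lastStep u p := by
  induction q generalizing u with
  | nil => simp [chainPath] at he
  | cons a q ih =>
    simp only [nonnilPrefixes_cons, Finset.mem_insert, Finset.mem_image]
    rcases List.mem_append.1 he with he | he
    · exact ⟨[a], Or.inl rfl, he⟩
    · obtain ⟨p, hp, hep⟩ := ih he
      refine ⟨a :: p, Or.inr ⟨p, hp, rfl⟩, ?_⟩
      rwa [N.lastStep_cons u a (mem_nonnilPrefixes.1 hp).1]

end Chains

end Network

section RootedTree

variable {V : Type} {par : V → V} {dep : V → ℕ} {ρ u v w : V} {U : Finset V}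

/-- The vertices `U`, with parents given by `par`, form a tree rooted at `ρ ∉ U`; the map `dep`
decreases towards the root and rules out cycles. -/
structure IsRootedTree (par : V → V) (dep : V → ℕ) (ρ : V) (U : Finset V) : Prop where
  root_notMem : ρ ∉ U
  parent_mem : ∀ u ∈ U, par u = ρ ∨ par u ∈ U
  dep_parent_lt : ∀ u ∈ U, dep (par u) < dep u

/-- `u` is a descendant of `v`: iterating `par` inside `U` leads from `u` to `v`. -/
def IsDescendant (par : V → V) (U : Finset V) : V → V → Prop :=
  Relation.ReflTransGen fun x y => x ∈ U ∧ par x = y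

open Classical in
/-- The vertices of the subtree rooted at `v`, without the root of the whole tree. -/
noncomputable def descendants (par : V → V) (U : Finset V) (v : V) : Finset V :=
  {u ∈ U | IsDescendant par U u v}

theorem mem_descendants : u ∈ descendants par U v ↔ u ∈ U ∧ IsDescendant par U u v := by
  classical exact Finset.mem_filter

theorem descendants_subset : descendants par U v ⊆ U := fun _ hu => (mem_descendants.1 hu).1

theorem exists_child_of_mem_descendants (hu : u ∈ descendants par U v) (huv : u ≠ v) :
    ∃ w ∈ U, par w = v ∧ u ∈ descendants par U w := by
  obtain ⟨huU, hdesc⟩ := mem_descendants.1 hu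
  rcases hdesc.cases_tail with rfl | ⟨w, hw, hwU, hpar⟩
  · exact absurd rfl huv
  · exact ⟨w, hwU, hpar, mem_descendants.2 ⟨huU, hw⟩⟩

namespace IsRootedTree

variable (h : IsRootedTree par dep ρ U)
include h

theorem parent_mem_insert [DecidableEq V] (hu : u ∈ U) : par u ∈ insert ρ U :=
  Finset.mem_insert.2 (h.parent_mem u hu)

theorem isDescendant_root (hu : u ∈ U) : IsDescendant par U u ρ := by
  induction hk : dep u using Nat.strong_induction_on generalizing u with
  | _ k ih =>
    rcases h.parent_mem u hu with hpar | hpar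
    · exact .single ⟨hu, hpar⟩
    · exact .head ⟨hu, rfl⟩ (ih _ (hk ▸ h.dep_parent_lt u hu) hpar rfl)

theorem descendants_root : descendants par U ρ = U :=
  descendants_subset.antisymm fun _ hu => mem_descendants.2 ⟨hu, h.isDescendant_root hu⟩

theorem eq_of_isDescendant_of_root (hv : IsDescendant par U ρ v) : v = ρ := by
  rcases hv.cases_head with hv | ⟨x, hx, -⟩
  · exact hv.symm
  · exact absurd hx.1 h.root_notMem

theorem dep_le_of_isDescendant (huv : IsDescendant par U u v) : dep v ≤ dep u := by
  induction huv with
  | refl => rfl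
  | tail _ hxy ih => exact hxy.2 ▸ (h.dep_parent_lt _ hxy.1).le.trans ih

theorem parent_notMem_descendants (hw : w ∈ U) : par w ∉ descendants par U w := fun hmem =>
  (h.dep_parent_lt w hw).not_ge (h.dep_le_of_isDescendant (mem_descendants.1 hmem).2)

theorem isRootedTree_descendants (hw : w ∈ U) :
    IsRootedTree par dep (par w) (descendants par U w) where
  root_notMem := h.parent_notMem_descendants hw
  parent_mem u hu := by
    obtain ⟨huU, hdesc⟩ := mem_descendants.1 hu
    rcases hdesc.cases_head with rfl | ⟨y, ⟨-, rfl⟩, hy⟩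
    · exact Or.inl rfl
    · rcases h.parent_mem u huU with hpar | hpar
      · rw [hpar] at hy
        exact absurd hw (h.eq_of_isDescendant_of_root hy ▸ h.root_notMem)
      · exact Or.inr (mem_descendants.2 ⟨hpar, hy⟩)
  dep_parent_lt u hu := h.dep_parent_lt u (descendants_subset hu)

theorem isRootedTree_sdiff [DecidableEq V] (v : V) :
    IsRootedTree par dep ρ (U \ descendants par U v) where
  root_notMem hρ := h.root_notMem (Finset.mem_sdiff.1 hρ).1
  parent_mem u hu := by
    obtain ⟨huU, hnot⟩ := Finset.mem_sdiff.1 hu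
    refine (h.parent_mem u huU).imp_right fun hpar => Finset.mem_sdiff.2 ⟨hpar, fun hdesc => ?_⟩
    exact hnot (mem_descendants.2 ⟨huU, .head ⟨huU, rfl⟩ (mem_descendants.1 hdesc).2⟩)
  dep_parent_lt u hu := h.dep_parent_lt u (Finset.mem_sdiff.1 hu).1

theorem not_isDescendant_sibling {w' : V} (hw' : w' ∈ U) (hsib : par w = par w') (hne : w ≠ w') :
    ¬ IsDescendant par U w w' := fun hdesc => by
  rcases hdesc.cases_head with heq | ⟨y, ⟨-, rfl⟩, hy⟩
  · exact hne heq
  · exact (h.dep_parent_lt w' hw').not_ge (hsib ▸ h.dep_le_of_isDescendant hy)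

theorem disjoint_descendants_siblings {w' : V} (hw : w ∈ U) (hw' : w' ∈ U) (hsib : par w = par w')
    (hne : w ≠ w') : Disjoint (descendants par U w) (descendants par U w') := by
  refine Finset.disjoint_left.2 fun u hu hu' => ?_
  have hunique : Relator.RightUnique fun x y => x ∈ U ∧ par x = y :=
    fun _ _ _ hb hc => hb.2.symm.trans hc.2
  rcases Relation.ReflTransGen.total_of_right_unique hunique
    (mem_descendants.1 hu).2 (mem_descendants.1 hu').2 with hdesc | hdesc
  · exact h.not_isDescendant_sibling hw' hsib hne hdesc
  · exact h.not_isDescendant_sibling hw hsib.symm hne.symm hdesc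

theorem exists_centroid [DecidableEq V] (hU : U.Nonempty) :
    ∃ v ∈ insert ρ U, U.card < 2 * (descendants par U v).card ∧
      ∀ w ∈ U, par w = v → 2 * (descendants par U w).card ≤ U.card := by
  classical
  let heavy := {v ∈ insert ρ U | U.card < 2 * (descendants par U v).card}
  have hheavy : heavy.Nonempty := by
    refine ⟨ρ, Finset.mem_filter.2 ⟨Finset.mem_insert_self _ _, ?_⟩⟩
    have := hU.card_pos
    rw [h.descendants_root]
    omega
  obtain ⟨v, hv, hdeepest⟩ := heavy.exists_max_image dep hheavy
  obtain ⟨hvU, hcard⟩ := Finset.mem_filter.1 hv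
  refine ⟨v, hvU, hcard, fun w hw hpar => not_lt.1 fun hlt => ?_⟩
  have hle := hdeepest w (Finset.mem_filter.2 ⟨Finset.mem_insert_of_mem hw, hlt⟩)
  exact (h.dep_parent_lt w hw).not_ge (hpar ▸ hle)

theorem sum_sdiff_add_sum_children_le [DecidableEq V] {f : V → ℝ} (hf : ∀ u, 0 ≤ f u) (v : V) :
    ∑ u ∈ U \ descendants par U v, f u +
      ∑ w ∈ U with par w = v, ∑ u ∈ descendants par U w, f u ≤ ∑ u ∈ U, f u := by
  have hdisj : (({w ∈ U | par w = v} : Finset V) : Set V).PairwiseDisjoint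
      (descendants par U) := by
    intro w hw w' hw' hne
    simp only [Finset.coe_filter, Set.mem_ofPred_eq] at hw hw'
    exact h.disjoint_descendants_siblings hw.1 hw'.1 (hw.2.trans hw'.2.symm) hne
  have hsub : ({w ∈ U | par w = v} : Finset V).biUnion (descendants par U) ⊆
      descendants par U v := by
    refine Finset.biUnion_subset.2 fun w hw u hu => ?_
    obtain ⟨hwU, hpar⟩ := Finset.mem_filter.1 hw
    obtain ⟨huU, hdesc⟩ := mem_descendants.1 hu
    exact mem_descendants.2 ⟨huU, hdesc.tail ⟨hwU, hpar⟩⟩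
  rw [← Finset.sum_biUnion hdisj,
    ← Finset.sum_sdiff (descendants_subset (par := par) (U := U) (v := v))]
  exact add_le_add_right (Finset.sum_le_sum_of_subset_of_nonneg hsub fun u _ _ => hf u) _

end IsRootedTree

end RootedTree

namespace Network

section HeightReduction

variable {V : Type} {N : Network V} {par : V → V} {dep : V → ℕ} {δ : V → ℝ} {ρ u : V}
  {U : Finset V}

/-- A rooted tree whose edges `(par u, u)` belong to the network, together with a potential `δ`
measuring distances along the tree. -/
structure IsTree (N : Network V) (par : V → V) (dep : V → ℕ) (δ : V → ℝ) (ρ : V) (U : Finset V) :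
    Prop extends IsRootedTree par dep ρ U where
  edge_mem : ∀ u ∈ U, (par u, u) ∈ N.edges
  dist_eq : ∀ u ∈ U, δ u = δ (par u) + N.len (par u, u)

theorem IsTree.of_subset (h : N.IsTree par dep δ ρ U) {ρ' : V} {U' : Finset V} (hU' : U' ⊆ U)
    (htree : IsRootedTree par dep ρ' U') : N.IsTree par dep δ ρ' U' where
  toIsRootedTree := htree
  edge_mem u hu := h.edge_mem u (hU' hu)
  dist_eq u hu := h.dist_eq u (hU' hu)

theorem IsTree.exists_walk [DecidableEq V] (h : N.IsTree par dep δ ρ U) (hu : u ∈ insert ρ U) :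
    ∃ p, IsWalk N.edges ρ u p ∧ weight N.len p = δ u - δ ρ ∧
      weight N.cost p ≤ ∑ x ∈ U, N.cost (par x, x) := by
  have hcost : ∀ x, 0 ≤ N.cost (par x, x) := fun x => N.cost_nonneg _
  suffices hshallow : ∃ p, IsWalk N.edges ρ u p ∧ weight N.len p = δ u - δ ρ ∧
      weight N.cost p ≤ ∑ x ∈ U with dep x ≤ dep u, N.cost (par x, x) by
    obtain ⟨p, hp, hlen, hle⟩ := hshallow
    exact ⟨p, hp, hlen, hle.trans (Finset.sum_le_sum_of_subset_of_nonneg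
      (Finset.filter_subset _ _) fun x _ _ => hcost x)⟩
  induction hk : dep u using Nat.strong_induction_on generalizing u with
  | _ k ih =>
    subst hk
    rcases Finset.mem_insert.1 hu with rfl | huU
    · exact ⟨[], rfl, by simp, by simpa using Finset.sum_nonneg fun x _ => hcost x⟩
    have hdep := h.dep_parent_lt u huU
    obtain ⟨p, hp, hlen, hle⟩ := ih _ hdep (h.parent_mem_insert huU) rfl
    refine ⟨p ++ [(par u, u)], hp.append ⟨rfl, h.edge_mem u huU, rfl⟩, ?_, ?_⟩
    · rw [weight_append, hlen, h.dist_eq u huU]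
      simp only [weight_cons, weight_nil]
      ring
    · have hnotMem : u ∉ U.filter fun x => dep x ≤ dep (par u) := by simp [hdep]
      have hsub : insert u (U.filter fun x => dep x ≤ dep (par u)) ⊆
          U.filter fun x => dep x ≤ dep u := by
        refine Finset.insert_subset (by simp [huU]) fun x hx => ?_
        rw [Finset.mem_filter] at hx ⊢
        exact ⟨hx.1, hx.2.trans hdep.le⟩
      calc weight N.cost (p ++ [(par u, u)])
          = N.cost (par u, u) + weight N.cost p := by simp [add_comm]
        _ ≤ ∑ x ∈ insert u (U.filter fun x => dep x ≤ dep (par u)), N.cost (par x, x) := by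
          rw [Finset.sum_insert hnotMem]
          exact add_le_add_right hle _
        _ ≤ _ := Finset.sum_le_sum_of_subset_of_nonneg hsub fun x _ _ => hcost x

variable [Fintype V]

/-- The labels `q` describe a chain from `ρ` to `u` with at most `m` steps and of length at most
`L`. -/
structure IsChainTo (N : Network V) (ρ u : V) (m : ℕ) (L : ℝ) (q : List (StepLabel V)) : Prop where
  length_le : q.length ≤ m
  chainEnd_eq : N.chainEnd ρ q = u
  chainLen_le : N.chainLen ρ q ≤ L

theorem IsChainTo.cons {a : StepLabel V} {q : List (StepLabel V)} {v : V} {m : ℕ} {L : ℝ}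
    (hv : N.stepEnd ρ a = v) (hq : N.IsChainTo v u m L q) :
    N.IsChainTo ρ u (m + 1) (weight N.len (N.stepPath ρ a) + L) (a :: q) where
  length_le := Nat.succ_le_succ hq.length_le
  chainEnd_eq := by rw [chainEnd, List.foldl_cons, hv]; exact hq.chainEnd_eq
  chainLen_le := by rw [chainLen_cons, hv]; exact add_le_add_right hq.chainLen_le _

theorem IsChainTo.mono {q : List (StepLabel V)} {m m' : ℕ} {L L' : ℝ} (hm : m ≤ m') (hL : L ≤ L')
    (hq : N.IsChainTo ρ u m L q) : N.IsChainTo ρ u m' L' q :=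
  ⟨hq.length_le.trans hm, hq.chainEnd_eq, hq.chainLen_le.trans hL⟩

variable [DecidableEq V]

theorem sum_lastCost_image_cons (N : Network V) (ρ : V) (a : StepLabel V)
    {S : Finset (List (StepLabel V))} (hS : ∀ p ∈ S, p ≠ []) :
    ∑ p ∈ S.image (List.cons a), N.lastCost ρ p = ∑ p ∈ S, N.lastCost (N.stepEnd ρ a) p := by
  rw [Finset.sum_image fun _ _ _ _ h => List.cons_injective h]
  exact Finset.sum_congr rfl fun p hp => N.lastCost_cons ρ a (hS p hp)

theorem sum_lastCost_union_le (N : Network V) (ρ : V) (a : StepLabel V)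
    (A : Finset (List (StepLabel V))) (s : Finset V) (B : V → Finset (List (StepLabel V)))
    (hB : ∀ w ∈ s, ∀ p ∈ B w, p ≠ []) :
    ∑ p ∈ A ∪ insert [a] ((s.biUnion B).image (List.cons a)), N.lastCost ρ p ≤
      ∑ p ∈ A, N.lastCost ρ p + (weight N.cost (N.stepPath ρ a) +
        ∑ w ∈ s, ∑ p ∈ B w, N.lastCost (N.stepEnd ρ a) p) := by
  have hnonneg := N.lastCost_nonneg
  refine (sum_union_le (hnonneg ρ) _ _).trans (add_le_add_right ?_ _)
  rw [Finset.insert_eq]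
  refine (sum_union_le (hnonneg ρ) _ _).trans ?_
  have hne : ∀ p ∈ s.biUnion B, p ≠ [] := fun p hp => by
    obtain ⟨w, hw, hpw⟩ := Finset.mem_biUnion.1 hp
    exact hB w hw p hpw
  rw [Finset.sum_singleton, N.sum_lastCost_image_cons ρ a hne]
  exact add_le_add_right (sum_biUnion_le (hnonneg _) _ _) _

theorem exists_joined_chains {m : ℕ} {v : V} {a : StepLabel V} (hav : N.stepEnd ρ a = v)
    (hlen : weight N.len (N.stepPath ρ a) ≤ δ v - δ ρ) {qT : V → List (StepLabel V)}
    (hqT : ∀ u ∈ U \ descendants par U v, N.IsChainTo ρ u m (δ u - δ ρ) (qT u))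
    {qC : V → V → List (StepLabel V)} (hqC : ∀ w ∈ U.filter (par · = v),
      ∀ u ∈ descendants par U w, N.IsChainTo v u m (δ u - δ v) (qC w u)) :
    ∃ q : V → List (StepLabel V), (∀ u ∈ U, N.IsChainTo ρ u (m + 1) (δ u - δ ρ) (q u)) ∧
      prefixTree U q ⊆ prefixTree (U \ descendants par U v) qT ∪
        insert [a] (((U.filter (par · = v)).biUnion fun w =>
          prefixTree (descendants par U w) (qC w)).image (List.cons a)) := by
  have hchain : ∀ u ∈ U, ∃ q, N.IsChainTo ρ u (m + 1) (δ u - δ ρ) q ∧ nonnilPrefixes q ⊆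
      prefixTree (U \ descendants par U v) qT ∪ insert [a] (((U.filter (par · = v)).biUnion
        fun w => prefixTree (descendants par U w) (qC w)).image (List.cons a)) := by
    intro u hu
    by_cases hdesc : u ∈ descendants par U v
    · rcases eq_or_ne u v with rfl | huv
      · refine ⟨[a], ⟨by simp, hav, by simpa [chainLen_cons] using hlen⟩, ?_⟩
        simp [nonnilPrefixes_cons]
      · obtain ⟨w, hwU, hpar, huw⟩ := exists_child_of_mem_descendants hdesc huv
        have hw : w ∈ U.filter (par · = v) := Finset.mem_filter.2 ⟨hwU, hpar⟩
        refine ⟨a :: qC w u, ((hqC w hw u huw).cons hav).mono le_rfl (by linarith), ?_⟩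
        rw [nonnilPrefixes_cons]
        refine (Finset.insert_subset_insert _ (Finset.image_subset_image ?_)).trans
          Finset.subset_union_right
        exact fun p hp => Finset.mem_biUnion.2 ⟨w, hw, Finset.mem_biUnion.2 ⟨u, huw, hp⟩⟩
    · have huT : u ∈ U \ descendants par U v := Finset.mem_sdiff.2 ⟨hu, hdesc⟩
      exact ⟨qT u, (hqT u huT).mono (Nat.le_succ m) le_rfl, fun p hp =>
        Finset.mem_union_left _ (Finset.mem_biUnion.2 ⟨u, huT, hp⟩)⟩
  choose! q hq hsub using hchain
  exact ⟨q, hq, Finset.biUnion_subset.2 hsub⟩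

-- One step leads to a centroid `v`; the subtrees of its children and the rest of the tree are
-- half as large, so the recursion has logarithmic depth.
theorem IsTree.exists_short_chains {m : ℕ} (h : N.IsTree par dep δ ρ U) (hm : U.card < 2 ^ m) :
    ∃ q : V → List (StepLabel V), (∀ u ∈ U, N.IsChainTo ρ u m (δ u - δ ρ) (q u)) ∧
      ∑ p ∈ prefixTree U q, N.lastCost ρ p ≤ 2 * m * ∑ u ∈ U, N.cost (par u, u) := by
  induction m generalizing U ρ with
  | zero =>
    obtain rfl : U = ∅ := by simpa using hm
    exact ⟨fun _ => [], by simp, by simp [prefixTree]⟩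
  | succ m ih =>
    rcases U.eq_empty_or_nonempty with rfl | hne
    · exact ⟨fun _ => [], by simp, by simp [prefixTree]⟩
    rw [pow_succ] at hm
    obtain ⟨v, hv, hheavy, hlight⟩ := h.exists_centroid hne
    obtain ⟨p, hp, hplen, hpcost⟩ := h.exists_walk hv
    obtain ⟨a, hav, hacost, halen⟩ := N.exists_stepLabel hp
    have hTcard := Finset.card_sdiff_add_card_eq_card (descendants_subset (par := par) (U := U)
      (v := v))
    obtain ⟨qT, hqT, hcostT⟩ := ih (h.of_subset Finset.sdiff_subset (h.isRootedTree_sdiff v))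
      (by omega)
    have hchild : ∀ w ∈ U.filter (par · = v), ∃ q : V → List (StepLabel V),
        (∀ u ∈ descendants par U w, N.IsChainTo v u m (δ u - δ v) (q u)) ∧
        ∑ p ∈ prefixTree (descendants par U w) q, N.lastCost v p ≤
          2 * m * ∑ u ∈ descendants par U w, N.cost (par u, u) := fun w hw => by
      obtain ⟨hwU, rfl⟩ := Finset.mem_filter.1 hw
      have := hlight w hwU rfl
      exact ih (h.of_subset descendants_subset (h.isRootedTree_descendants hwU)) (by omega)
    choose! qC hqC hcostC using hchild
    obtain ⟨q, hq, hsub⟩ := exists_joined_chains hav (halen.trans hplen.le) hqT hqC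
    refine ⟨q, hq, ?_⟩
    have hjoin := (Finset.sum_le_sum_of_subset_of_nonneg hsub fun p _ _ =>
      N.lastCost_nonneg ρ p).trans (N.sum_lastCost_union_le ρ a _ _ _
        fun w _ p hp => ne_nil_of_mem_prefixTree hp)
    have hchildren := Finset.sum_le_sum hcostC
    rw [← Finset.mul_sum] at hchildren
    have htotal := mul_le_mul_of_nonneg_left
      (h.sum_sdiff_add_sum_children_le (fun u => N.cost_nonneg (par u, u)) v)
      (show (0 : ℝ) ≤ 2 * m by positivity)
    rw [hav] at hjoin
    push_cast
    linarith

end HeightReduction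

end Network

namespace Network

section ShortestPathTrees

variable {V : Type} {N : Network V} {E : Set (V × V)} {u v : V} {p q : List (V × V)}

/-- `p` is a shortest walk from `v` to `u` in `E`, with as few edges as possible. The second
criterion makes the parent relation of shortest walks acyclic despite edges of length zero. -/
def IsShortestWalk (N : Network V) (E : Set (V × V)) (v u : V) (p : List (V × V)) : Prop :=
  MinimalFor (IsWalk E v u) (fun p => toLex (weight N.len p, p.length)) p

theorem exists_isShortestWalk [Finite V] (N : Network V) (hp : IsWalk E v u p) :
    ∃ q, N.IsShortestWalk E v u q := by
  have hmono : ∀ ⦃p q : List (V × V)⦄, p.Sublist q →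
      toLex (weight N.len p, p.length) ≤ toLex (weight N.len q, q.length) := fun p q h =>
    Prod.Lex.toLex_mono ⟨weight_le_of_sublist N.len_nonneg h, h.length_le⟩
  obtain ⟨q, hq⟩ := exists_minimalFor_walk (c := fun _ => 0) (fun _ => le_rfl) hmono hp
    (B := 0) (by simp [weight])
  exact ⟨q, hq.1.1, fun q' hq' => hq.2 ⟨hq', by simp [weight]⟩⟩

theorem IsShortestWalk.toLex_le (hp : N.IsShortestWalk E v u p) (hq : IsWalk E v u q) :
    toLex (weight N.len p, p.length) ≤ toLex (weight N.len q, q.length) :=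
  (le_total _ _).elim id (hp.2 hq)

theorem IsShortestWalk.len_le (hp : N.IsShortestWalk E v u p) (hq : IsWalk E v u q) :
    weight N.len p ≤ weight N.len q :=
  Prod.Lex.monotone_fst _ _ (hp.toLex_le hq)

theorem IsShortestWalk.length_le (hp : N.IsShortestWalk E v u p) (hq : IsWalk E v u q)
    (hlen : weight N.len q ≤ weight N.len p) : p.length ≤ q.length := by
  rcases Prod.Lex.toLex_le_toLex.1 (hp.toLex_le hq) with hlt | ⟨-, hle⟩
  · exact absurd hlen hlt.not_ge
  · exact hle

theorem exists_isTree_of_isShortestWalk (hE : E ⊆ N.edges) {U : Finset V}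
    {b : V → List (V × V)} (hU : ∀ u, u ∈ U ↔ u ≠ v ∧ ∃ p, IsWalk E v u p)
    (hb : ∀ u p, IsWalk E v u p → N.IsShortestWalk E v u (b u)) :
    ∃ par, (∀ u ∈ U, (par u, u) ∈ E) ∧
      N.IsTree par (fun u => (b u).length) (fun u => weight N.len (b u)) v U := by
  have hlast : ∀ u ∈ U, ∃ x q, b u = q ++ [(x, u)] ∧ IsWalk E v x q ∧ (x, u) ∈ E := by
    intro u hu
    obtain ⟨hne, p, hp⟩ := (hU u).1 hu
    exact (hb u p hp).1.exists_eq_append_singleton hne.symm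
  choose! par q hbq hq hpar using hlast
  have hdist : ∀ u ∈ U, weight N.len (b u) = weight N.len (b (par u)) + N.len (par u, u) := by
    intro u hu
    obtain ⟨-, p, hp⟩ := (hU u).1 hu
    have hbpar := hb (par u) (q u) (hq u hu)
    apply le_antisymm
    · have hstep : IsWalk E (par u) u [(par u, u)] := ⟨rfl, hpar u hu, rfl⟩
      simpa using (hb u p hp).len_le (hbpar.1.append hstep)
    · simpa [hbq u hu] using hbpar.len_le (hq u hu)
  refine ⟨par, hpar, ⟨⟨fun hv => ((hU v).1 hv).1 rfl, fun u hu => ?_, fun u hu => ?_⟩,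
    fun u hu => hE (hpar u hu), hdist⟩⟩
  · exact or_iff_not_imp_left.2 fun hne => (hU _).2 ⟨hne, _, hq u hu⟩
  · have hlen : weight N.len (q u) ≤ weight N.len (b (par u)) := by
      simpa [hbq u hu] using (hdist u hu).le
    have hlength := (hb (par u) (q u) (hq u hu)).length_le (hq u hu) hlen
    simp only [hbq u hu, List.length_append, List.length_singleton]
    omega

theorem exists_shortest_path_chains [Fintype V] [DecidableEq V] (N : Network V)
    {H : Finset (V × V)} (hH : ↑H ⊆ N.edges) {m : ℕ} (hm : Fintype.card V < 2 ^ m) (v : V) :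
    ∃ q : V → List (StepLabel V),
      (∀ u p, IsWalk (H : Set (V × V)) v u p → N.IsChainTo v u m (weight N.len p) (q u)) ∧
      ∑ p ∈ prefixTree Finset.univ q, N.lastCost v p ≤ 2 * m * ∑ e ∈ H, N.cost e := by
  classical
  let E : Set (V × V) := H
  let U := {u | u ≠ v ∧ ∃ p, IsWalk E v u p}.toFinset
  have hshortest : ∀ u, (∃ p, IsWalk E v u p) → ∃ p, N.IsShortestWalk E v u p :=
    fun u ⟨p, hp⟩ => N.exists_isShortestWalk hp
  choose! b hb using hshortest
  obtain ⟨par, hpar, htree⟩ := exists_isTree_of_isShortestWalk hH (U := U)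
    (fun u => by simp [U, E]) fun u p hp => hb u ⟨p, hp⟩
  obtain ⟨q, hq, hcost⟩ := htree.exists_short_chains ((Finset.card_le_univ U).trans_lt hm)
  refine ⟨fun u => if u ∈ U then q u else [], fun u p hp => ?_, ?_⟩
  · have hlen := (hb u ⟨p, hp⟩).len_le hp
    by_cases hu : u ∈ U
    · simp only [if_pos hu]
      exact (hq u hu).mono le_rfl ((sub_le_self _ (weight_nonneg N.len_nonneg _)).trans hlen)
    · simp only [if_neg hu]
      obtain rfl : u = v := by_contra fun hne => hu (by simpa [U, E] using ⟨hne, p, hp⟩)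
      exact ⟨Nat.zero_le _, rfl, weight_nonneg N.len_nonneg _⟩
  · have hsub : prefixTree Finset.univ (fun u => if u ∈ U then q u else []) ⊆ prefixTree U q := by
      refine Finset.biUnion_subset.2 fun u _ => ?_
      beta_reduce
      split_ifs with hu
      · exact Finset.subset_biUnion_of_mem (fun u => nonnilPrefixes (q u)) hu
      · simp
    have hedges : ∑ u ∈ U, N.cost (par u, u) ≤ ∑ e ∈ H, N.cost e := by
      rw [← Finset.sum_image (f := N.cost) (g := fun u => (par u, u))
        fun x _ y _ h => (Prod.ext_iff.1 h).2]
      exact Finset.sum_le_sum_of_subset_of_nonneg (Finset.image_subset_iff.2 hpar)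
        fun e _ _ => N.cost_nonneg e
    calc _ ≤ ∑ p ∈ prefixTree U q, N.lastCost v p :=
          Finset.sum_le_sum_of_subset_of_nonneg hsub fun p _ _ => N.lastCost_nonneg v p
      _ ≤ _ := hcost.trans (mul_le_mul_of_nonneg_left hedges (by positivity))

end ShortestPathTrees

end Network

section RegionGrowing

variable {V : Type}

/-- Exactly one end of the edge `e` lies in `S`. -/
def Cuts (S : Finset V) (e : V × V) : Prop := ¬(e.1 ∈ S ↔ e.2 ∈ S)

/-- At least one end of the edge `e` lies in `S`. -/
def Meets (S : Finset V) (e : V × V) : Prop := e.1 ∈ S ∨ e.2 ∈ S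

/-- Both ends of the edge `e` lie in `S`. -/
def Inside (S : Finset V) (e : V × V) : Prop := e.1 ∈ S ∧ e.2 ∈ S

theorem Cuts.meets {S : Finset V} {e : V × V} (h : Cuts S e) : Meets S e := by
  unfold Cuts at h
  unfold Meets
  tauto

theorem Meets.mono {S T : Finset V} (hST : S ⊆ T) {e : V × V} (h : Meets S e) : Meets T e :=
  h.imp (@hST _) (@hST _)

variable [DecidableEq V]

instance (S : Finset V) : DecidablePred (Cuts S) := fun _ => inferInstanceAs (Decidable (¬_))

instance (S : Finset V) : DecidablePred (Meets S) := fun _ => inferInstanceAs (Decidable (_ ∨ _))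

instance (S : Finset V) : DecidablePred (Inside S) := fun _ => inferInstanceAs (Decidable (_ ∧ _))

variable {H : Finset (V × V)} {f : V × V → ℝ} {lam : V × V → ℕ}

/-- For every vertex `w` an increasing sequence `B w` of sets containing `w` such that an edge `e`
of `H` is cut by at most `lam e` of them. -/
structure IsBallSystem (H : Finset (V × V)) (lam : V × V → ℕ) (B : V → ℕ → Finset V) : Prop where
  mono : ∀ w, Monotone (B w)
  self_mem : ∀ w i, w ∈ B w i
  card_cuts_le : ∀ w, ∀ e ∈ H, ∀ r, {i ∈ Finset.range r | Cuts (B w i) e}.card ≤ lam e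

theorem IsBallSystem.subset {B : V → ℕ → Finset V} (h : IsBallSystem H lam B)
    {H' : Finset (V × V)} (hH' : H' ⊆ H) : IsBallSystem H' lam B :=
  ⟨h.mono, h.self_mem, fun w e he => h.card_cuts_le w e (hH' he)⟩

theorem IsBallSystem.exists_radius_sum_cuts_le {B : V → ℕ → Finset V} (h : IsBallSystem H lam B)
    (hf : ∀ e, 0 ≤ f e) (w : V) (a : ℕ) {q : ℕ} (hq : 0 < q) :
    ∃ i ∈ Finset.Ico a (a + q), q * ∑ e ∈ H with Cuts (B w i) e, f e ≤
      ∑ e ∈ H with Meets (B w (a + q)) e, f e * lam e := by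
  have hcount : ∀ e ∈ H, {i ∈ Finset.Ico a (a + q) | Cuts (B w i) e}.card ≤
      if Meets (B w (a + q)) e then lam e else 0 := by
    intro e he
    split_ifs with hmeets
    · refine le_trans (Finset.card_le_card (Finset.filter_subset_filter _ ?_))
        (h.card_cuts_le w e he (a + q))
      exact fun i hi => Finset.mem_range.2 (Finset.mem_Ico.1 hi).2
    · refine (Finset.card_eq_zero.2 (Finset.filter_eq_empty_iff.2 fun i hi hcut => ?_)).le
      exact hmeets (hcut.meets.mono (h.mono w (Finset.mem_Ico.1 hi).2.le))
  have hsum : ∑ i ∈ Finset.Ico a (a + q), ∑ e ∈ H with Cuts (B w i) e, f e ≤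
      ∑ e ∈ H with Meets (B w (a + q)) e, f e * lam e := by
    simp only [Finset.sum_filter]
    rw [Finset.sum_comm]
    refine Finset.sum_le_sum fun e he => ?_
    rw [← Finset.sum_filter, Finset.sum_const, nsmul_eq_mul, mul_comm]
    refine (mul_le_mul_of_nonneg_left (Nat.cast_le.2 (hcount e he)) (hf e)).trans_eq ?_
    split_ifs <;> simp
  refine Finset.exists_le_of_sum_le ⟨a, by simp [hq]⟩ ?_
  rw [← Finset.mul_sum, Finset.sum_const, Nat.card_Ico, Nat.add_sub_cancel_left, nsmul_eq_mul]
  exact mul_le_mul_of_nonneg_left hsum (Nat.cast_nonneg q)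

theorem exists_succ_le_two_mul {A : ℕ → ℝ} {m : ℕ} (hm : 0 < m) (hA : A m ≤ 2 ^ m * A 0) :
    ∃ k < m, A (k + 1) ≤ 2 * A k := by
  by_contra! hdouble
  obtain ⟨m, rfl⟩ := Nat.exists_eq_add_one.2 hm
  have hgrowth : ∀ k ≤ m, 2 ^ k * A 0 ≤ A k := by
    intro k hk
    induction k with
    | zero => simp
    | succ k ih =>
      have := ih (by omega)
      have := hdouble k (by omega)
      rw [pow_succ]
      linarith
  have := hgrowth m le_rfl
  have := hdouble m (by omega)
  rw [pow_succ] at hA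
  linarith

theorem IsBallSystem.exists_sparse_ball {B : V → ℕ → Finset V} (h : IsBallSystem H lam B)
    (hf : ∀ e, 0 ≤ f e) {m q : ℕ} (hm : 0 < m) (hq : 0 < q) {β : ℝ}
    (hvol : ∑ e ∈ H, f e * lam e + β ≤ 2 ^ m * β) (w : V) :
    ∃ i < m * q, q * ∑ e ∈ H with Cuts (B w i) e, f e ≤
      2 * (β + ∑ e ∈ H with Meets (B w i) e, f e * lam e) := by
  have hvolume : ∀ e, 0 ≤ f e * lam e := fun e => mul_nonneg (hf e) (Nat.cast_nonneg _)
  let A i := β + ∑ e ∈ H with Meets (B w i) e, f e * lam e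
  have hAmono : Monotone A := fun i j hij => by
    refine add_le_add_right (Finset.sum_le_sum_of_subset_of_nonneg ?_ fun e _ _ => hvolume e) _
    exact Finset.monotone_filter_right _ fun e _ he => he.mono (h.mono w hij)
  have hAtop : A (m * q) ≤ 2 ^ m * A (0 * q) := by
    have htotal : A (m * q) ≤ 2 ^ m * β := by
      refine (le_of_eq_of_le (add_comm _ _) (add_le_add_left ?_ _)).trans hvol
      exact Finset.sum_le_sum_of_subset_of_nonneg (Finset.filter_subset _ _) fun e _ _ => hvolume e
    refine htotal.trans (mul_le_mul_of_nonneg_left ?_ (by positivity))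
    exact le_add_of_nonneg_right (Finset.sum_nonneg fun e _ => hvolume e)
  obtain ⟨k, hk, hdouble⟩ := exists_succ_le_two_mul (A := fun k => A (k * q)) hm hAtop
  obtain ⟨i, hi, hcut⟩ := h.exists_radius_sum_cuts_le hf w (k * q) hq
  obtain ⟨hki, hik⟩ := Finset.mem_Ico.1 hi
  have hkq : k * q + q = (k + 1) * q := by ring
  have hβ : 0 ≤ β := by
    have := Finset.sum_nonneg fun e (_ : e ∈ H) => hvolume e
    have : (2 : ℝ) ≤ 2 ^ m := by exact_mod_cast Nat.one_lt_two_pow hm.ne'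
    by_contra! hneg
    nlinarith
  refine ⟨i, ?_, ?_⟩
  · exact (hkq ▸ hik).trans_le (Nat.mul_le_mul_right q hk)
  · calc q * ∑ e ∈ H with Cuts (B w i) e, f e
        ≤ ∑ e ∈ H with Meets (B w (k * q + q)) e, f e * lam e := hcut
      _ ≤ A ((k + 1) * q) := by rw [hkq]; exact le_add_of_nonneg_left hβ
      _ ≤ 2 * A (k * q) := hdouble
      _ ≤ 2 * A i := mul_le_mul_of_nonneg_left (hAmono hki) zero_le_two

theorem sum_cut_refine_le (hf : ∀ e, 0 ≤ f e) (W S : Finset V) (w : V) (part : V → V) :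
    ∑ e ∈ H with Inside W e ∧ S.piecewise (fun _ => w) part e.1 ≠ S.piecewise (fun _ => w) part e.2,
        f e ≤
      ∑ e ∈ {e ∈ H | Inside W e} with Cuts S e, f e +
        ∑ e ∈ H with Inside (W \ S) e ∧ part e.1 ≠ part e.2, f e := by
  refine (Finset.sum_le_sum_of_subset_of_nonneg ?_ fun e _ _ => hf e).trans (sum_union_le hf _ _)
  intro e he
  obtain ⟨heH, hW, hne⟩ := Finset.mem_filter.1 he
  by_cases hcut : Cuts S e
  · exact Finset.mem_union_left _ (Finset.mem_filter.2 ⟨Finset.mem_filter.2 ⟨heH, hW⟩, hcut⟩)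
  · refine Finset.mem_union_right _ (Finset.mem_filter.2 ⟨heH, ?_⟩)
    have hiff : e.1 ∈ S ↔ e.2 ∈ S := not_not.1 hcut
    by_cases h2 : e.2 ∈ S
    · simp [hiff.2 h2, h2] at hne
    · have h1 : e.1 ∉ S := fun h => h2 (hiff.1 h)
      rw [Finset.piecewise_eq_of_notMem _ _ _ h1, Finset.piecewise_eq_of_notMem _ _ _ h2] at hne
      exact ⟨⟨Finset.mem_sdiff.2 ⟨hW.1, h1⟩, Finset.mem_sdiff.2 ⟨hW.2, h2⟩⟩, hne⟩

theorem sum_meets_add_sum_inside_sdiff_le {g : V × V → ℝ} (hg : ∀ e, 0 ≤ g e) (W S : Finset V) :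
    ∑ e ∈ {e ∈ H | Inside W e} with Meets S e, g e + ∑ e ∈ H with Inside (W \ S) e, g e ≤
      ∑ e ∈ H with Inside W e, g e := by
  rw [← Finset.sum_filter_add_sum_filter_not {e ∈ H | Inside W e} (Meets S)]
  refine add_le_add_right (Finset.sum_le_sum_of_subset_of_nonneg ?_ fun e _ _ => hg e) _
  intro e he
  obtain ⟨heH, h1, h2⟩ := Finset.mem_filter.1 he
  rw [Finset.mem_sdiff] at h1 h2
  refine Finset.mem_filter.2 ⟨Finset.mem_filter.2 ⟨heH, h1.1, h2.1⟩, ?_⟩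
  exact not_or.2 ⟨h1.2, h2.2⟩

theorem IsBallSystem.exists_partition {B : V → ℕ → Finset V} (h : IsBallSystem H lam B)
    (hf : ∀ e, 0 ≤ f e) {m q : ℕ} (hm : 0 < m) (hq : 0 < q) {β : ℝ} (hβ : 0 ≤ β)
    (hvol : ∑ e ∈ H, f e * lam e + β ≤ 2 ^ m * β) (W : Finset V) :
    ∃ part : V → V, (∀ u ∈ W, part u ∈ W ∧ ∃ i < m * q, u ∈ B (part u) i) ∧
      q * ∑ e ∈ H with Inside W e ∧ part e.1 ≠ part e.2, f e ≤
        2 * (∑ e ∈ H with Inside W e, f e * lam e + W.card * β) := by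
  have hvolume : ∀ e, 0 ≤ f e * lam e := fun e => mul_nonneg (hf e) (Nat.cast_nonneg _)
  induction W using Finset.strongInduction with
  | H W ih =>
    rcases W.eq_empty_or_nonempty with rfl | ⟨w, hw⟩
    · exact ⟨id, by simp, by simp [Inside]⟩
    have hvolW : ∑ e ∈ H with Inside W e, f e * lam e + β ≤ 2 ^ m * β :=
      (add_le_add_left (Finset.sum_le_sum_of_subset_of_nonneg (Finset.filter_subset _ _)
        fun e _ _ => hvolume e) _).trans hvol
    obtain ⟨i, hi, hcut⟩ :=
      (h.subset (Finset.filter_subset (Inside W) H)).exists_sparse_ball hf hm hq hvolW w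
    have hssub : W \ B w i ⊂ W :=
      ⟨Finset.sdiff_subset, fun hsub => (Finset.mem_sdiff.1 (hsub hw)).2 (h.self_mem w i)⟩
    obtain ⟨part, hpart, hsum⟩ := ih _ hssub
    refine ⟨(B w i).piecewise (fun _ => w) part, fun u hu => ?_, ?_⟩
    · by_cases huB : u ∈ B w i
      · rw [Finset.piecewise_eq_of_mem _ _ _ huB]
        exact ⟨hw, i, hi, huB⟩
      · rw [Finset.piecewise_eq_of_notMem _ _ _ huB]
        exact (hpart u (Finset.mem_sdiff.2 ⟨hu, huB⟩)).imp (fun hmem => hssub.1 hmem) id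
    · have hcard : ((W \ B w i).card + 1 : ℝ) * β ≤ W.card * β :=
        mul_le_mul_of_nonneg_right (by exact_mod_cast Finset.card_lt_card hssub) hβ
      have hrefine := mul_le_mul_of_nonneg_left (sum_cut_refine_le (H := H) hf W (B w i) w part)
        (Nat.cast_nonneg q)
      have hsplit := sum_meets_add_sum_inside_sdiff_le (H := H) hvolume W (B w i)
      rw [mul_add] at hrefine
      linarith

theorem IsBallSystem.exists_balanced_partition {B : V → ℕ → Finset V} (h : IsBallSystem H lam B)
    (hf : ∀ e, 0 ≤ f e) {m q : ℕ} (hm : 0 < m) (hq : 0 < q) {U W : Finset V} (hU : U.Nonempty)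
    (hUm : U.card < 2 ^ m) (hsmall : ∀ w ∈ U, ∀ i < m * q, 2 * (B w i).card ≤ U.card)
    (hWU : W ⊆ U) :
    ∃ part : V → V, (∀ w, 2 * {u ∈ W | part u = w}.card ≤ U.card) ∧
      q * ∑ e ∈ H with Inside W e ∧ part e.1 ≠ part e.2, f e ≤ 4 * ∑ e ∈ H, f e * lam e := by
  have hvolume : ∀ e, 0 ≤ f e * lam e := fun e => mul_nonneg (hf e) (Nat.cast_nonneg _)
  have hcardU : (0 : ℝ) < U.card := by exact_mod_cast hU.card_pos
  have hβ := div_nonneg (Finset.sum_nonneg fun e (_ : e ∈ H) => hvolume e) hcardU.le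
  have hUβ := mul_div_cancel₀ (∑ e ∈ H, f e * lam e) hcardU.ne'
  obtain ⟨part, hpart, hsum⟩ := h.exists_partition hf hm hq hβ (by
    have : ((U.card : ℝ) + 1) ≤ 2 ^ m := by exact_mod_cast hUm
    have := mul_le_mul_of_nonneg_right this hβ
    rwa [add_mul, one_mul, hUβ] at this) W
  refine ⟨part, fun w => ?_, hsum.trans ?_⟩
  · rcases {u ∈ W | part u = w}.eq_empty_or_nonempty with hw | ⟨u, hu⟩
    · simp [hw]
    obtain ⟨huW, rfl⟩ := Finset.mem_filter.1 hu
    have hpos : 0 < m * q := Nat.mul_pos hm hq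
    refine le_trans (Nat.mul_le_mul_left 2 (Finset.card_le_card fun x hx => ?_))
      (hsmall _ (hWU (hpart u huW).1) (m * q - 1) (by omega))
    obtain ⟨hxW, hxu⟩ := Finset.mem_filter.1 hx
    obtain ⟨i, hi, hxi⟩ := (hpart x hxW).2
    rw [hxu] at hxi
    exact h.mono _ (by omega) hxi
  · have hinside : ∑ e ∈ H with Inside W e, f e * lam e ≤ ∑ e ∈ H, f e * lam e :=
      Finset.sum_le_sum_of_subset_of_nonneg (Finset.filter_subset _ _) fun e _ _ => hvolume e
    have hcardW := mul_le_mul_of_nonneg_right (Nat.cast_le.2 (Finset.card_le_card hWU)) hβ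
    linarith

/-- The colouring by the classes of `part` inside `W`, with one further colour outside `W`. -/
def partColor (W : Finset V) (part : V → V) (u : V) : Option V :=
  if u ∈ W then some (part u) else none

theorem meets_of_partColor_ne {W : Finset V} {part : V → V} {e : V × V}
    (hne : partColor W part e.1 ≠ partColor W part e.2) : Meets W e := by
  by_contra hmeets
  obtain ⟨h1, h2⟩ := not_or.1 hmeets
  exact hne (by rw [partColor, partColor, if_neg h1, if_neg h2])

theorem sum_partColor_ne_le (hf : ∀ e, 0 ≤ f e) (W : Finset V) (part : V → V) :
    ∑ e ∈ H with partColor W part e.1 ≠ partColor W part e.2, f e ≤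
      ∑ e ∈ H with Cuts W e, f e + ∑ e ∈ H with Inside W e ∧ part e.1 ≠ part e.2, f e := by
  refine (Finset.sum_le_sum_of_subset_of_nonneg ?_ fun e _ _ => hf e).trans (sum_union_le hf _ _)
  intro e he
  obtain ⟨heH, hne⟩ := Finset.mem_filter.1 he
  by_cases hcut : Cuts W e
  · exact Finset.mem_union_left _ (Finset.mem_filter.2 ⟨heH, hcut⟩)
  · have hiff : e.1 ∈ W ↔ e.2 ∈ W := not_not.1 hcut
    have hin : Inside W e :=
      (meets_of_partColor_ne hne).elim (fun h => ⟨h, hiff.1 h⟩) fun h => ⟨hiff.2 h, h⟩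
    refine Finset.mem_union_right _ (Finset.mem_filter.2 ⟨heH, hin, fun heq => hne ?_⟩)
    rw [partColor, partColor, if_pos hin.1, if_pos hin.2, heq]

theorem two_mul_card_partColor_le {U W : Finset V} {part : V → V} (hWU : W ⊆ U)
    (hW : U.card ≤ 2 * W.card) (hpart : ∀ w, 2 * {u ∈ W | part u = w}.card ≤ U.card)
    (c : Option V) : 2 * {u ∈ U | partColor W part u = c}.card ≤ U.card := by
  cases c with
  | none =>
    have hsub : {u ∈ U | partColor W part u = none} ⊆ U \ W := fun u hu => by
      simpa [partColor] using hu
    have := Finset.card_le_card hsub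
    have := Finset.card_sdiff_add_card_eq_card hWU
    omega
  | some w =>
    refine le_trans (Nat.mul_le_mul_left 2 (Finset.card_le_card fun u hu => ?_)) (hpart w)
    simpa [partColor] using (Finset.mem_filter.1 hu).2

/-- If `g` is the first radius at which some ball contains half of `U`, then this ball splits `U`
sparsely: its complement is small, and all smaller balls are, so it can be partitioned further. -/
theorem IsBallSystem.exists_sparse_coloring {B : V → ℕ → Finset V} (h : IsBallSystem H lam B)
    (hf : ∀ e, 0 ≤ f e) {m g : ℕ} (hm : 0 < m) (hmg : m ≤ g) {U : Finset V} (hUm : U.card < 2 ^ m)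
    {v : V} (hBU : ∀ i, B v i ⊆ U) (hlarge : U.card ≤ 2 * (B v g).card)
    (hsmall : ∀ w ∈ U, ∀ i < g, 2 * (B w i).card ≤ U.card) :
    ∃ i < 2 * g, ∃ color : V → Option V, (∀ c, 2 * {u ∈ U | color u = c}.card ≤ U.card) ∧
      (∀ e, color e.1 ≠ color e.2 → Meets (B v i) e) ∧
      g * ∑ e ∈ H with color e.1 ≠ color e.2, f e ≤ 9 * m * ∑ e ∈ H, f e * lam e := by
  have hvolume : ∀ e, 0 ≤ f e * lam e := fun e => mul_nonneg (hf e) (Nat.cast_nonneg _)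
  have hq : 0 < g / m := Nat.div_pos hmg hm
  have hqg : m * (g / m) ≤ g := Nat.mul_div_le g m
  have hgq : (g : ℝ) ≤ 2 * (m * (g / m : ℕ)) := by
    have := Nat.lt_mul_div_succ g hm
    have := Nat.mul_le_mul_left m hq
    exact_mod_cast (by lia : g ≤ 2 * (m * (g / m)))
  obtain ⟨i, hi, hcut⟩ := h.exists_radius_sum_cuts_le hf v g (hm.trans_le hmg)
  obtain ⟨hgi, hig⟩ := Finset.mem_Ico.1 hi
  obtain ⟨part, hpart, hsum⟩ := h.exists_balanced_partition hf hm hq ⟨v, hBU 0 (h.self_mem v 0)⟩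
    hUm (fun w hw i hi => hsmall w hw i (hi.trans_le hqg)) (hBU i)
  refine ⟨i, by omega, partColor (B v i) part, two_mul_card_partColor_le (hBU i) ?_ hpart,
    fun e => meets_of_partColor_ne, ?_⟩
  · exact hlarge.trans (Nat.mul_le_mul_left 2 (Finset.card_le_card (h.mono v hgi)))
  · set vol := ∑ e ∈ H, f e * lam e
    have hvol : 0 ≤ vol := Finset.sum_nonneg fun e _ => hvolume e
    have hcut' : g * ∑ e ∈ H with Cuts (B v i) e, f e ≤ vol := hcut.trans
      (Finset.sum_le_sum_of_subset_of_nonneg (Finset.filter_subset _ _) fun e _ _ => hvolume e)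
    set apart := ∑ e ∈ H with Inside (B v i) e ∧ part e.1 ≠ part e.2, f e
    have hapart : g * apart ≤ 8 * m * vol :=
      calc g * apart ≤ 2 * (m * (g / m : ℕ)) * apart :=
            mul_le_mul_of_nonneg_right hgq (Finset.sum_nonneg fun e _ => hf e)
        _ = 2 * m * ((g / m : ℕ) * apart) := by ring
        _ ≤ 2 * m * (4 * vol) := mul_le_mul_of_nonneg_left hsum (by positivity)
        _ = 8 * m * vol := by ring
    have hcolor := mul_le_mul_of_nonneg_left (sum_partColor_ne_le (H := H) hf (B v i) part)
      (Nat.cast_nonneg g)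
    have hm1 : 1 * vol ≤ m * vol := mul_le_mul_of_nonneg_right (by exact_mod_cast hm) hvol
    rw [mul_add] at hcolor
    linarith

end RegionGrowing

section WalkBall

variable {V : Type} [Fintype V] {H : Finset (V × V)} {lam : V × V → ℕ} {u v w : V} {i : ℕ}

open Classical in
/-- The ball of radius `i` around `w` in the graph `H` with edge lengths `lam`. -/
noncomputable def walkBall (H : Finset (V × V)) (lam : V × V → ℕ) (w : V) (i : ℕ) : Finset V :=
  {u | ∃ p, IsWalk ↑H w u p ∧ weight lam p ≤ i}

theorem mem_walkBall : u ∈ walkBall H lam w i ↔ ∃ p, IsWalk ↑H w u p ∧ weight lam p ≤ i := by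
  simp [walkBall]

theorem walkBall_mono (H : Finset (V × V)) (lam : V × V → ℕ) (w : V) :
    Monotone (walkBall H lam w) := by
  intro i j hij u hu
  obtain ⟨p, hp, hpi⟩ := mem_walkBall.1 hu
  exact mem_walkBall.2 ⟨p, hp, hpi.trans hij⟩

theorem self_mem_walkBall (H : Finset (V × V)) (lam : V × V → ℕ) (w : V) (i : ℕ) :
    w ∈ walkBall H lam w i :=
  mem_walkBall.2 ⟨[], rfl, Nat.zero_le _⟩

theorem mem_walkBall_of_isWalk {p : List (V × V)} (hu : u ∈ walkBall H lam w i)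
    (hp : IsWalk ↑H u v p) : v ∈ walkBall H lam w (i + weight lam p) := by
  obtain ⟨r, hr, hri⟩ := mem_walkBall.1 hu
  exact mem_walkBall.2 ⟨r ++ p, hr.append hp, by simpa using hri⟩

theorem walkBall_subset {U : Finset V} (hH : ∀ e ∈ H, Inside U e) (hw : w ∈ U) (i : ℕ) :
    walkBall H lam w i ⊆ U := by
  intro u hu
  obtain ⟨p, hp, -⟩ := mem_walkBall.1 hu
  clear hu
  induction p generalizing w with
  | nil => exact (show w = u from hp) ▸ hw
  | cons e p ih => exact ih (hH e hp.2.1).2 hp.2.2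

theorem isBallSystem_walkBall [DecidableEq V] (hH : ∀ e ∈ H, e.swap ∈ H)
    (hlam : ∀ e, lam e.swap = lam e) : IsBallSystem H lam (walkBall H lam) := by
  refine ⟨walkBall_mono H lam, self_mem_walkBall H lam, fun w e he r => ?_⟩
  rcases {i ∈ Finset.range r | Cuts (walkBall H lam w i) e}.eq_empty_or_nonempty with hS | hS
  · simp [hS]
  obtain ⟨i, hi, hmin⟩ := Finset.exists_minimal hS
  -- From the first radius `i` at which `e` is cut, its far end is reached within `lam e`.
  have hboth : ∀ j, i + lam e ≤ j → Inside (walkBall H lam w j) e := by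
    intro j hj
    have hfst : e.1 ∈ walkBall H lam w i → e.2 ∈ walkBall H lam w (i + lam e) := fun h => by
      simpa using mem_walkBall_of_isWalk h (p := [e]) ⟨rfl, he, rfl⟩
    have hsnd : e.2 ∈ walkBall H lam w i → e.1 ∈ walkBall H lam w (i + lam e) := fun h => by
      simpa [hlam] using mem_walkBall_of_isWalk h (p := [e.swap]) ⟨rfl, hH e he, rfl⟩
    have hij := walkBall_mono H lam w (show i ≤ j by omega)
    have hj' := walkBall_mono H lam w hj
    rcases (Finset.mem_filter.1 hi).2.meets with h | h
    · exact ⟨hij h, hj' (hfst h)⟩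
    · exact ⟨hj' (hsnd h), hij h⟩
  have hsub : {i ∈ Finset.range r | Cuts (walkBall H lam w i) e} ⊆ Finset.Ico i (i + lam e) := by
    intro j hj
    refine Finset.mem_Ico.2 ⟨(le_total i j).elim id (hmin hj), ?_⟩
    by_contra! hlt
    exact (Finset.mem_filter.1 hj).2 (iff_of_true (hboth j hlt).1 (hboth j hlt).2)
  simpa using Finset.card_le_card hsub

theorem walkBall_eq_zero {m : ℕ} (hlam : ∀ e, lam e = 0 ∨ m ≤ lam e) (w : V) (hi : i < m) :
    walkBall H lam w i = walkBall H lam w 0 := by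
  refine subset_antisymm (fun u hu => ?_) (walkBall_mono H lam w (Nat.zero_le i))
  obtain ⟨p, hp, hpi⟩ := mem_walkBall.1 hu
  refine mem_walkBall.2 ⟨p, hp, ?_⟩
  clear hp
  induction p with
  | nil => rfl
  | cons e p ih =>
    rw [weight_cons] at hpi ⊢
    have := ih (by omega)
    have := hlam e
    omega

end WalkBall

section Traffic

variable {A : Type*} [DecidableEq A] {ι : Type*} {I : Finset ι} {P : ι → List A}

/-- The number of times that the walks `P i` with `i ∈ I` traverse the edge `e`. -/
def traffic (I : Finset ι) (P : ι → List A) (e : A) : ℝ := ∑ i ∈ I, ((P i).count e : ℝ)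

theorem traffic_nonneg (e : A) : 0 ≤ traffic I P e :=
  Finset.sum_nonneg fun _ _ => Nat.cast_nonneg _

theorem sum_traffic_mul {H : Finset A} (hP : ∀ i ∈ I, ∀ e ∈ P i, e ∈ H) (lam : A → ℕ) :
    ∑ e ∈ H, traffic I P e * lam e = ∑ i ∈ I, ((((P i).map lam).sum : ℕ) : ℝ) := by
  simp only [traffic, Finset.sum_mul]
  rw [Finset.sum_comm]
  refine Finset.sum_congr rfl fun i hi => ?_
  rw [Finset.sum_list_map_count, Nat.cast_sum]
  simp only [smul_eq_mul, Nat.cast_mul]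
  refine (Finset.sum_subset (fun e he => hP i hi e (List.mem_toFinset.1 he)) fun e _ he => ?_).symm
  rw [List.count_eq_zero.2 (mt List.mem_toFinset.2 he), Nat.cast_zero, zero_mul]

theorem card_le_sum_traffic {J : Finset ι} (hJ : J ⊆ I) {S : Finset A}
    (h : ∀ i ∈ J, ∃ e ∈ P i, e ∈ S) : (J.card : ℝ) ≤ ∑ e ∈ S, traffic I P e := by
  simp only [traffic]
  rw [Finset.sum_comm, Finset.card_eq_sum_ones, Nat.cast_sum]
  refine le_trans (Finset.sum_le_sum fun i hi => ?_) (Finset.sum_le_sum_of_subset_of_nonneg hJ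
    fun i _ _ => Finset.sum_nonneg fun e _ => Nat.cast_nonneg _)
  obtain ⟨e, he, heS⟩ := h i hi
  exact (Nat.cast_le.2 (List.count_pos_iff.2 he)).trans
    (Finset.single_le_sum (f := fun e => ((P i).count e : ℝ)) (fun _ _ => Nat.cast_nonneg _) heS)

end Traffic

section JunctionSplit

variable {V : Type} {lam : V × V → ℕ} {v s t : V} {p : List (V × V)} {i : ℕ}

theorem IsWalk.exists_split {E : Set (V × V)} (hp : IsWalk E s t p) {S : Finset V}
    (hS : s ∈ S ∨ ∃ e ∈ p, Meets S e) :
    ∃ x ∈ S, ∃ p₁ p₂, p = p₁ ++ p₂ ∧ IsWalk E s x p₁ ∧ IsWalk E x t p₂ := by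
  rcases hS with hs | ⟨e, he, hmeets⟩
  · exact ⟨s, hs, [], p, rfl, rfl, hp⟩
  obtain ⟨p₁, p₂, rfl⟩ := List.append_of_mem he
  obtain ⟨x, hp₁, rfl, heE, hp₂⟩ := isWalk_append_iff.1 hp
  rcases hmeets with h | h
  · exact ⟨e.1, h, p₁, e :: p₂, rfl, hp₁, rfl, heE, hp₂⟩
  · exact ⟨e.2, h, p₁ ++ [e], p₂, by simp, hp₁.append ⟨rfl, heE, rfl⟩, hp₂⟩

variable [Fintype V]

theorem ends_mem_walkBall {H : Finset (V × V)} (hH : ∀ e ∈ H, e.swap ∈ H)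
    (hlam : ∀ e, lam e.swap = lam e) (hp : IsWalk ↑H s t p)
    (hmeets : s ∈ walkBall H lam v i ∨ ∃ e ∈ p, Meets (walkBall H lam v i) e) :
    s ∈ walkBall H lam v (i + weight lam p) ∧ t ∈ walkBall H lam v (i + weight lam p) := by
  obtain ⟨x, hx, p₁, p₂, rfl, hp₁, hp₂⟩ := hp.exists_split hmeets
  have hs := mem_walkBall_of_isWalk hx (hp₁.reverse hH)
  rw [weight_reverseWalk hlam] at hs
  rw [weight_append]
  exact ⟨walkBall_mono H lam v (by omega) hs,
    walkBall_mono H lam v (by omega) (mem_walkBall_of_isWalk hx hp₂)⟩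

variable [DecidableEq V] {ι : Type*} [DecidableEq ι]

/-- One level of the junction decomposition of the walks `P i`, `i ∈ I`, from `s i` to `t i` in the
graph `H` on the vertex set `U`: the walks in `served` are rerouted through the vertex `center`,
the ends of the walk `P i` being within distance `radius i` of it, and each of the other walks
avoids the vertices in `removed` and stays within one of the classes of `color`, all of which have
at most half the size of `U`. -/
structure JunctionSplit (H : Finset (V × V)) (lam : V × V → ℕ) (U : Finset V) (s t : ι → V)
    (P : ι → List (V × V)) (I : Finset ι) where
  center : V
  removed : Finset V
  color : V → Option V
  served : Finset ι
  radius : ι → ℕ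
  two_mul_card_class_le : ∀ g, 2 * {u ∈ U \ removed | color u = g}.card ≤ U.card
  served_subset : served ⊆ I
  source_notMem : ∀ i ∈ I \ served, s i ∉ removed
  not_meets : ∀ i ∈ I \ served, ∀ e ∈ P i, ¬Meets removed e
  color_eq : ∀ i ∈ I \ served, ∀ e ∈ P i, color e.1 = color e.2
  ends_mem : ∀ i ∈ served, s i ∈ walkBall H lam center (radius i) ∧
    t i ∈ walkBall H lam center (radius i)

variable {H : Finset (V × V)} {U : Finset V} {s t : ι → V} {P : ι → List (V × V)} {I : Finset ι}
  {m : ℕ}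

theorem exists_junctionSplit_of_zero_ball (hH : ∀ e ∈ H, e.swap ∈ H)
    (hlam : ∀ e, lam e.swap = lam e) (hHU : ∀ e ∈ H, Inside U e)
    (hP : ∀ i ∈ I, IsWalk ↑H (s i) (t i) (P i)) (hv : v ∈ U)
    (hlarge : U.card ≤ 2 * (walkBall H lam v 0).card) :
    ∃ S : JunctionSplit H lam U s t P I,
      ∑ i ∈ S.served, (S.radius i : ℝ) ≤ ∑ i ∈ I, ((weight lam (P i) : ℕ) : ℝ) := by
  classical
  let served := {i ∈ I | s i ∈ walkBall H lam v 0 ∨ ∃ e ∈ P i, Meets (walkBall H lam v 0) e}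
  have hunserved : ∀ i ∈ I \ served,
      s i ∉ walkBall H lam v 0 ∧ ∀ e ∈ P i, ¬Meets (walkBall H lam v 0) e := by
    intro i hi
    obtain ⟨hiI, hi⟩ := Finset.mem_sdiff.1 hi
    have hnot : ¬(s i ∈ walkBall H lam v 0 ∨ ∃ e ∈ P i, Meets (walkBall H lam v 0) e) :=
      fun h => hi (Finset.mem_filter.2 ⟨hiI, h⟩)
    exact ⟨fun h => hnot (Or.inl h), fun e he h => hnot (Or.inr ⟨e, he, h⟩)⟩
  refine ⟨⟨v, walkBall H lam v 0, fun _ => none, served, fun i => weight lam (P i), fun g => ?_,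
    Finset.filter_subset _ _, fun i hi => (hunserved i hi).1, fun i hi => (hunserved i hi).2,
    fun _ _ _ _ => rfl, fun i hi => ?_⟩, ?_⟩
  · have := Finset.card_le_card (Finset.filter_subset (fun _ => none = g)
      (U \ walkBall H lam v 0))
    have := Finset.card_sdiff_add_card_eq_card (walkBall_subset (lam := lam) hHU hv 0)
    omega
  · obtain ⟨hiI, hmeets⟩ := Finset.mem_filter.1 hi
    simpa using ends_mem_walkBall hH hlam (hP i hiI) hmeets
  · exact Finset.sum_le_sum_of_subset_of_nonneg (Finset.filter_subset _ _)
      fun _ _ _ => Nat.cast_nonneg _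

theorem exists_junctionSplit_of_small_balls (hH : ∀ e ∈ H, e.swap ∈ H)
    (hlam : ∀ e, lam e.swap = lam e) (hHU : ∀ e ∈ H, Inside U e)
    (hP : ∀ i ∈ I, IsWalk ↑H (s i) (t i) (P i)) (hU : U.Nonempty) (hm : 0 < m)
    (hUm : U.card < 2 ^ m) (hsmall : ∀ w ∈ U, ∀ i, 2 * (walkBall H lam w i).card ≤ U.card) :
    ∃ S : JunctionSplit H lam U s t P I, S.served = ∅ := by
  have hPH : ∀ i ∈ I, ∀ e ∈ P i, e ∈ H := fun i hi e he => (hP i hi).mem_of_mem he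
  obtain ⟨q, hq⟩ := exists_nat_gt (4 * ∑ e ∈ H, traffic I P e * lam e)
  have hvol : 0 ≤ ∑ e ∈ H, traffic I P e * lam e :=
    Finset.sum_nonneg fun e _ => mul_nonneg (traffic_nonneg e) (Nat.cast_nonneg _)
  have hqpos : (0 : ℝ) < q := by linarith
  obtain ⟨part, hpart, hsum⟩ := (isBallSystem_walkBall hH hlam).exists_balanced_partition
    (f := traffic I P) traffic_nonneg hm (Nat.cast_pos.1 hqpos) hU hUm
    (fun w hw i _ => hsmall w hw i) subset_rfl
  -- The traffic between different parts is below one, so no walk changes parts.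
  have hstay : ∀ i ∈ I, ∀ e ∈ P i, part e.1 = part e.2 := by
    intro i hi e he
    by_contra hne
    have hone : ((({i} : Finset ι).card : ℕ) : ℝ) ≤
        ∑ e ∈ H with Inside U e ∧ part e.1 ≠ part e.2, traffic I P e := by
      refine card_le_sum_traffic (Finset.singleton_subset_iff.2 hi) fun j hj => ?_
      rw [Finset.mem_singleton.1 hj]
      exact ⟨e, he, Finset.mem_filter.2 ⟨hPH i hi e he, hHU e (hPH i hi e he), hne⟩⟩
    rw [Finset.card_singleton, Nat.cast_one] at hone
    nlinarith
  obtain ⟨v, -⟩ := hU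
  refine ⟨⟨v, ∅, fun u => some (part u), ∅, fun _ => 0, fun g => ?_, Finset.empty_subset _,
    by simp, by simp [Meets], fun i hi e he => ?_, by simp⟩, rfl⟩
  · rw [Finset.sdiff_empty]
    cases g with
    | none => simp
    | some w => simpa using hpart w
  · exact congrArg some (hstay i (Finset.mem_sdiff.1 hi).1 e he)

theorem exists_junctionSplit_of_large_ball (hH : ∀ e ∈ H, e.swap ∈ H)
    (hlam : ∀ e, lam e.swap = lam e) (hHU : ∀ e ∈ H, Inside U e)
    (hP : ∀ i ∈ I, IsWalk ↑H (s i) (t i) (P i)) (hm : 0 < m) (hUm : U.card < 2 ^ m) {g : ℕ}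
    (hmg : m ≤ g) (hv : v ∈ U) (hlarge : U.card ≤ 2 * (walkBall H lam v g).card)
    (hsmall : ∀ w ∈ U, ∀ i < g, 2 * (walkBall H lam w i).card ≤ U.card) :
    ∃ S : JunctionSplit H lam U s t P I, ∑ i ∈ S.served, (S.radius i : ℝ) ≤
      19 * m * ∑ i ∈ I, ((weight lam (P i) : ℕ) : ℝ) := by
  classical
  have hPH : ∀ i ∈ I, ∀ e ∈ P i, e ∈ H := fun i hi e he => (hP i hi).mem_of_mem he
  obtain ⟨r, hr, color, hcolor, hmeets, hsum⟩ :=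
    (isBallSystem_walkBall hH hlam).exists_sparse_coloring (f := traffic I P) traffic_nonneg hm hmg
      hUm (walkBall_subset hHU hv) hlarge hsmall
  let served := {i ∈ I | ∃ e ∈ P i, color e.1 ≠ color e.2}
  have hserved : served ⊆ I := Finset.filter_subset _ _
  refine ⟨⟨v, ∅, color, served, fun i => 2 * g + weight lam (P i), by simpa using hcolor, hserved,
    by simp, by simp [Meets], fun i hi e he => ?_, fun i hi => ?_⟩, ?_⟩
  · obtain ⟨hiI, hi⟩ := Finset.mem_sdiff.1 hi
    by_contra hne
    exact hi (Finset.mem_filter.2 ⟨hiI, e, he, hne⟩)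
  · obtain ⟨hiI, e, he, hne⟩ := Finset.mem_filter.1 hi
    have hends := ends_mem_walkBall hH hlam (hP i hiI) (Or.inr ⟨e, he, hmeets e hne⟩)
    exact ⟨walkBall_mono H lam v (by omega) hends.1, walkBall_mono H lam v (by omega) hends.2⟩
  · have hcard : (served.card : ℝ) ≤ ∑ e ∈ H with color e.1 ≠ color e.2, traffic I P e :=
      card_le_sum_traffic hserved fun i hi => by
        obtain ⟨hiI, e, he, hne⟩ := Finset.mem_filter.1 hi
        exact ⟨e, he, Finset.mem_filter.2 ⟨hPH i hiI e he, hne⟩⟩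
    set vol := ∑ i ∈ I, ((weight lam (P i) : ℕ) : ℝ)
    have hdetour : (g : ℝ) * served.card ≤ 9 * m * vol :=
      ((mul_le_mul_of_nonneg_left hcard (Nat.cast_nonneg g)).trans hsum).trans_eq
        (congrArg _ (sum_traffic_mul hPH lam))
    have hserved_vol : ∑ i ∈ served, ((weight lam (P i) : ℕ) : ℝ) ≤ vol :=
      Finset.sum_le_sum_of_subset_of_nonneg hserved fun _ _ _ => Nat.cast_nonneg _
    have hvol : 1 * vol ≤ m * vol := mul_le_mul_of_nonneg_right (by exact_mod_cast hm)
      (Finset.sum_nonneg fun _ _ => Nat.cast_nonneg _)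
    simp only [Nat.cast_add, Nat.cast_mul, Finset.sum_add_distrib, Finset.sum_const, nsmul_eq_mul]
    push_cast
    linarith

theorem exists_junctionSplit (hH : ∀ e ∈ H, e.swap ∈ H) (hlam : ∀ e, lam e.swap = lam e)
    (hHU : ∀ e ∈ H, Inside U e) (hP : ∀ i ∈ I, IsWalk ↑H (s i) (t i) (P i)) (hU : U.Nonempty)
    (hm : 0 < m) (hUm : U.card < 2 ^ m) (hlong : ∀ e, lam e = 0 ∨ m ≤ lam e) :
    ∃ S : JunctionSplit H lam U s t P I, ∑ i ∈ S.served, (S.radius i : ℝ) ≤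
      19 * m * ∑ i ∈ I, ((weight lam (P i) : ℕ) : ℝ) := by
  classical
  have hvol : 0 ≤ ∑ i ∈ I, ((weight lam (P i) : ℕ) : ℝ) :=
    Finset.sum_nonneg fun _ _ => Nat.cast_nonneg _
  have hm1 : (1 : ℝ) ≤ m := by exact_mod_cast hm
  by_cases hbig : ∃ g, ∃ v ∈ U, U.card ≤ 2 * (walkBall H lam v g).card
  · obtain ⟨v, hv, hlarge⟩ := Nat.find_spec hbig
    have hfirst : ∀ w ∈ U, ∀ i < Nat.find hbig, 2 * (walkBall H lam w i).card ≤ U.card := by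
      intro w hw i hi
      by_contra! hlt
      exact Nat.find_min hbig hi ⟨w, hw, hlt.le⟩
    rcases le_or_gt m (Nat.find hbig) with hmg | hgm
    · exact exists_junctionSplit_of_large_ball hH hlam hHU hP hm hUm hmg hv hlarge hfirst
    · rw [walkBall_eq_zero hlong v hgm] at hlarge
      obtain ⟨S, hS⟩ := exists_junctionSplit_of_zero_ball hH hlam hHU hP hv hlarge
      exact ⟨S, hS.trans (le_mul_of_one_le_left hvol (by linarith))⟩
  · push Not at hbig
    obtain ⟨S, hS⟩ := exists_junctionSplit_of_small_balls hH hlam hHU hP hU hm hUm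
      fun w hw i => (hbig i w hw).le
    exact ⟨S, by rw [hS, Finset.sum_empty]; positivity⟩

end JunctionSplit

section Route

variable {R L : Type*} [DecidableEq L]

/-- A route in a forest whose nodes are lists of labels hanging below a root: two downward paths
from the common root `root` to the nodes `left` and `right`. -/
structure Route (R L : Type*) where
  root : R
  left : List L
  right : List L

/-- The nodes on a route, apart from its root. -/
def Route.nodes (r : Route R L) : Finset (R × List L) :=
  {r.root} ×ˢ (nonnilPrefixes r.left ∪ nonnilPrefixes r.right)

theorem Route.mem_nodes {r : Route R L} {z : R × List L} :
    z ∈ r.nodes ↔ z.1 = r.root ∧ z.2 ≠ [] ∧ (z.2 <+: r.left ∨ z.2 <+: r.right) := by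
  rw [Route.nodes, Finset.mem_product, Finset.mem_singleton, Finset.mem_union,
    mem_nonnilPrefixes, mem_nonnilPrefixes, ← and_or_left]

end Route

section JunctionRoutes

theorem weight_mono {V : Type} {f g : V × V → ℝ} (hfg : ∀ e, f e ≤ g e) (p : List (V × V)) :
    weight f p ≤ weight g p :=
  List.sum_le_sum fun e _ => hfg e

theorem weight_mul_natCast {V : Type} (τ : ℝ) (lam : V × V → ℕ) (p : List (V × V)) :
    weight (fun e => τ * (lam e : ℝ)) p = τ * (weight lam p : ℕ) := by
  simp [weight, List.sum_map_mul_left, Function.comp_def]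

variable {V : Type} {ι : Type*} [DecidableEq ι] {s t : ι → V} {P : ι → List (V × V)}

theorem IsWalk.color_eq {α : Type*} {color : V → α} {E : Set (V × V)} {u v : V}
    {p : List (V × V)} (hp : IsWalk E u v p) (hcolor : ∀ e ∈ p, color e.1 = color e.2)
    {e : V × V} (he : e ∈ p) : color e.1 = color u := by
  induction p generalizing u with
  | nil => simp at he
  | cons e' p ih =>
    rcases List.mem_cons.1 he with rfl | he
    · rw [hp.1]
    · rw [ih hp.2.2 (fun e he => hcolor e (List.mem_cons_of_mem _ he)) he,
        ← hcolor e' List.mem_cons_self, hp.1]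

variable [Fintype V] [DecidableEq V]

namespace JunctionSplit

variable {H : Finset (V × V)} {lam : V × V → ℕ} {U : Finset V} {I : Finset ι}
  (S : JunctionSplit H lam U s t P I)

/-- The remaining vertices of the color `g`. -/
def colorClass (g : Option V) : Finset V := {u ∈ U \ S.removed | S.color u = g}

/-- The remaining walks that start in, and hence stay in, `S.colorClass g`. -/
def unserved (g : Option V) : Finset ι := {i ∈ I \ S.served | S.color (s i) = g}

theorem source_mem_colorClass {g : Option V} {i : ι} (hi : i ∈ S.unserved g) (hs : s i ∈ U) :
    s i ∈ S.colorClass g := by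
  obtain ⟨hi, hg⟩ := Finset.mem_filter.1 hi
  exact Finset.mem_filter.2 ⟨Finset.mem_sdiff.2 ⟨hs, S.source_notMem i hi⟩, hg⟩

theorem inside_colorClass {g : Option V} {i : ι} (hi : i ∈ S.unserved g) {E : Set (V × V)}
    (hP : IsWalk E (s i) (t i) (P i)) {e : V × V} (he : e ∈ P i) (heU : Inside U e) :
    Inside (S.colorClass g) e := by
  obtain ⟨hi, hg⟩ := Finset.mem_filter.1 hi
  have hcolor : S.color e.1 = g := (hP.color_eq (S.color_eq i hi) he).trans hg
  have hremoved := not_or.1 (S.not_meets i hi e he)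
  exact ⟨Finset.mem_filter.2 ⟨Finset.mem_sdiff.2 ⟨heU.1, hremoved.1⟩, hcolor⟩,
    Finset.mem_filter.2 ⟨Finset.mem_sdiff.2 ⟨heU.2, hremoved.2⟩,
      (S.color_eq i hi e he).symm.trans hcolor⟩⟩

theorem sum_inside_colorClass_le (F : Finset (V × V)) {f : V × V → ℝ} (hf : ∀ e, 0 ≤ f e) :
    ∑ g, ∑ e ∈ F with Inside (S.colorClass g) e, f e ≤ ∑ e ∈ F with Inside U e, f e := by
  have hcolor : ∀ {u g}, u ∈ S.colorClass g → u ∈ U ∧ S.color u = g := fun hu =>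
    ⟨(Finset.mem_sdiff.1 (Finset.mem_filter.1 hu).1).1, (Finset.mem_filter.1 hu).2⟩
  rw [← Finset.sum_fiberwise _ fun e : V × V => S.color e.1]
  refine Finset.sum_le_sum fun g _ => Finset.sum_le_sum_of_subset_of_nonneg (fun e he => ?_)
    fun e _ _ => hf e
  obtain ⟨heF, h₁, h₂⟩ := Finset.mem_filter.1 he
  exact Finset.mem_filter.2
    ⟨Finset.mem_filter.2 ⟨heF, (hcolor h₁).1, (hcolor h₂).1⟩, (hcolor h₁).2⟩

theorem sum_unserved_le {f : ι → ℝ} (hf : ∀ i, 0 ≤ f i) :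
    ∑ g, ∑ i ∈ S.unserved g, f i ≤ ∑ i ∈ I, f i := by
  simp only [unserved]
  rw [Finset.sum_fiberwise]
  exact Finset.sum_le_sum_of_subset_of_nonneg Finset.sdiff_subset fun i _ _ => hf i

end JunctionSplit

namespace Network

variable (N : Network V) {m : ℕ}

/-- The route `r` joins `u` to `v` by two chains of at most `m` steps each. -/
structure IsRoute (m : ℕ) (u v : V) (r : Route V (StepLabel V)) : Prop where
  left_length_le : r.left.length ≤ m
  right_length_le : r.right.length ≤ m
  left_end : N.chainEnd r.root r.left = u
  right_end : N.chainEnd r.root r.right = v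

/-- The total length of the two chains of a route. -/
noncomputable def routeLen (r : Route V (StepLabel V)) : ℝ :=
  N.chainLen r.root r.left + N.chainLen r.root r.right

/-- The total cost of the nodes used by the routes of the members of `I`. -/
noncomputable def routesCost (I : Finset ι) (route : ι → Route V (StepLabel V)) : ℝ :=
  ∑ z ∈ I.biUnion fun i => (route i).nodes, N.lastCost z.1 z.2

variable {N} {H : Finset (V × V)} {lam : V × V → ℕ} {τ : ℝ} {U : Finset V} {I : Finset ι}

theorem exists_center_routes (hH : ↑H ⊆ N.edges) (hτ0 : 0 ≤ τ)
    (hτ : ∀ e, N.len e ≤ τ * lam e) (hcard : Fintype.card V < 2 ^ m)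
    (S : JunctionSplit H lam U s t P I) :
    ∃ route : ι → Route V (StepLabel V),
      (∀ i ∈ S.served, N.IsRoute m (s i) (t i) (route i)) ∧
      N.routesCost S.served route ≤ 2 * m * ∑ e ∈ H, N.cost e ∧
      ∑ i ∈ S.served, N.routeLen (route i) ≤ 2 * τ * ∑ i ∈ S.served, (S.radius i : ℝ) := by
  obtain ⟨q, hq, hcost⟩ := N.exists_shortest_path_chains hH hcard S.center
  have hball : ∀ {u j}, u ∈ walkBall H lam S.center j →
      N.IsChainTo S.center u m (τ * j) (q u) := by
    intro u j hu
    obtain ⟨p, hp, hpj⟩ := mem_walkBall.1 hu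
    exact (hq u p hp).mono le_rfl (((weight_mono hτ p).trans_eq
      (weight_mul_natCast τ lam p)).trans (mul_le_mul_of_nonneg_left (Nat.cast_le.2 hpj) hτ0))
  refine ⟨fun i => ⟨S.center, q (s i), q (t i)⟩, fun i hi => ?_, le_trans ?_ hcost, ?_⟩
  · obtain ⟨hs, ht⟩ := S.ends_mem i hi
    exact ⟨(hball hs).length_le, (hball ht).length_le, (hball hs).chainEnd_eq,
      (hball ht).chainEnd_eq⟩
  · have hnodes : (S.served.biUnion fun i =>
        Route.nodes ⟨S.center, q (s i), q (t i)⟩) ⊆ {S.center} ×ˢ prefixTree Finset.univ q := by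
      refine Finset.biUnion_subset.2 fun i _ => Finset.product_subset_product_right
        (Finset.union_subset ?_ ?_) <;>
      exact Finset.subset_biUnion_of_mem (fun u => nonnilPrefixes (q u)) (Finset.mem_univ _)
    refine (Finset.sum_le_sum_of_subset_of_nonneg hnodes
      fun z _ _ => N.lastCost_nonneg _ _).trans_eq ?_
    rw [Finset.sum_product, Finset.sum_singleton]
  · rw [Finset.mul_sum]
    refine Finset.sum_le_sum fun i hi => ?_
    have hs := (hball (S.ends_mem i hi).1).chainLen_le
    have ht := (hball (S.ends_mem i hi).2).chainLen_le
    rw [routeLen]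
    linarith

theorem exists_combined_routes (S : JunctionSplit H lam U s t P I)
    {served : ι → Route V (StepLabel V)} {byColor : Option V → ι → Route V (StepLabel V)}
    (hserved : ∀ i ∈ S.served, N.IsRoute m (s i) (t i) (served i))
    (hclass : ∀ g, ∀ i ∈ S.unserved g, N.IsRoute m (s i) (t i) (byColor g i)) :
    ∃ route : ι → Route V (StepLabel V), (∀ i ∈ I, N.IsRoute m (s i) (t i) (route i)) ∧
      N.routesCost I route ≤
        N.routesCost S.served served + ∑ g, N.routesCost (S.unserved g) (byColor g) ∧
      ∑ i ∈ I, N.routeLen (route i) = ∑ i ∈ S.served, N.routeLen (served i) +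
        ∑ g, ∑ i ∈ S.unserved g, N.routeLen (byColor g i) := by
  let route i := if i ∈ S.served then served i else byColor (S.color (s i)) i
  have hroute : ∀ {g i}, i ∈ S.unserved g → route i = byColor g i := fun hi => by
    obtain ⟨hmem, rfl⟩ := Finset.mem_filter.1 hi
    exact if_neg (Finset.mem_sdiff.1 hmem).2
  have hcases : ∀ i ∈ I, i ∈ S.served ∨ i ∈ S.unserved (S.color (s i)) := fun i hi =>
    or_iff_not_imp_left.2 fun h => Finset.mem_filter.2 ⟨Finset.mem_sdiff.2 ⟨hi, h⟩, rfl⟩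
  refine ⟨route, fun i hi => ?_, ?_, ?_⟩
  · rcases hcases i hi with h | h
    · simpa only [route, if_pos h] using hserved i h
    · simpa only [hroute h] using hclass _ i h
  · have hnodes : (I.biUnion fun i => (route i).nodes) ⊆
        (S.served.biUnion fun i => (served i).nodes) ∪
          Finset.univ.biUnion fun g => (S.unserved g).biUnion fun i => (byColor g i).nodes := by
      refine Finset.biUnion_subset.2 fun i hi => ?_
      rcases hcases i hi with h | h
      · simp only [route, if_pos h]
        exact (Finset.subset_biUnion_of_mem (fun i => (served i).nodes) h).trans
          Finset.subset_union_left
      · rw [hroute h]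
        exact ((Finset.subset_biUnion_of_mem (fun i => (byColor _ i).nodes) h).trans
          (Finset.subset_biUnion_of_mem
            (fun g => (S.unserved g).biUnion fun i => (byColor g i).nodes)
            (Finset.mem_univ _))).trans Finset.subset_union_right
    have hnonneg : ∀ z : V × List (StepLabel V), 0 ≤ N.lastCost z.1 z.2 :=
      fun z => N.lastCost_nonneg _ _
    exact (Finset.sum_le_sum_of_subset_of_nonneg hnodes fun z _ _ => hnonneg z).trans
      ((sum_union_le hnonneg _ _).trans (add_le_add_right (sum_biUnion_le hnonneg _ _) _))
  · rw [← Finset.sum_sdiff S.served_subset, add_comm,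
      ← Finset.sum_fiberwise (I \ S.served) fun i => S.color (s i)]
    congr 1
    · exact Finset.sum_congr rfl fun i hi => by simp only [route, if_pos hi]
    · exact Finset.sum_congr rfl fun g _ => Finset.sum_congr rfl fun i hi => by
        rw [hroute hi]

end Network

end JunctionRoutes

namespace Network

variable {V : Type} [Fintype V] [DecidableEq V] {ι : Type*} {N : Network V} {s t : ι → V}
  {P : ι → List (V × V)}

theorem exists_junction_routes {F : Finset (V × V)} {lam : V × V → ℕ} {τ : ℝ} {U : Finset V}
    {I : Finset ι} {m : ℕ} (hF : ↑F ⊆ N.edges) (hsymm : ∀ e ∈ F, e.swap ∈ F)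
    (hlam : ∀ e, lam e.swap = lam e) (hτ0 : 0 ≤ τ) (hτ : ∀ e, N.len e ≤ τ * lam e) (hm : 0 < m)
    (hlong : ∀ e, lam e = 0 ∨ m ≤ lam e) (hcard : Fintype.card V < 2 ^ m) {d : ℕ}
    (hU : U.card < 2 ^ d) (hs : ∀ i ∈ I, s i ∈ U)
    (hP : ∀ i ∈ I, IsWalk ↑(F.filter (Inside U)) (s i) (t i) (P i)) :
    ∃ route : ι → Route V (StepLabel V), (∀ i ∈ I, N.IsRoute m (s i) (t i) (route i)) ∧
      N.routesCost I route ≤ 2 * m * d * ∑ e ∈ F with Inside U e, N.cost e ∧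
      ∑ i ∈ I, N.routeLen (route i) ≤
        38 * m * d * (τ * ∑ i ∈ I, ((weight lam (P i) : ℕ) : ℝ)) := by
  classical
  induction d generalizing U I with
  | zero =>
    obtain rfl : U = ∅ := by simpa using hU
    obtain rfl : I = ∅ := Finset.eq_empty_of_forall_notMem fun i hi => by simpa using hs i hi
    exact ⟨fun i => ⟨s i, [], []⟩, by simp, by simp [routesCost], by simp⟩
  | succ d ih =>
    rcases U.eq_empty_or_nonempty with rfl | hne
    · obtain rfl : I = ∅ := Finset.eq_empty_of_forall_notMem fun i hi => by simpa using hs i hi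
      exact ⟨fun i => ⟨s i, [], []⟩, by simp, by simp [routesCost, Inside], by simp⟩
    obtain ⟨S, hS⟩ := exists_junctionSplit (H := F.filter (Inside U))
      (fun e he => Finset.mem_filter.2 ⟨hsymm e (Finset.mem_filter.1 he).1,
        (Finset.mem_filter.1 he).2.symm⟩) hlam (fun e he => (Finset.mem_filter.1 he).2) hP hne hm
      ((Finset.card_le_univ U).trans_lt hcard) hlong
    obtain ⟨served, hserved, hservedcost, hservedlen⟩ := exists_center_routes
      (fun e he => hF (Finset.mem_filter.1 he).1) hτ0 hτ hcard S
    have hunserved : ∀ {g i}, i ∈ S.unserved g → i ∈ I := fun hi =>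
      (Finset.mem_sdiff.1 (Finset.mem_filter.1 hi).1).1
    have hcolored : ∀ g, _ := fun g => ih (U := S.colorClass g) (I := S.unserved g)
      (by
        have hhalf : 2 * (S.colorClass g).card ≤ U.card := S.two_mul_card_class_le g
        rw [pow_succ] at hU
        omega)
      (fun i hi => S.source_mem_colorClass hi (hs i (hunserved hi)))
      fun i hi => (hP i (hunserved hi)).of_forall_mem fun e he => by
        obtain ⟨heF, heU⟩ := Finset.mem_filter.1 ((hP i (hunserved hi)).mem_of_mem he)
        exact Finset.mem_filter.2 ⟨heF, S.inside_colorClass hi (hP i (hunserved hi)) he heU⟩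
    choose byColor hbyColor hcolorcost hcolorlen using hcolored
    obtain ⟨route, hroute, hcost, hlen⟩ := exists_combined_routes S hserved hbyColor
    refine ⟨route, hroute, hcost.trans ?_, hlen.trans_le ?_⟩
    · have hrec := Finset.sum_le_sum fun g (_ : g ∈ Finset.univ) => hcolorcost g
      rw [← Finset.mul_sum] at hrec
      have := mul_le_mul_of_nonneg_left (S.sum_inside_colorClass_le F N.cost_nonneg)
        (by positivity : (0 : ℝ) ≤ 2 * m * d)
      push_cast
      linarith
    · have hrec := Finset.sum_le_sum fun g (_ : g ∈ Finset.univ) => hcolorlen g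
      rw [← Finset.mul_sum, ← Finset.mul_sum] at hrec
      have hvol := S.sum_unserved_le fun i => (Nat.cast_nonneg (weight lam (P i)) : (0 : ℝ) ≤ _)
      have hunserved_le := mul_le_mul_of_nonneg_left hvol (by positivity : 0 ≤ 38 * m * d * τ)
      have hcut_le := mul_le_mul_of_nonneg_left hS (by positivity : 0 ≤ 2 * τ)
      push_cast
      linarith

end Network

theorem exists_pos_forall_eq_zero_or_le {α : Type*} [Finite α] {f : α → ℝ} (hf : ∀ a, 0 ≤ f a) :
    ∃ δ, 0 < δ ∧ ∀ a, f a = 0 ∨ δ ≤ f a := by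
  by_cases hpos : ∃ a, 0 < f a
  · obtain ⟨a, ha, hmin⟩ := Set.exists_min_image {a | 0 < f a} f (Set.toFinite _) hpos
    exact ⟨f a, ha, fun b => (hf b).eq_or_lt.imp Eq.symm (hmin b)⟩
  · exact ⟨1, one_pos, fun a => Or.inl ((not_lt.1 fun h => hpos ⟨a, h⟩).antisymm (hf a))⟩

theorem exists_integer_approximation {α : Type*} [Finite α] {f : α → ℝ} (hf : ∀ a, 0 ≤ f a) {m : ℕ}
    (hm : 0 < m) : ∃ τ : ℝ, 0 ≤ τ ∧ ∃ g : ℝ → ℕ, ∀ a, (g (f a) = 0 ∨ m ≤ g (f a)) ∧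
      f a ≤ τ * g (f a) ∧ τ * g (f a) ≤ 2 * f a := by
  obtain ⟨δ, hδ, hfδ⟩ := exists_pos_forall_eq_zero_or_le hf
  have hm1 : (1 : ℝ) ≤ m := by exact_mod_cast hm
  have hm0 : (0 : ℝ) < m := by linarith
  have hτ : 0 < δ / m := by positivity
  refine ⟨δ / m, hτ.le, fun y => ⌈y / (δ / m)⌉₊, fun a => ?_⟩
  have hcancel : δ / m * (f a / (δ / m)) = f a := mul_div_cancel₀ _ hτ.ne'
  have hlower := Nat.le_ceil (f a / (δ / m))
  rcases hfδ a with hzero | hlarge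
  · simp [hzero]
  have hm_le : m ≤ f a / (δ / m) := by
    rwa [le_div_iff₀ hτ, mul_div_cancel₀ _ hm0.ne']
  have hupper := Nat.ceil_lt_add_one (div_nonneg (hf a) hτ.le)
  refine ⟨Or.inr (by exact_mod_cast hm_le.trans hlower), ?_, ?_⟩
  · exact hcancel.symm.trans_le (mul_le_mul_of_nonneg_left hlower hτ.le)
  · calc δ / m * ⌈f a / (δ / m)⌉₊ ≤ δ / m * (2 * (f a / (δ / m))) :=
        mul_le_mul_of_nonneg_left (by linarith) hτ.le
      _ = 2 * f a := by rw [mul_left_comm, hcancel]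

section Undirected

variable {V : Type} {E : Set (V × V)} {c ℓ : V × V → ℝ}

theorem Undirected.swap_mem (h : Undirected E c ℓ) {e : V × V} (he : e ∈ E) : e.swap ∈ E :=
  (h e.1 e.2).1.1 he

theorem Undirected.cost_swap (h : Undirected E c ℓ) (e : V × V) : c e.swap = c e :=
  (h e.1 e.2).2.1.symm

theorem Undirected.len_swap (h : Undirected E c ℓ) (e : V × V) : ℓ e.swap = ℓ e :=
  (h e.1 e.2).2.2.symm

end Undirected

theorem sum_union_image_swap_le {V : Type} [DecidableEq V] {f : V × V → ℝ} (hf : ∀ e, 0 ≤ f e)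
    (hswap : ∀ e, f e.swap = f e) (F : Finset (V × V)) :
    ∑ e ∈ F ∪ F.image Prod.swap, f e ≤ 2 * ∑ e ∈ F, f e := by
  refine (sum_union_le hf _ _).trans_eq ?_
  rw [Finset.sum_image Prod.swap_injective.injOn, Finset.sum_congr rfl fun e _ => hswap e, two_mul]

namespace Network

variable {V : Type} [Fintype V] [DecidableEq V] {ι : Type*} [Fintype ι] {N : Network V}
  {s t : ι → V} {P : ι → List (V × V)} {m : ℕ}

theorem exists_routes_of_isWalk (hN : Undirected N.edges N.cost N.len) (hm : 0 < m)
    (hcard : Fintype.card V < 2 ^ m) (hP : ∀ i, IsWalk N.edges (s i) (t i) (P i)) :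
    ∃ route : ι → Route V (StepLabel V), (∀ i, N.IsRoute m (s i) (t i) (route i)) ∧
      N.routesCost Finset.univ route ≤
        4 * m ^ 2 * ∑ e ∈ Finset.univ.biUnion fun i => (P i).toFinset, N.cost e ∧
      ∑ i, N.routeLen (route i) ≤ 76 * m ^ 2 * ∑ i, weight N.len (P i) := by
  obtain ⟨τ, hτ, g, hg⟩ := exists_integer_approximation N.len_nonneg hm
  let lam e := g (N.len e)
  set F₀ : Finset (V × V) := Finset.univ.biUnion fun i => (P i).toFinset
  let F := F₀ ∪ F₀.image Prod.swap
  have hF₀ : ∀ e ∈ F₀, e ∈ N.edges := fun e he => by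
    obtain ⟨i, -, hi⟩ := Finset.mem_biUnion.1 he
    exact (hP i).mem_of_mem (List.mem_toFinset.1 hi)
  have hF : ∀ e, e ∈ F ↔ e ∈ F₀ ∨ e.swap ∈ F₀ := fun e => by
    simp [F, Prod.exists, Prod.swap, Prod.ext_iff]
  obtain ⟨route, hroute, hcost, hlen⟩ := exists_junction_routes (N := N) (F := F) (lam := lam)
    (s := s) (t := t) (P := P) (U := Finset.univ) (I := Finset.univ) (d := m)
    (fun e he => ((hF e).1 he).elim (hF₀ e) fun h => hN.swap_mem (hF₀ _ h))
    (fun e he => (hF _).2 ((hF e).1 he).symm) (fun e => congrArg g (hN.len_swap e)) hτ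
    (fun e => (hg e).2.1) hm (fun e => (hg e).1) hcard hcard (fun i _ => Finset.mem_univ _)
    fun i _ => (hP i).of_forall_mem fun e he => Finset.mem_filter.2
      ⟨(hF e).2 (Or.inl (Finset.mem_biUnion.2 ⟨i, Finset.mem_univ i, List.mem_toFinset.2 he⟩)),
        Finset.mem_univ _, Finset.mem_univ _⟩
  refine ⟨route, fun i => hroute i (Finset.mem_univ i), hcost.trans ?_, hlen.trans ?_⟩
  · have hsum : ∑ e ∈ F with Inside Finset.univ e, N.cost e ≤ 2 * ∑ e ∈ F₀, N.cost e :=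
      (Finset.sum_le_sum_of_subset_of_nonneg (Finset.filter_subset _ _)
        fun e _ _ => N.cost_nonneg e).trans
        (sum_union_image_swap_le N.cost_nonneg hN.cost_swap F₀)
    have := mul_le_mul_of_nonneg_left hsum (by positivity : (0 : ℝ) ≤ 2 * m * m)
    linarith
  · have hsum : τ * ∑ i, ((weight lam (P i) : ℕ) : ℝ) ≤ 2 * ∑ i, weight N.len (P i) := by
      rw [Finset.mul_sum, Finset.mul_sum]
      refine Finset.sum_le_sum fun i _ => ?_
      rw [← weight_mul_natCast]
      refine (weight_mono (fun e => (hg e).2.2) (P i)).trans_eq ?_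
      simp [weight, List.sum_map_mul_left]
    have := mul_le_mul_of_nonneg_left hsum (by positivity : (0 : ℝ) ≤ 38 * m * m)
    linarith

end Network

section Flow

variable {L : Type*} [Fintype L]

open Classical in
/-- The maximum flow from the root of the tree of lists of length at most `d` to the nodes that
satisfy `T`, when the node `q` has capacity `x q`. -/
noncomputable def treeFlow : ℕ → (List L → ℝ) → (List L → Prop) → ℝ
  | 0, x, T => if T [] then x [] else 0
  | d + 1, x, T => if T [] then x [] else
      min (x []) (∑ a, treeFlow d (x ∘ List.cons a) (T ∘ List.cons a))

variable {d : ℕ} {x : List L → ℝ} {T : List L → Prop}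

theorem treeFlow_of_target (hT : T []) : treeFlow d x T = x [] := by
  cases d <;> exact if_pos hT

theorem treeFlow_zero_of_not_target (hT : ¬ T []) : treeFlow 0 x T = 0 := if_neg hT

theorem treeFlow_succ_of_not_target (hT : ¬ T []) : treeFlow (d + 1) x T =
    min (x []) (∑ a, treeFlow d (x ∘ List.cons a) (T ∘ List.cons a)) := if_neg hT

theorem treeFlow_nonneg (d : ℕ) (hx : ∀ q, 0 ≤ x q) (T : List L → Prop) : 0 ≤ treeFlow d x T := by
  induction d generalizing x T with
  | zero => unfold treeFlow; split_ifs; exacts [hx _, le_rfl]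
  | succ d ih =>
    unfold treeFlow
    split_ifs
    · exact hx _
    · exact le_min (hx _) (Finset.sum_nonneg fun a _ => ih (fun q => hx _) _)

theorem treeFlow_le (d : ℕ) (hx : ∀ q, 0 ≤ x q) (T : List L → Prop) : treeFlow d x T ≤ x [] := by
  by_cases hT : T []
  · exact (treeFlow_of_target hT).le
  cases d with
  | zero => exact (treeFlow_zero_of_not_target hT).trans_le (hx _)
  | succ d => exact (treeFlow_succ_of_not_target hT).trans_le (min_le_left _ _)

theorem exists_target_of_treeFlow_pos (h : 0 < treeFlow d x T) : ∃ q, q.length ≤ d ∧ T q := by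
  induction d generalizing x T with
  | zero =>
    by_contra! hnone
    exact h.ne' (treeFlow_zero_of_not_target (hnone [] le_rfl))
  | succ d ih =>
    by_cases hT : T []
    · exact ⟨[], Nat.zero_le _, hT⟩
    rw [treeFlow_succ_of_not_target hT] at h
    obtain ⟨a, -, ha⟩ := Finset.exists_lt_of_sum_lt (s := Finset.univ) (f := fun _ : L => (0 : ℝ))
      (by simpa using (lt_min_iff.1 h).2)
    obtain ⟨q, hq, hTq⟩ := ih ha
    exact ⟨a :: q, Nat.succ_le_succ hq, hTq⟩

end Flow

section PrefixWeight

variable {L : Type*} [DecidableEq L]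

/-- The total weight of the nodes on the path from the root to `q` in the tree of lists. -/
def prefixWeight (w : List L → ℝ) (q : List L) : ℝ := w [] + ∑ p ∈ nonnilPrefixes q, w p

theorem prefixWeight_nil (w : List L → ℝ) : prefixWeight w [] = w [] := by
  simp [prefixWeight]

theorem prefixWeight_cons (w : List L → ℝ) (a : L) (q : List L) :
    prefixWeight w (a :: q) = w [] + prefixWeight (w ∘ List.cons a) q := by
  rw [prefixWeight, nonnilPrefixes_cons, Finset.sum_insert (by simp [mem_nonnilPrefixes]),
    Finset.sum_image fun _ _ _ _ h => List.cons_injective h]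
  rfl

end PrefixWeight

section Cut

variable {L : Type*} [Fintype L] [DecidableEq L]

/-- The union over the labels `a` of the set `s a` of nodes hanging below the node `[a]`. -/
def consUnion (s : L → Finset (List L)) : Finset (List L) :=
  Finset.univ.biUnion fun a => (s a).image (List.cons a)

@[simp] theorem nil_notMem_consUnion {s : L → Finset (List L)} : [] ∉ consUnion s := by
  simp [consUnion]

@[simp] theorem cons_mem_consUnion {s : L → Finset (List L)} {a : L} {q : List L} :
    a :: q ∈ consUnion s ↔ q ∈ s a := by
  simp [consUnion]

theorem sum_consUnion {M : Type*} [AddCommMonoid M] (s : L → Finset (List L)) (f : List L → M) :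
    ∑ q ∈ consUnion s, f q = ∑ a, ∑ q ∈ s a, f (a :: q) := by
  rw [consUnion, Finset.sum_biUnion]
  · exact Finset.sum_congr rfl fun a _ => Finset.sum_image fun _ _ _ _ h => List.cons_injective h
  · intro a _ b _ hab
    simp only [Function.onFun, Finset.disjoint_left, Finset.mem_image]
    rintro _ ⟨p, -, rfl⟩ ⟨q, -, hqp⟩
    exact hab (List.cons.inj hqp).1.symm

variable (L) in
/-- The lists of length at most `d`, read as the nodes of a tree of height `d`. -/
def listsUpTo : ℕ → Finset (List L)
  | 0 => {[]}
  | d + 1 => insert [] (consUnion fun _ => listsUpTo d)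

theorem mem_listsUpTo {d : ℕ} {q : List L} : q ∈ listsUpTo L d ↔ q.length ≤ d := by
  induction d generalizing q with
  | zero => simp [listsUpTo]
  | succ d ih => cases q <;> simp [listsUpTo, ih]

theorem sum_listsUpTo_succ {M : Type*} [AddCommMonoid M] (d : ℕ) (f : List L → M) :
    ∑ q ∈ listsUpTo L (d + 1), f q = f [] + ∑ a, ∑ q ∈ listsUpTo L d, f (a :: q) := by
  rw [listsUpTo, Finset.sum_insert nil_notMem_consUnion, sum_consUnion]

variable (L) in
theorem card_listsUpTo_le (d : ℕ) : (listsUpTo L d).card ≤ (Fintype.card L + 1) ^ d := by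
  induction d with
  | zero => simp [listsUpTo]
  | succ d ih =>
    have hcard : (listsUpTo L (d + 1)).card = 1 + Fintype.card L * (listsUpTo L d).card := by
      simp_rw [Finset.card_eq_sum_ones (listsUpTo L _), sum_listsUpTo_succ]
      simp
    have hpos : 1 ≤ (Fintype.card L + 1) ^ d := Nat.one_le_pow _ _ (Nat.succ_pos _)
    rw [hcard, pow_succ']
    nlinarith

variable {d : ℕ} {x : List L → ℝ} {T : List L → Prop}

open Classical in
/-- A minimum cut for `treeFlow`: a set of nodes separating the root from the nodes that satisfy
`T`. -/
noncomputable def treeCut : ℕ → (List L → ℝ) → (List L → Prop) → Finset (List L)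
  | 0, _, T => if T [] then {[]} else ∅
  | d + 1, x, T => if T [] then {[]} else
      if x [] ≤ ∑ a, treeFlow d (x ∘ List.cons a) (T ∘ List.cons a) then {[]} else
        consUnion fun a => treeCut d (x ∘ List.cons a) (T ∘ List.cons a)

theorem treeCut_of_target (hT : T []) : treeCut d x T = {[]} := by
  cases d <;> exact if_pos hT

theorem treeCut_succ_of_le (hT : ¬ T [])
    (hx : x [] ≤ ∑ a, treeFlow d (x ∘ List.cons a) (T ∘ List.cons a)) :
    treeCut (d + 1) x T = {[]} := by
  rw [treeCut, if_neg hT, if_pos hx]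

theorem treeCut_succ_of_lt (hT : ¬ T [])
    (hx : ∑ a, treeFlow d (x ∘ List.cons a) (T ∘ List.cons a) < x []) :
    treeCut (d + 1) x T = consUnion fun a => treeCut d (x ∘ List.cons a) (T ∘ List.cons a) := by
  rw [treeCut, if_neg hT, if_neg hx.not_ge]

theorem sum_treeCut (d : ℕ) (x : List L → ℝ) (T : List L → Prop) :
    ∑ q ∈ treeCut d x T, x q = treeFlow d x T := by
  induction d generalizing x T with
  | zero => rw [treeCut, treeFlow]; split_ifs <;> simp
  | succ d ih =>
    by_cases hT : T []
    · rw [treeCut_of_target hT, treeFlow_of_target hT, Finset.sum_singleton]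
    rw [treeFlow_succ_of_not_target hT]
    rcases le_or_gt (x []) (∑ a, treeFlow d (x ∘ List.cons a) (T ∘ List.cons a)) with hx | hx
    · rw [treeCut_succ_of_le hT hx, min_eq_left hx, Finset.sum_singleton]
    · rw [treeCut_succ_of_lt hT hx, min_eq_right hx.le, sum_consUnion]
      exact Finset.sum_congr rfl fun a _ => ih _ _

theorem treeCut_subset_listsUpTo (d : ℕ) (x : List L → ℝ) (T : List L → Prop) :
    treeCut d x T ⊆ listsUpTo L d := by
  intro q hq
  rw [mem_listsUpTo]
  induction d generalizing x T q with
  | zero => rw [treeCut] at hq; split_ifs at hq <;> simp_all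
  | succ d ih =>
    rw [treeCut] at hq
    split_ifs at hq
    · simp_all
    · simp_all
    · cases q with
      | nil => exact Nat.zero_le _
      | cons a q => exact Nat.succ_le_succ (ih _ _ (cons_mem_consUnion.1 hq))

theorem exists_prefix_mem_treeCut (x : List L → ℝ) {q : List L} (hq : q.length ≤ d) (hT : T q) :
    ∃ p, p <+: q ∧ p ∈ treeCut d x T := by
  induction d generalizing x T q with
  | zero =>
    obtain rfl := List.length_eq_zero_iff.1 (Nat.le_zero.1 hq)
    exact ⟨[], List.prefix_rfl, by simp [treeCut_of_target hT]⟩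
  | succ d ih =>
    by_cases hroot : T []
    · exact ⟨[], List.nil_prefix, by simp [treeCut_of_target hroot]⟩
    rcases le_or_gt (x []) (∑ a, treeFlow d (x ∘ List.cons a) (T ∘ List.cons a)) with hx | hx
    · exact ⟨[], List.nil_prefix, by simp [treeCut_succ_of_le hroot hx]⟩
    · obtain ⟨a, q, rfl⟩ := List.exists_cons_of_ne_nil fun h => hroot (h ▸ hT)
      obtain ⟨p, hpq, hp⟩ := ih (T := T ∘ List.cons a) (x ∘ List.cons a)
        (Nat.le_of_succ_le_succ hq) hT
      exact ⟨a :: p, List.cons_prefix_cons.2 ⟨rfl, hpq⟩,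
        by rwa [treeCut_succ_of_lt hroot hx, cons_mem_consUnion]⟩

theorem mul_treeFlow_le_sum {w : List L → ℝ} (hx : ∀ q, 0 ≤ x q) (hw : ∀ q, 0 ≤ w q) {D : ℝ}
    (hD : ∀ q, q.length ≤ d → T q → D ≤ prefixWeight w q) :
    D * treeFlow d x T ≤ ∑ q ∈ listsUpTo L d, w q * x q := by
  induction d generalizing x w T D with
  | zero =>
    rw [listsUpTo, Finset.sum_singleton]
    by_cases hT : T []
    · rw [treeFlow_of_target hT]
      exact mul_le_mul_of_nonneg_right (prefixWeight_nil w ▸ hD [] le_rfl hT) (hx _)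
    · rw [treeFlow_zero_of_not_target hT, mul_zero]
      exact mul_nonneg (hw _) (hx _)
  | succ d ih =>
    rw [sum_listsUpTo_succ]
    have hbelow : 0 ≤ ∑ a : L, ∑ q ∈ listsUpTo L d, w (a :: q) * x (a :: q) :=
      Finset.sum_nonneg fun a _ => Finset.sum_nonneg fun q _ => mul_nonneg (hw _) (hx _)
    have hroot : w [] * treeFlow (d + 1) x T ≤ w [] * x [] :=
      mul_le_mul_of_nonneg_left (treeFlow_le _ hx T) (hw _)
    by_cases hD' : D ≤ w []
    · have := mul_le_mul_of_nonneg_right hD' (treeFlow_nonneg (d + 1) hx T)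
      linarith
    have hT : ¬ T [] := fun hT => hD' (prefixWeight_nil w ▸ hD [] (Nat.zero_le _) hT)
    have hchild : (D - w []) * ∑ a, treeFlow d (x ∘ List.cons a) (T ∘ List.cons a) ≤
        ∑ a : L, ∑ q ∈ listsUpTo L d, w (a :: q) * x (a :: q) := by
      rw [Finset.mul_sum]
      refine Finset.sum_le_sum fun a _ =>
        ih (fun q => hx _) (w := w ∘ List.cons a) (fun q => hw _) fun q hq hTq => ?_
      have := hD (a :: q) (Nat.succ_le_succ hq) hTq
      rw [prefixWeight_cons] at this
      linarith
    have hflow := mul_le_mul_of_nonneg_left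
      ((treeFlow_succ_of_not_target (x := x) (d := d) hT).trans_le (min_le_right _ _))
      (sub_nonneg.2 (not_le.1 hD').le)
    linarith

end Cut

section LevelCap

/-- The capacity of a node at level `l` out of `J`: it doubles with every level, up to `1` at
level `J`. -/
noncomputable def levelCap (J l : ℕ) : ℝ := if l = 0 then 0 else 2 ^ l / 2 ^ J

theorem levelCap_nonneg (J l : ℕ) : 0 ≤ levelCap J l := by
  unfold levelCap; split_ifs <;> positivity

theorem levelCap_self {J : ℕ} (hJ : J ≠ 0) : levelCap J J = 1 := by
  rw [levelCap, if_neg hJ, div_self (by positivity)]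

theorem levelCap_mono (J : ℕ) : Monotone (levelCap J) := by
  intro l l' hl
  rcases Nat.eq_zero_or_pos l with rfl | hpos
  · exact (if_pos rfl).trans_le (levelCap_nonneg J l')
  · rw [levelCap, levelCap, if_neg hpos.ne', if_neg (hpos.trans_le hl).ne']
    have : (2 : ℝ) ^ l ≤ 2 ^ l' := pow_le_pow_right₀ one_le_two hl
    gcongr

theorem pow_div_le_levelCap_add (J l : ℕ) : (2 : ℝ) ^ l / 2 ^ J ≤ levelCap J l + 1 / 2 ^ J := by
  unfold levelCap
  split_ifs with hl
  · simp [hl]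
  · exact le_add_of_nonneg_right (by positivity)

/-- The last `k` terms before `l * k` are each half of the capacity at level `l`. -/
theorem mul_levelCap_le {k u l : ℕ} (J : ℕ) (hl : l * k ≤ u) :
    k * levelCap J l ≤ 2 * ∑ v ∈ Finset.range u, (2 : ℝ) ^ (v / k) / 2 ^ J := by
  have hterm : ∀ v, 0 ≤ (2 : ℝ) ^ (v / k) / 2 ^ J := fun v => by positivity
  obtain _ | l := l
  · simpa [levelCap] using Finset.sum_nonneg fun v _ => hterm v
  rcases Nat.eq_zero_or_pos k with rfl | hk
  · simp
  have hsub : Finset.Ico (l * k) ((l + 1) * k) ⊆ Finset.range u := fun v hv =>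
    Finset.mem_range.2 ((Finset.mem_Ico.1 hv).2.trans_le hl)
  have hge : ∀ v ∈ Finset.Ico (l * k) ((l + 1) * k),
      (2 : ℝ) ^ l / 2 ^ J ≤ 2 ^ (v / k) / 2 ^ J := fun v hv => by
    have : (2 : ℝ) ^ l ≤ 2 ^ (v / k) := pow_le_pow_right₀ one_le_two
      ((Nat.le_div_iff_mul_le hk).2 (Finset.mem_Ico.1 hv).1)
    gcongr
  calc k * levelCap J (l + 1) = 2 * (k • ((2 : ℝ) ^ l / 2 ^ J)) := by
        rw [levelCap, if_neg l.succ_ne_zero, nsmul_eq_mul, pow_succ]; ring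
    _ ≤ 2 * ∑ v ∈ Finset.Ico (l * k) ((l + 1) * k), (2 : ℝ) ^ (v / k) / 2 ^ J := by
        have := Finset.card_nsmul_le_sum _ _ _ hge
        rw [Nat.card_Ico, ← Nat.sub_mul, Nat.add_sub_cancel_left, one_mul] at this
        exact mul_le_mul_of_nonneg_left this zero_le_two
    _ ≤ 2 * ∑ v ∈ Finset.range u, (2 : ℝ) ^ (v / k) / 2 ^ J :=
        mul_le_mul_of_nonneg_left
          (Finset.sum_le_sum_of_subset_of_nonneg hsub fun v _ _ => hterm v) zero_le_two

end LevelCap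

/-- A forest whose nodes are the label lists `q` of length at most `height` below each root `r`.
The node `q` below `r` has an integer cost, is at an integer distance `len r q` from `r`, and
represents the vertex `endpt r q`. The online algorithm works with `levels` capacity levels. -/
structure LayeredForest (R L V : Type*) where
  height : ℕ
  levels : ℕ
  cost : R → List L → ℕ
  len : R → List L → ℕ
  endpt : R → List L → V
  cost_nil : ∀ r, cost r [] = 0
  levels_ne_zero : levels ≠ 0

namespace LayeredForest

variable {R L V : Type*} (D : LayeredForest R L V)

/-- The level of a node whose counter is `u r q`: the level increases whenever the counter has
increased by the cost of the node. -/
def level (u : R → List L → ℕ) (r : R) (q : List L) : ℕ :=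
  if D.cost r q = 0 then D.levels else min D.levels (u r q / D.cost r q)

/-- The node `q` below `r` represents `s` within distance `m`. -/
def IsTarget (s : V) (m : ℕ) (r : R) (q : List L) : Prop := D.endpt r q = s ∧ D.len r q ≤ m

/-- A route that connects `s` to `t` within distance `m` on both sides. -/
structure IsValidRoute (s t : V) (m : ℕ) (ρ : Route R L) : Prop where
  left_length_le : ρ.left.length ≤ D.height
  right_length_le : ρ.right.length ≤ D.height
  left_isTarget : D.IsTarget s m ρ.root ρ.left
  right_isTarget : D.IsTarget t m ρ.root ρ.right

theorem IsValidRoute.mono {D : LayeredForest R L V} {s t : V} {m m' : ℕ} {ρ : Route R L}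
    (hρ : D.IsValidRoute s t m ρ) (hm : m ≤ m') : D.IsValidRoute s t m' ρ where
  left_length_le := hρ.left_length_le
  right_length_le := hρ.right_length_le
  left_isTarget := ⟨hρ.left_isTarget.1, hρ.left_isTarget.2.trans hm⟩
  right_isTarget := ⟨hρ.right_isTarget.1, hρ.right_isTarget.2.trans hm⟩

/-- The capacity of a node, determined by its level. -/
noncomputable def cap (u : R → List L → ℕ) (r : R) (q : List L) : ℝ :=
  levelCap D.levels (D.level u r q)

/-- The counters never exceed the values at which all nodes have reached the last level. -/
def IsBounded (u : R → List L → ℕ) : Prop := ∀ r q, u r q ≤ D.levels * D.cost r q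

theorem level_mono (r : R) (q : List L) : Monotone fun u => D.level u r q := by
  intro u u' hu
  unfold level
  split_ifs
  · exact le_rfl
  · exact min_le_min_left _ (Nat.div_le_div_right (hu r q))

theorem level_le (u : R → List L → ℕ) (r : R) (q : List L) : D.level u r q ≤ D.levels := by
  unfold level
  split_ifs
  · exact le_rfl
  · exact min_le_left _ _

theorem level_mul_cost_le (u : R → List L → ℕ) (r : R) (q : List L) :
    D.level u r q * D.cost r q ≤ u r q := by
  rcases eq_or_ne (D.cost r q) 0 with hcost | hcost
  · simp [hcost]
  · rw [level, if_neg hcost]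
    exact (Nat.mul_le_mul_right _ (min_le_right _ _)).trans (Nat.div_mul_le_self _ _)

theorem cap_nonneg (u : R → List L → ℕ) (r : R) (q : List L) : 0 ≤ D.cap u r q :=
  levelCap_nonneg _ _

section Flow

variable [Fintype L]

/-- The maximum flow from the root `r` to the nodes that represent `s` within distance `m`. -/
noncomputable def flowTo (u : R → List L → ℕ) (s : V) (m : ℕ) (r : R) : ℝ :=
  treeFlow D.height (D.cap u r) (D.IsTarget s m r)

theorem flowTo_nonneg (u : R → List L → ℕ) (s : V) (m : ℕ) (r : R) : 0 ≤ D.flowTo u s m r :=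
  treeFlow_nonneg _ (D.cap_nonneg u r) _

/-- The fractional connectivity of `s` and `t` within distance `m` from the roots. -/
noncomputable def flow [Fintype R] (u : R → List L → ℕ) (s t : V) (m : ℕ) : ℝ :=
  ∑ r, min (D.flowTo u s m r) (D.flowTo u t m r)

variable [DecidableEq L]

/-- The cost of the current fractional solution. -/
noncomputable def fracCost [Fintype R] (u : R → List L → ℕ) : ℝ :=
  ∑ r, ∑ q ∈ listsUpTo L D.height, (D.cost r q : ℝ) * D.cap u r q

/-- The potential that grows by a bounded amount in each step of the fractional algorithm. -/
noncomputable def potential [Fintype R] (u : R → List L → ℕ) : ℝ :=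
  ∑ r, ∑ q ∈ listsUpTo L D.height,
    ∑ v ∈ Finset.range (u r q), (2 : ℝ) ^ (v / D.cost r q) / 2 ^ D.levels

theorem fracCost_nonneg [Fintype R] (u : R → List L → ℕ) : 0 ≤ D.fracCost u :=
  Finset.sum_nonneg fun r _ => Finset.sum_nonneg fun q _ =>
    mul_nonneg (Nat.cast_nonneg _) (D.cap_nonneg u r q)

theorem fracCost_mono [Fintype R] : Monotone D.fracCost := fun _ _ hu =>
  Finset.sum_le_sum fun r _ => Finset.sum_le_sum fun q _ =>
    mul_le_mul_of_nonneg_left (levelCap_mono _ (D.level_mono r q hu)) (Nat.cast_nonneg _)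

theorem fracCost_le_two_mul_potential [Fintype R] (u : R → List L → ℕ) :
    D.fracCost u ≤ 2 * D.potential u := by
  simp_rw [fracCost, potential, Finset.mul_sum _ _ (2 : ℝ)]
  refine Finset.sum_le_sum fun r _ => Finset.sum_le_sum fun q _ => ?_
  rw [← Finset.mul_sum]
  exact mul_levelCap_le _ (D.level_mul_cost_le u r q)

open Classical in
/-- A minimum cut for the smaller one of the two flows from `r`. -/
noncomputable def cut (u : R → List L → ℕ) (s t : V) (m : ℕ) (r : R) : Finset (List L) :=
  if D.flowTo u s m r ≤ D.flowTo u t m r then treeCut D.height (D.cap u r) (D.IsTarget s m r)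
  else treeCut D.height (D.cap u r) (D.IsTarget t m r)

theorem sum_cut (u : R → List L → ℕ) (s t : V) (m : ℕ) (r : R) :
    ∑ q ∈ D.cut u s t m r, D.cap u r q = min (D.flowTo u s m r) (D.flowTo u t m r) := by
  unfold cut
  split_ifs with h
  · rw [min_eq_left h, sum_treeCut, flowTo]
  · rw [min_eq_right (not_le.1 h).le, sum_treeCut, flowTo]

theorem cut_subset_listsUpTo (u : R → List L → ℕ) (s t : V) (m : ℕ) (r : R) :
    D.cut u s t m r ⊆ listsUpTo L D.height := by
  unfold cut
  split_ifs <;> exact treeCut_subset_listsUpTo _ _ _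

theorem exists_mem_cut (u : R → List L → ℕ) {s t : V} {m : ℕ} {ρ : Route R L}
    (hρ : D.IsValidRoute s t m ρ) :
    ∃ p, (p <+: ρ.left ∨ p <+: ρ.right) ∧ p ∈ D.cut u s t m ρ.root := by
  unfold cut
  split_ifs
  · obtain ⟨p, hp, hcut⟩ :=
      exists_prefix_mem_treeCut (D.cap u ρ.root) hρ.left_length_le hρ.left_isTarget
    exact ⟨p, .inl hp, hcut⟩
  · obtain ⟨p, hp, hcut⟩ :=
      exists_prefix_mem_treeCut (D.cap u ρ.root) hρ.right_length_le hρ.right_isTarget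
    exact ⟨p, .inr hp, hcut⟩

end Flow

section Raise

variable [Fintype L] [DecidableEq L]

/-- Raise the counters on the minimum cuts by one. -/
noncomputable def raise (u : R → List L → ℕ) (s t : V) (m : ℕ) (r : R) (q : List L) : ℕ :=
  u r q + if q ∈ D.cut u s t m r then 1 else 0

theorem le_raise (u : R → List L → ℕ) (s t : V) (m : ℕ) : u ≤ D.raise u s t m :=
  fun _ _ => Nat.le_add_right _ _

variable [Fintype R] {u : R → List L → ℕ} {s t : V} {m : ℕ}

theorem level_lt_of_mem_cut (hflow : D.flow u s t m < 1) {r : R} {q : List L}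
    (hq : q ∈ D.cut u s t m r) : D.level u r q < D.levels := by
  refine (D.level_le u r q).lt_of_ne fun hlevel => hflow.not_ge ?_
  calc 1 = D.cap u r q := by rw [cap, hlevel, levelCap_self D.levels_ne_zero]
    _ ≤ ∑ q ∈ D.cut u s t m r, D.cap u r q :=
        Finset.single_le_sum (fun q _ => D.cap_nonneg u r q) hq
    _ ≤ D.flow u s t m := by
        rw [sum_cut]
        exact Finset.single_le_sum (f := fun r => min (D.flowTo u s m r) (D.flowTo u t m r))
          (fun r _ => le_min (D.flowTo_nonneg u s m r) (D.flowTo_nonneg u t m r))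
          (Finset.mem_univ r)

theorem cost_ne_zero_of_mem_cut (hflow : D.flow u s t m < 1) {r : R} {q : List L}
    (hq : q ∈ D.cut u s t m r) : D.cost r q ≠ 0 := fun hcost =>
  (D.level_lt_of_mem_cut hflow hq).ne (if_pos hcost)

theorem level_eq_of_mem_cut (hflow : D.flow u s t m < 1) {r : R} {q : List L}
    (hq : q ∈ D.cut u s t m r) : D.level u r q = u r q / D.cost r q := by
  have hlt := D.level_lt_of_mem_cut hflow hq
  rw [level, if_neg (D.cost_ne_zero_of_mem_cut hflow hq)] at hlt ⊢
  exact min_eq_right (le_of_not_ge fun h => hlt.ne (min_eq_left h))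

theorem IsBounded.raise {D : LayeredForest R L V} (hu : D.IsBounded u)
    (hflow : D.flow u s t m < 1) : D.IsBounded (D.raise u s t m) := by
  intro r q
  unfold LayeredForest.raise
  split_ifs with hq
  · have hlt := D.level_lt_of_mem_cut hflow hq
    rw [D.level_eq_of_mem_cut hflow hq, Nat.div_lt_iff_lt_mul
      (Nat.pos_of_ne_zero (D.cost_ne_zero_of_mem_cut hflow hq))] at hlt
    exact hlt
  · exact hu r q

theorem potential_raise_le (hflow : D.flow u s t m < 1)
    (hcard : Fintype.card R * (listsUpTo L D.height).card ≤ 2 ^ D.levels) :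
    D.potential (D.raise u s t m) ≤ D.potential u + 2 := by
  have hnode : ∀ r q, ∑ v ∈ Finset.range (D.raise u s t m r q),
        (2 : ℝ) ^ (v / D.cost r q) / 2 ^ D.levels ≤
      ∑ v ∈ Finset.range (u r q), (2 : ℝ) ^ (v / D.cost r q) / 2 ^ D.levels +
        ((if q ∈ D.cut u s t m r then D.cap u r q else 0) + 1 / 2 ^ D.levels) := by
    intro r q
    unfold raise
    split_ifs with hq
    · rw [Finset.sum_range_succ, cap, D.level_eq_of_mem_cut hflow hq]
      exact add_le_add_right (pow_div_le_levelCap_add _ _) _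
    · rw [add_zero, zero_add]
      exact le_add_of_nonneg_right (by positivity)
  have hcut : ∀ r, ∑ q ∈ listsUpTo L D.height,
      (if q ∈ D.cut u s t m r then D.cap u r q else 0) =
        min (D.flowTo u s m r) (D.flowTo u t m r) := fun r => by
    rw [← sum_cut, Finset.sum_ite_mem,
      Finset.inter_eq_right.2 (D.cut_subset_listsUpTo u s t m r)]
  have hsmall : ((Fintype.card R * (listsUpTo L D.height).card : ℕ) : ℝ) * (1 / 2 ^ D.levels) ≤
      1 := by
    rw [mul_one_div, div_le_one (by positivity)]
    exact_mod_cast hcard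
  calc D.potential (D.raise u s t m)
      ≤ D.potential u + (D.flow u s t m +
          (Fintype.card R * (listsUpTo L D.height).card : ℕ) * (1 / 2 ^ D.levels)) := by
        refine (Finset.sum_le_sum fun r _ => Finset.sum_le_sum fun q _ => hnode r q).trans_eq ?_
        simp only [Finset.sum_add_distrib, hcut, Finset.sum_const, Finset.card_univ, nsmul_eq_mul,
          Nat.cast_mul, potential, flow]
        ring
    _ ≤ D.potential u + 2 := by linarith

theorem sum_lt_sum_raise (hflow : D.flow u s t m < 1) {ρ : Route R L}
    (hρ : D.IsValidRoute s t m ρ) {S : Finset (R × List L)} (hS : ρ.nodes ⊆ S) :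
    ∑ z ∈ S, u z.1 z.2 < ∑ z ∈ S, D.raise u s t m z.1 z.2 := by
  obtain ⟨p, hp, hcut⟩ := D.exists_mem_cut u hρ
  have hne : p ≠ [] := by
    rintro rfl
    exact D.cost_ne_zero_of_mem_cut hflow hcut (D.cost_nil _)
  refine Finset.sum_lt_sum (fun z _ => D.le_raise u s t m z.1 z.2)
    ⟨(ρ.root, p), hS (Route.mem_nodes.2 ⟨rfl, hne, hp⟩), ?_⟩
  simp [raise, hcut]

end Raise

section RaiseIter

variable [Fintype L] [DecidableEq L]

/-- Raise the counters for the distances `0, …, m - 1` one after the other. -/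
noncomputable def raiseIter (u : R → List L → ℕ) (s t : V) : ℕ → R → List L → ℕ
  | 0 => u
  | m + 1 => D.raise (raiseIter u s t m) s t m

theorem raiseIter_mono (u : R → List L → ℕ) (s t : V) : Monotone (D.raiseIter u s t) :=
  monotone_nat_of_le_succ fun m => D.le_raise (D.raiseIter u s t m) s t m

variable [Fintype R] {u : R → List L → ℕ} {s t : V} {m : ℕ}

theorem IsBounded.raiseIter {D : LayeredForest R L V} (hu : D.IsBounded u)
    (hflow : ∀ i < m, D.flow (D.raiseIter u s t i) s t i < 1) :
    D.IsBounded (D.raiseIter u s t m) := by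
  induction m with
  | zero => exact hu
  | succ m ih =>
    exact (ih fun i hi => hflow i (Nat.lt_succ_of_lt hi)).raise (hflow m m.lt_succ_self)

theorem potential_raiseIter_le (hflow : ∀ i < m, D.flow (D.raiseIter u s t i) s t i < 1)
    (hcard : Fintype.card R * (listsUpTo L D.height).card ≤ 2 ^ D.levels) :
    D.potential (D.raiseIter u s t m) ≤ D.potential u + 2 * m := by
  induction m with
  | zero => simp [raiseIter]
  | succ m ih =>
    have hprev := ih fun i hi => hflow i (Nat.lt_succ_of_lt hi)
    have hraise := D.potential_raise_le (hflow m m.lt_succ_self) hcard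
    rw [raiseIter]
    push_cast
    linarith

theorem add_sum_le_add_sum_raiseIter (hflow : ∀ i < m, D.flow (D.raiseIter u s t i) s t i < 1)
    {M : ℕ} {ρ : Route R L} (hρ : D.IsValidRoute s t M ρ) {S : Finset (R × List L)}
    (hS : ρ.nodes ⊆ S) :
    m + ∑ z ∈ S, u z.1 z.2 ≤ M + ∑ z ∈ S, D.raiseIter u s t m z.1 z.2 := by
  induction m with
  | zero => simp [raiseIter]
  | succ m ih =>
    rcases lt_or_ge m M with hm | hm
    · exact Nat.add_le_add hm
        (Finset.sum_le_sum fun z _ => D.raiseIter_mono u s t (Nat.zero_le (m + 1)) z.1 z.2)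
    · have hprev := ih fun i hi => hflow i (Nat.lt_succ_of_lt hi)
      have hraise := D.sum_lt_sum_raise (hflow m m.lt_succ_self) (hρ.mono hm) hS
      rw [raiseIter]
      lia

/-- The distance budget at which the fractional algorithm stops. -/
noncomputable def halt (u : R → List L → ℕ) (s t : V) : ℕ :=
  sInf {m | 1 ≤ D.flow (D.raiseIter u s t m) s t m}

theorem flow_lt_one_of_lt_halt (hm : m < D.halt u s t) :
    D.flow (D.raiseIter u s t m) s t m < 1 :=
  not_le.1 (Nat.notMem_of_lt_sInf hm)

theorem one_le_flow_halt (hu : D.IsBounded u) {ρ : Route R L} (hρ : D.IsValidRoute s t m ρ) :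
    1 ≤ D.flow (D.raiseIter u s t (D.halt u s t)) s t (D.halt u s t) := by
  refine Nat.sInf_mem (s := {m | 1 ≤ D.flow (D.raiseIter u s t m) s t m}) ?_
  by_contra hempty
  have hflow : ∀ i, D.flow (D.raiseIter u s t i) s t i < 1 := fun i =>
    not_le.1 fun hi => hempty ⟨i, hi⟩
  let bound := ∑ z ∈ ρ.nodes, D.levels * D.cost z.1 z.2
  have hlarge := D.add_sum_le_add_sum_raiseIter (m := m + bound + 1) (fun i _ => hflow i) hρ
    subset_rfl
  have hsmall : ∑ z ∈ ρ.nodes, D.raiseIter u s t (m + bound + 1) z.1 z.2 ≤ bound :=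
    Finset.sum_le_sum fun z _ => hu.raiseIter (fun i _ => hflow i) z.1 z.2
  lia

end RaiseIter

section State

variable [Fintype R] [Fintype L] [DecidableEq L]

/-- The counters of the fractional algorithm after the requests `X`, together with the distance
budget of the last request. -/
noncomputable def state (X : List (V × V)) : (R → List L → ℕ) × ℕ :=
  X.foldl (fun σ x => (D.raiseIter σ.1 x.1 x.2 (D.halt σ.1 x.1 x.2), D.halt σ.1 x.1 x.2))
    (fun _ _ => 0, 0)

/-- The counters of the fractional algorithm after the requests `X`. -/
noncomputable def counters (X : List (V × V)) : R → List L → ℕ := (D.state X).1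

/-- The distance budget of the last request in `X`. -/
noncomputable def budget (X : List (V × V)) : ℕ := (D.state X).2

theorem counters_nil : D.counters [] = 0 := rfl

theorem counters_append_singleton (X : List (V × V)) (x : V × V) :
    D.counters (X ++ [x]) = D.raiseIter (D.counters X) x.1 x.2 (D.budget (X ++ [x])) := by
  simp [counters, budget, state]

theorem budget_append_singleton (X : List (V × V)) (x : V × V) :
    D.budget (X ++ [x]) = D.halt (D.counters X) x.1 x.2 := by
  simp [counters, budget, state]

theorem flow_lt_one_of_lt_budget {X : List (V × V)} {x : V × V} {m : ℕ}
    (hm : m < D.budget (X ++ [x])) :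
    D.flow (D.raiseIter (D.counters X) x.1 x.2 m) x.1 x.2 m < 1 :=
  D.flow_lt_one_of_lt_halt (hm.trans_eq (D.budget_append_singleton X x))

theorem isBounded_counters (X : List (V × V)) : D.IsBounded (D.counters X) := by
  induction X using List.reverseRecOn with
  | nil => exact fun r q => Nat.zero_le _
  | append_singleton X x ih =>
    rw [counters_append_singleton]
    exact ih.raiseIter fun i hi => D.flow_lt_one_of_lt_budget hi

theorem one_le_flow_counters (X : List (V × V)) {x : V × V} {m : ℕ} {ρ : Route R L}
    (hρ : D.IsValidRoute x.1 x.2 m ρ) :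
    1 ≤ D.flow (D.counters (X ++ [x])) x.1 x.2 (D.budget (X ++ [x])) := by
  rw [counters_append_singleton, budget_append_singleton]
  exact D.one_le_flow_halt (D.isBounded_counters X) hρ

theorem counters_take_mono (X : List (V × V)) : Monotone fun i => D.counters (X.take i) := by
  refine monotone_nat_of_le_succ fun i => ?_
  rcases lt_or_ge i X.length with hi | hi
  · rw [List.take_succ_eq_append_getElem hi, counters_append_singleton]
    exact D.raiseIter_mono _ _ _ (Nat.zero_le _)
  · rw [List.take_of_length_le hi, List.take_of_length_le (hi.trans i.le_succ)]

theorem potential_counters_le (X : List (V × V))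
    (hcard : Fintype.card R * (listsUpTo L D.height).card ≤ 2 ^ D.levels) :
    D.potential (D.counters X) ≤
      2 * ∑ i : Fin X.length, (D.budget (X.take (i + 1)) : ℝ) := by
  have hstep : ∀ i ∈ Finset.range X.length,
      D.potential (D.counters (X.take (i + 1))) - D.potential (D.counters (X.take i)) ≤
        2 * (D.budget (X.take (i + 1)) : ℝ) := fun i hi => by
    rw [List.take_succ_eq_append_getElem (Finset.mem_range.1 hi), counters_append_singleton,
      sub_le_iff_le_add']
    exact D.potential_raiseIter_le (fun j hj => D.flow_lt_one_of_lt_budget hj) hcard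
  have hsum := Finset.sum_le_sum hstep
  have hzero : D.potential (D.counters []) = 0 := by simp [counters_nil, potential]
  rw [Finset.sum_range_sub fun i => D.potential (D.counters (X.take i)), List.take_length,
    List.take_zero, hzero, sub_zero, ← Finset.mul_sum] at hsum
  rwa [Fin.sum_univ_eq_sum_range fun i => (D.budget (X.take (i + 1)) : ℝ)]

theorem fracCost_counters_le (X : List (V × V))
    (hcard : Fintype.card R * (listsUpTo L D.height).card ≤ 2 ^ D.levels) :
    D.fracCost (D.counters X) ≤ 4 * ∑ i : Fin X.length, (D.budget (X.take (i + 1)) : ℝ) := by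
  have hfrac := D.fracCost_le_two_mul_potential (D.counters X)
  have hpotential := D.potential_counters_le X hcard
  linarith

theorem sum_budget_le {X : List (V × V)} {M : Fin X.length → ℕ} {ρ : Fin X.length → Route R L}
    (hρ : ∀ i, D.IsValidRoute (X.get i).1 (X.get i).2 (M i) (ρ i)) {S : Finset (R × List L)}
    (hS : ∀ i, (ρ i).nodes ⊆ S) :
    ∑ i : Fin X.length, D.budget (X.take (i + 1)) ≤
      ∑ i, M i + D.levels * ∑ z ∈ S, D.cost z.1 z.2 := by
  let total (i : ℕ) : ℕ := ∑ z ∈ S, D.counters (X.take i) z.1 z.2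
  have hstep : ∀ i : Fin X.length, D.budget (X.take (i + 1)) + total i ≤ M i + total (i + 1) := by
    intro i
    simp only [total]
    rw [List.take_succ_eq_append_getElem i.2, counters_append_singleton]
    exact D.add_sum_le_add_sum_raiseIter (fun j hj => D.flow_lt_one_of_lt_budget hj) (hρ i) (hS i)
  have hsum := Finset.sum_le_sum (s := Finset.univ) fun i _ => hstep i
  rw [Finset.sum_add_distrib, Finset.sum_add_distrib, Fin.sum_univ_eq_sum_range total,
    Fin.sum_univ_eq_sum_range fun i => total (i + 1)] at hsum
  have htelescope := (Finset.sum_range_succ total X.length).symm.trans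
    (Finset.sum_range_succ' total X.length)
  have hzero : total 0 = 0 := by simp [total, counters_nil]
  have hfinal : total X.length ≤ D.levels * ∑ z ∈ S, D.cost z.1 z.2 := by
    rw [Finset.mul_sum]
    exact Finset.sum_le_sum fun z _ => D.isBounded_counters _ z.1 z.2
  lia

end State

section CheapRoute

variable [DecidableEq L]

theorem prefixWeight_cost (r : R) (q : List L) :
    prefixWeight (fun q => (D.cost r q : ℝ)) q = ∑ p ∈ nonnilPrefixes q, (D.cost r p : ℝ) := by
  simp [prefixWeight, D.cost_nil]

theorem sum_nodes_le_prefixWeight_add (ρ : Route R L) :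
    ∑ z ∈ ρ.nodes, (D.cost z.1 z.2 : ℝ) ≤
      prefixWeight (fun q => (D.cost ρ.root q : ℝ)) ρ.left +
        prefixWeight (fun q => (D.cost ρ.root q : ℝ)) ρ.right := by
  rw [prefixWeight_cost, prefixWeight_cost, Route.nodes, Finset.sum_product,
    Finset.sum_singleton]
  exact sum_union_le (fun q => Nat.cast_nonneg _) _ _

variable [Fintype L] {u : R → List L → ℕ} {s t : V} {m : ℕ}

theorem exists_isTarget_mul_flowTo_le {r : R} (hpos : 0 < D.flowTo u s m r) :
    ∃ q, q.length ≤ D.height ∧ D.IsTarget s m r q ∧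
      prefixWeight (fun q => (D.cost r q : ℝ)) q * D.flowTo u s m r ≤
        ∑ q ∈ listsUpTo L D.height, (D.cost r q : ℝ) * D.cap u r q := by
  classical
  obtain ⟨q₀, hq₀, hT₀⟩ := exists_target_of_treeFlow_pos hpos
  obtain ⟨q, hq, hmin⟩ := Finset.exists_min_image {q ∈ listsUpTo L D.height | D.IsTarget s m r q}
    (prefixWeight fun q => (D.cost r q : ℝ))
    ⟨q₀, Finset.mem_filter.2 ⟨mem_listsUpTo.2 hq₀, hT₀⟩⟩
  rw [Finset.mem_filter, mem_listsUpTo] at hq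
  exact ⟨q, hq.1, hq.2, mul_treeFlow_le_sum (D.cap_nonneg u r) (fun q => Nat.cast_nonneg _)
    fun p hp hT => hmin p (Finset.mem_filter.2 ⟨mem_listsUpTo.2 hp, hT⟩)⟩

variable [Fintype R]

theorem exists_root_fracCost_le (hflow : 1 ≤ D.flow u s t m) :
    ∃ r, 0 < min (D.flowTo u s m r) (D.flowTo u t m r) ∧
      ∑ q ∈ listsUpTo L D.height, (D.cost r q : ℝ) * D.cap u r q ≤
        D.fracCost u * min (D.flowTo u s m r) (D.flowTo u t m r) := by
  classical
  let y (r : R) : ℝ := min (D.flowTo u s m r) (D.flowTo u t m r)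
  let f (r : R) : ℝ := ∑ q ∈ listsUpTo L D.height, (D.cost r q : ℝ) * D.cap u r q
  have hf : ∀ r, 0 ≤ f r := fun r => Finset.sum_nonneg fun q _ =>
    mul_nonneg (Nat.cast_nonneg _) (D.cap_nonneg u r q)
  have hy : ∑ r with 0 < y r, y r = D.flow u s t m :=
    Finset.sum_filter_of_ne fun r _ hr =>
      (le_min (D.flowTo_nonneg u s m r) (D.flowTo_nonneg u t m r)).lt_of_ne' hr
  have hne : ({r | 0 < y r} : Finset R).Nonempty := by
    refine Finset.nonempty_of_sum_ne_zero (f := y) ?_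
    rw [hy]
    exact (one_pos.trans_le hflow).ne'
  obtain ⟨r, hr, hfr⟩ : ∃ r ∈ ({r | 0 < y r} : Finset R), f r ≤ D.fracCost u * y r := by
    refine Finset.exists_le_of_sum_le hne ?_
    rw [← Finset.mul_sum, hy]
    exact (Finset.sum_le_univ_sum_of_nonneg hf).trans
      (le_mul_of_one_le_right (Finset.sum_nonneg fun r _ => hf r) hflow)
  exact ⟨r, (Finset.mem_filter.1 hr).2, hfr⟩

theorem exists_isValidRoute_of_one_le_flow (hflow : 1 ≤ D.flow u s t m) :
    ∃ ρ, D.IsValidRoute s t m ρ ∧ ∑ z ∈ ρ.nodes, (D.cost z.1 z.2 : ℝ) ≤ 2 * D.fracCost u := by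
  obtain ⟨r, hpos, hr⟩ := D.exists_root_fracCost_le hflow
  have hcheap : ∀ v, min (D.flowTo u s m r) (D.flowTo u t m r) ≤ D.flowTo u v m r →
      ∃ q, q.length ≤ D.height ∧ D.IsTarget v m r q ∧
        prefixWeight (fun q => (D.cost r q : ℝ)) q ≤ D.fracCost u := by
    intro v hv
    obtain ⟨q, hq, hT, hcost⟩ := D.exists_isTarget_mul_flowTo_le (hpos.trans_le hv)
    refine ⟨q, hq, hT, le_of_mul_le_mul_right ?_ hpos⟩
    refine (mul_le_mul_of_nonneg_left hv ?_).trans (hcost.trans hr)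
    rw [prefixWeight_cost]
    exact Finset.sum_nonneg fun p _ => Nat.cast_nonneg _
  obtain ⟨a, ha, haT, hacost⟩ := hcheap s (min_le_left _ _)
  obtain ⟨b, hb, hbT, hbcost⟩ := hcheap t (min_le_right _ _)
  refine ⟨⟨r, a, b⟩, ⟨ha, hb, haT, hbT⟩, (D.sum_nodes_le_prefixWeight_add _).trans ?_⟩
  dsimp only
  linarith

end CheapRoute

end LayeredForest

section UniformProb

variable {α β ι κ : Type*} [Fintype α] [Fintype β]

open Classical in
/-- The probability of an event under the uniform distribution on a finite type. -/
noncomputable def uniformProb (A : α → Prop) : ℝ :=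
  (Finset.univ.filter A).card / Fintype.card α

theorem uniformProb_eq (A : α → Prop) [DecidablePred A] :
    uniformProb A = (Finset.univ.filter A).card / Fintype.card α := by
  unfold uniformProb; congr

theorem uniformProb_nonneg (A : α → Prop) : 0 ≤ uniformProb A := by
  unfold uniformProb; positivity

theorem uniformProb_le_one (A : α → Prop) : uniformProb A ≤ 1 :=
  div_le_one_of_le₀ (Nat.cast_le.2 (Finset.card_le_univ _)) (Nat.cast_nonneg _)

theorem uniformProb_mono {A B : α → Prop} (h : ∀ x, A x → B x) :
    uniformProb A ≤ uniformProb B := by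
  unfold uniformProb
  gcongr with x
  exact h x

theorem uniformProb_of_forall_not {A : α → Prop} (hA : ∀ x, ¬ A x) : uniformProb A = 0 := by
  simp [uniformProb, hA]

theorem uniformProb_of_forall [Nonempty α] {A : α → Prop} (hA : ∀ x, A x) :
    uniformProb A = 1 := by
  simp [uniformProb, hA]

theorem uniformProb_not [Nonempty α] (A : α → Prop) :
    uniformProb (fun x => ¬ A x) = 1 - uniformProb A := by
  classical
  rw [eq_sub_iff_add_eq, uniformProb_eq, uniformProb_eq, ← add_div,
    div_eq_one_iff_eq (Nat.cast_ne_zero.2 Fintype.card_ne_zero), add_comm, ← Finset.card_univ]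
  exact_mod_cast Finset.card_filter_add_card_filter_not A

theorem uniformProb_or_le (A B : α → Prop) :
    uniformProb (fun x => A x ∨ B x) ≤ uniformProb A + uniformProb B := by
  classical
  rw [uniformProb_eq, uniformProb_eq, uniformProb_eq, ← add_div, ← Nat.cast_add,
    Finset.filter_or]
  gcongr
  exact Finset.card_union_le _ _

theorem uniformProb_exists_mem_le (s : Finset ι) (A : ι → α → Prop) :
    uniformProb (fun x => ∃ i ∈ s, A i x) ≤ ∑ i ∈ s, uniformProb (A i) := by
  classical
  induction s using Finset.induction_on with
  | empty => simp [uniformProb]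
  | insert i s hi ih =>
    simp only [Finset.sum_insert hi, Finset.exists_mem_insert]
    exact (uniformProb_or_le _ _).trans (by gcongr)

theorem uniformProb_exists_le [Fintype ι] (A : ι → α → Prop) :
    uniformProb (fun x => ∃ i, A i x) ≤ ∑ i, uniformProb (A i) := by
  simpa using uniformProb_exists_mem_le Finset.univ A

/-- A union bound over time: a monotone family takes at most `s.card * J + 1` values on `s`. -/
theorem uniformProb_exists_le_of_monotone {f : ℕ → ι → ℕ} (hf : Monotone f) {J : ℕ}
    (hJ : ∀ i p, f i p ≤ J) (s : Finset ι) {A : ℕ → α → Prop}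
    (hA : ∀ i i', (∀ p ∈ s, f i p = f i' p) → ∀ x, A i x → A i' x) {N : ℕ} {b : ℝ}
    (hAb : ∀ i ≤ N, uniformProb (A i) ≤ b) :
    uniformProb (fun x => ∃ i ≤ N, A i x) ≤ (s.card * J + 1 : ℕ) * b := by
  let total (i : ℕ) : ℕ := ∑ p ∈ s, f i p
  have htotal : ∀ i, total i < s.card * J + 1 := fun i =>
    Nat.lt_succ_of_le ((Finset.sum_le_card_nsmul s (f i) J fun p _ => hJ i p).trans_eq rfl)
  have heq : ∀ i i', total i = total i' → ∀ p ∈ s, f i p = f i' p := by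
    intro i i' h
    rcases le_total i i' with hi | hi
    · exact (Finset.sum_eq_sum_iff_of_le fun p _ => hf hi p).1 h
    · exact fun p hp => ((Finset.sum_eq_sum_iff_of_le fun p _ => hf hi p).1 h.symm p hp).symm
  have hfiber : ∀ v, uniformProb (fun x => ∃ i ≤ N, total i = v ∧ A i x) ≤ b := by
    intro v
    by_cases hv : ∃ i ≤ N, total i = v
    · obtain ⟨i₀, hi₀, rfl⟩ := hv
      refine (uniformProb_mono ?_).trans (hAb i₀ hi₀)
      rintro x ⟨i, -, hi, hx⟩
      exact hA i i₀ (heq i i₀ hi) x hx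
    · exact (uniformProb_of_forall_not fun x ⟨i, hi, htot, _⟩ => hv ⟨i, hi, htot⟩).trans_le
        ((uniformProb_nonneg (A 0)).trans (hAb 0 N.zero_le))
  calc uniformProb (fun x => ∃ i ≤ N, A i x)
      ≤ uniformProb (fun x => ∃ v ∈ Finset.range (s.card * J + 1),
          ∃ i ≤ N, total i = v ∧ A i x) := uniformProb_mono fun x ⟨i, hi, hx⟩ =>
        ⟨total i, Finset.mem_range.2 (htotal i), i, hi, rfl, hx⟩
    _ ≤ ∑ v ∈ Finset.range (s.card * J + 1), uniformProb (fun x => ∃ i ≤ N, total i = v ∧ A i x) :=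
        uniformProb_exists_mem_le _ _
    _ ≤ (s.card * J + 1 : ℕ) * b := by
        simpa using Finset.sum_le_card_nsmul (Finset.range (s.card * J + 1)) _ b
          fun v _ => hfiber v

theorem uniformProb_prod (A : α → Prop) (B : β → Prop) :
    uniformProb (fun x : α × β => A x.1 ∧ B x.2) = uniformProb A * uniformProb B := by
  classical
  rw [uniformProb_eq, uniformProb_eq, uniformProb_eq, div_mul_div_comm, Fintype.card_prod,
    ← Finset.univ_product_univ, Finset.filter_product, Finset.card_product, Nat.cast_mul,
    Nat.cast_mul]

section Pi

variable [Fintype ι] [DecidableEq ι]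

theorem uniformProb_pi (A : ι → α → Prop) :
    uniformProb (fun x : ι → α => ∀ i, A i (x i)) = ∏ i, uniformProb (A i) := by
  classical
  unfold uniformProb
  rw [Finset.prod_div_distrib, Fintype.card_fun, ← Nat.cast_prod, ← Fintype.card_piFinset]
  congr 2
  · congr 1
    ext x
    simp
  · simp

variable [Nonempty α]

theorem uniformProb_comp_eval (i : ι) (A : α → Prop) :
    uniformProb (fun x : ι → α => A (x i)) = uniformProb A := by
  have h := uniformProb_pi fun j (y : α) => j = i → A y
  rw [Finset.prod_eq_single_of_mem i (Finset.mem_univ i) fun j _ hj =>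
    uniformProb_of_forall fun y hji => absurd hji hj] at h
  simpa using h

theorem uniformProb_forall_not_le_exp [Fintype κ] {f : κ → ι} (hf : f.Injective)
    {G : κ → α → Prop} {p : κ → ℝ} (hp : ∀ k, p k ≤ uniformProb (G k)) :
    uniformProb (fun x : ι → α => ∀ k, ¬ G k (x (f k))) ≤ Real.exp (-∑ k, p k) := by
  have hcoord : ∀ i, uniformProb (fun y => ∀ k, f k = i → ¬ G k y) ≤
      Real.exp (-∑ k with f k = i, p k) := by
    intro i
    by_cases hi : ∃ k, f k = i
    · obtain ⟨k, rfl⟩ := hi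
      have hfiber : ({k' | f k' = f k} : Finset κ) = {k} := by ext k'; simp [hf.eq_iff]
      simp only [hf.eq_iff, forall_eq, hfiber, Finset.sum_singleton]
      rw [uniformProb_not]
      linarith [Real.add_one_le_exp (-p k), hp k]
    · push Not at hi
      simpa [Finset.filter_false_of_mem fun k _ => hi k] using uniformProb_le_one _
  calc uniformProb (fun x : ι → α => ∀ k, ¬ G k (x (f k)))
      = ∏ i, uniformProb (fun y => ∀ k, f k = i → ¬ G k y) := by
        rw [← uniformProb_pi]; simp [forall_comm (α := ι)]
    _ ≤ ∏ i, Real.exp (-∑ k with f k = i, p k) :=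
        Finset.prod_le_prod (fun i _ => uniformProb_nonneg _) fun i _ => hcoord i
    _ = Real.exp (-∑ k, p k) := by
        rw [← Real.exp_sum, Finset.sum_neg_distrib, Finset.sum_fiberwise]

end Pi

end UniformProb

section Coin

/-- The event that a coin shows heads, where heads has probability `(1 / 2) ^ k`. -/
def IsHeads {J : ℕ} (k : ℕ) (x : Fin (2 ^ J)) : Prop := (x : ℕ) < 2 ^ (J - k)

theorem uniformProb_isHeads {J k : ℕ} (hk : k ≤ J) :
    uniformProb (IsHeads k : Fin (2 ^ J) → Prop) = 1 / 2 ^ k := by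
  classical
  have hcard : (Finset.univ.filter fun x : Fin (2 ^ J) => (x : ℕ) < 2 ^ (J - k)).card =
      2 ^ (J - k) := by
    rw [Fin.card_filter_val_lt]
    exact min_eq_right (Nat.pow_le_pow_right two_pos (J.sub_le k))
  unfold IsHeads
  rw [uniformProb_eq, hcard, Fintype.card_fin, div_eq_div_iff (by positivity) (by positivity),
    one_mul]
  exact_mod_cast (pow_add 2 (J - k) k).symm.trans (by rw [Nat.sub_add_cancel hk])

end Coin

section Seeds

/-- The random seeds of the rounding in a tree of height `d`: each edge from the root has, for
every exponent that may be used at its lower end, its own coin and seeds for the subtree. -/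
def Seeds (L : Type) (J : ℕ) : ℕ → Type
  | 0 => Unit
  | d + 1 => L × Fin (J + 1) → Fin (2 ^ J) × Seeds L J d

instance Seeds.nonempty (L : Type) (J : ℕ) : (d : ℕ) → Nonempty (Seeds L J d)
  | 0 => inferInstanceAs (Nonempty Unit)
  | d + 1 =>
    have := Seeds.nonempty L J d
    inferInstanceAs (Nonempty (L × Fin (J + 1) → Fin (2 ^ J) × Seeds L J d))

noncomputable instance Seeds.fintype (L : Type) [Fintype L] (J : ℕ) :
    (d : ℕ) → Fintype (Seeds L J d)
  | 0 => inferInstanceAs (Fintype Unit)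
  | d + 1 => by
    classical
    have := Seeds.fintype L J d
    exact inferInstanceAs (Fintype (L × Fin (J + 1) → Fin (2 ^ J) × Seeds L J d))

/-- The exponent at a child of level `l` of a node with exponent `j`. A node with exponent `j` is
reached with probability `2 ^ j₀ / 2 ^ j`, where `j₀` is the exponent of the root, so the exponent
of a child increases until this is at most proportional to its capacity. -/
def childExp {J : ℕ} (j : Fin (J + 1)) (l : ℕ) : Fin (J + 1) := ⟨max j (J - l), by omega⟩

theorem le_childExp {J : ℕ} (j : Fin (J + 1)) (l : ℕ) : (j : ℕ) ≤ childExp j l :=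
  le_max_left _ _

/-- The rounding started with exponent `j` reaches the node `q`: it descends to a node of positive
level with the ratio of the capacities, approximated by the difference of the exponents. -/
def Reached {L : Type} {J : ℕ} :
    {d : ℕ} → Seeds L J d → Fin (J + 1) → (List L → ℕ) → List L → Prop
  | _, _, _, _, [] => True
  | 0, _, _, _, _ :: _ => False
  | _ + 1, ω, j, lv, a :: q =>
    0 < lv [a] ∧ IsHeads ((childExp j (lv [a]) : ℕ) - j) (ω (a, childExp j (lv [a]))).1 ∧
      Reached (ω (a, childExp j (lv [a]))).2 (childExp j (lv [a])) (lv ∘ List.cons a) q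

variable {L : Type} {J d : ℕ}

theorem reached_nil (ω : Seeds L J d) (j : Fin (J + 1)) (lv : List L → ℕ) :
    Reached ω j lv [] := by
  cases d <;> trivial

theorem Reached.of_prefix {ω : Seeds L J d} {j : Fin (J + 1)} {lv : List L → ℕ} {p q : List L}
    (hq : Reached ω j lv q) (hpq : p <+: q) : Reached ω j lv p := by
  induction d generalizing j lv p q with
  | zero =>
    rcases q with - | ⟨a, q⟩
    · rwa [List.prefix_nil.1 hpq]
    · exact hq.elim
  | succ d ih =>
    rcases p with - | ⟨a, p⟩
    · exact reached_nil _ _ _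
    · obtain ⟨w, rfl⟩ := hpq
      exact ⟨hq.1, hq.2.1, ih hq.2.2 (List.prefix_append p w)⟩

theorem Reached.congr {ω : Seeds L J d} {j : Fin (J + 1)} {lv lv' : List L → ℕ} {q : List L}
    (hq : Reached ω j lv q) (hlv : ∀ p, p ≠ [] → p <+: q → lv p = lv' p) :
    Reached ω j lv' q := by
  induction d generalizing j lv lv' q with
  | zero =>
    rcases q with - | ⟨a, q⟩
    · exact hq
    · exact hq.elim
  | succ d ih =>
    rcases q with - | ⟨a, q⟩
    · exact reached_nil _ _ _
    · have ha : lv [a] = lv' [a] := hlv [a] (List.cons_ne_nil _ _) (by simp)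
      obtain ⟨hpos, hcoin, hrest⟩ := hq
      rw [ha] at hpos hcoin hrest
      exact ⟨hpos, hcoin, ih hrest fun p _ hp =>
        hlv (a :: p) (List.cons_ne_nil _ _) (List.cons_prefix_cons.2 ⟨rfl, hp⟩)⟩

variable [Fintype L]

theorem uniformProb_child (j : Fin (J + 1)) (l : ℕ) (A : Seeds L J d → Prop) :
    uniformProb (fun y : Fin (2 ^ J) × Seeds L J d =>
      IsHeads ((childExp j l : ℕ) - j) y.1 ∧ A y.2) =
      2 ^ (j : ℕ) / 2 ^ (childExp j l : ℕ) * uniformProb A := by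
  rw [uniformProb_prod (IsHeads _) A, uniformProb_isHeads (by omega)]
  congr 1
  rw [div_eq_div_iff (by positivity) (by positivity), one_mul, ← pow_add,
    Nat.add_sub_cancel' (le_childExp j l)]

theorem pow_div_pow_childExp_le {l : ℕ} (hl : l ≠ 0) (j : Fin (J + 1)) :
    (2 : ℝ) ^ (j : ℕ) / 2 ^ (childExp j l : ℕ) ≤ 2 ^ (j : ℕ) * levelCap J l := by
  have hle : J ≤ l + childExp j l := by
    have : J - l ≤ childExp j l := le_max_right _ _
    omega
  have hpow : (2 : ℝ) ^ J ≤ 2 ^ l * 2 ^ (childExp j l : ℕ) := by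
    rw [← pow_add]
    exact pow_le_pow_right₀ one_le_two hle
  rw [levelCap, if_neg hl, ← mul_div_assoc, div_le_div_iff₀ (by positivity) (by positivity),
    mul_assoc]
  exact mul_le_mul_of_nonneg_left hpow (pow_nonneg zero_le_two _)

theorem uniformProb_seeds_succ [DecidableEq L]
    (A : (L × Fin (J + 1) → Fin (2 ^ J) × Seeds L J d) → Prop) :
    uniformProb (fun ω : Seeds L J (d + 1) => A ω) = uniformProb A :=
  Subsingleton.elim (Seeds.fintype L J (d + 1)) Pi.instFintype ▸ rfl

theorem uniformProb_seeds_eval (i : L × Fin (J + 1)) (A : Fin (2 ^ J) × Seeds L J d → Prop) :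
    uniformProb (fun ω : Seeds L J (d + 1) => A (ω i)) = uniformProb A := by
  classical
  exact (uniformProb_seeds_succ fun ω => A (ω i)).trans (uniformProb_comp_eval i A)

theorem uniformProb_reached_le (j : Fin (J + 1)) (lv : List L → ℕ) {q : List L} (hq : q ≠ []) :
    uniformProb (fun ω : Seeds L J d => Reached ω j lv q) ≤
      2 ^ (j : ℕ) * levelCap J (lv q) := by
  classical
  have hnonneg : ∀ l, 0 ≤ 2 ^ (j : ℕ) * levelCap J l := fun l =>
    mul_nonneg (by positivity) (levelCap_nonneg _ _)
  obtain ⟨a, q, rfl⟩ := List.exists_cons_of_ne_nil hq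
  induction d generalizing j lv a q with
  | zero => exact (uniformProb_of_forall_not fun _ h => h).trans_le (hnonneg _)
  | succ d ih =>
    rcases Nat.eq_zero_or_pos (lv [a]) with hzero | hpos
    · exact (uniformProb_of_forall_not fun _ h => h.1.ne' hzero).trans_le (hnonneg _)
    have hprob : uniformProb (fun ω : Seeds L J (d + 1) => Reached ω j lv (a :: q)) =
        2 ^ (j : ℕ) / 2 ^ (childExp j (lv [a]) : ℕ) * uniformProb fun ω : Seeds L J d =>
          Reached ω (childExp j (lv [a])) (lv ∘ List.cons a) q := by
      rw [← uniformProb_child, ← uniformProb_seeds_eval (a, childExp j (lv [a])) fun y =>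
        IsHeads ((childExp j (lv [a]) : ℕ) - j) y.1 ∧
          Reached y.2 (childExp j (lv [a])) (lv ∘ List.cons a) q]
      simp only [Reached, hpos, true_and]
    rw [hprob]
    rcases q with - | ⟨b, q⟩
    · exact (mul_le_of_le_one_right (by positivity) (uniformProb_le_one _)).trans
        (pow_div_pow_childExp_le hpos.ne' j)
    · refine (mul_le_mul_of_nonneg_left (ih (childExp j (lv [a])) (lv ∘ List.cons a)
        (fun l => mul_nonneg (by positivity) (levelCap_nonneg _ _)) b q
        (List.cons_ne_nil b q)) (by positivity)).trans_eq ?_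
      rw [← mul_assoc, div_mul_cancel₀ _ (by positivity)]
      rfl

/-- The number of prefixes bounds how often the levels along the path to `q` can change. -/
theorem uniformProb_exists_reached_le (j : Fin (J + 1)) {lvs : ℕ → List L → ℕ}
    (hmono : Monotone lvs) (hJ : ∀ i p, lvs i p ≤ J) (N : ℕ) {q : List L} (hq : q ≠ [])
    (hqd : q.length ≤ d) :
    uniformProb (fun ω : Seeds L J d => ∃ i ≤ N, Reached ω j (lvs i) q) ≤
      (d * J + 1 : ℕ) * (2 ^ (j : ℕ) * levelCap J (lvs N q)) := by
  classical
  have hcard : (nonnilPrefixes q).card ≤ d := by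
    rw [nonnilPrefixes, Finset.card_erase_of_mem (by simp)]
    have := q.inits.toFinset_card_le
    rw [List.length_inits] at this
    omega
  refine (uniformProb_exists_le_of_monotone hmono hJ (nonnilPrefixes q) (fun i i' h ω hω =>
    hω.congr fun p hp hpq => h p (mem_nonnilPrefixes.2 ⟨hp, hpq⟩)) fun i hi =>
    (uniformProb_reached_le j (lvs i) hq).trans (mul_le_mul_of_nonneg_left
      (levelCap_mono J (hmono hi q)) (by positivity))).trans ?_
  have := levelCap_nonneg J (lvs N q)
  gcongr

end Seeds

section Connection

theorem min_sum_one_le {ι : Type*} [Fintype ι] {f : ι → ℝ} (hf : ∀ i, 0 ≤ f i) :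
    min (∑ i, f i) 1 ≤ ∑ i, min (f i) 1 := by
  have hnonneg : ∀ i, 0 ≤ min (f i) 1 := fun i => le_min (hf i) zero_le_one
  by_cases h : ∃ i, 1 ≤ f i
  · obtain ⟨i, hi⟩ := h
    calc min (∑ i, f i) 1 ≤ min (f i) 1 := (min_le_right _ _).trans_eq (min_eq_right hi).symm
      _ ≤ ∑ i, min (f i) 1 :=
        Finset.single_le_sum (f := fun i => min (f i) 1) (fun i _ => hnonneg i)
          (Finset.mem_univ i)
  · push Not at h
    simp_rw [fun i => min_eq_left (h i).le]
    exact min_le_left _ _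

theorem exp_neg_le_one_sub_div {x y : ℝ} {d : ℕ} (hx : 0 ≤ x) (hx1 : x ≤ 1)
    (hxy : x / (d + 1) ≤ y) : Real.exp (-y) ≤ 1 - x / (d + 2) := by
  calc Real.exp (-y) ≤ (1 + x / (d + 1))⁻¹ := by
        rw [Real.exp_neg]
        exact inv_anti₀ (by positivity) (by linarith [Real.add_one_le_exp y])
    _ ≤ 1 - x / (d + 2) := by
        rw [inv_le_iff_one_le_mul₀ (by positivity)]
        have : (1 - x / (d + 2)) * (1 + x / (d + 1)) =
            1 + x * (1 - x) / ((d + 2) * (d + 1)) := by field_simp; ring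
        rw [this]
        have : 0 ≤ 1 - x := by linarith
        exact le_add_of_nonneg_right (by positivity)

variable {L : Type} {J d : ℕ}

theorem min_pow_mul_le_of_le_levelCap (j : Fin (J + 1)) {l : ℕ} (hl : l ≤ J) {x : ℝ}
    (hxl : x ≤ levelCap J l) :
    min (2 ^ (j : ℕ) * x) 1 ≤
      2 ^ (j : ℕ) / 2 ^ (childExp j l : ℕ) * min (2 ^ (childExp j l : ℕ) * x) 1 := by
  rcases le_total (j : ℕ) (J - l) with hj | hj
  · have hexp : (childExp j l : ℕ) = J - l := max_eq_right hj
    have hone : 2 ^ (childExp j l : ℕ) * x ≤ 1 := by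
      rcases Nat.eq_zero_or_pos l with rfl | hpos
      · have : x ≤ 0 := hxl.trans_eq (if_pos rfl)
        nlinarith [pow_pos (zero_lt_two' ℝ) (childExp j 0 : ℕ)]
      · refine (mul_le_mul_of_nonneg_left hxl (by positivity)).trans_eq ?_
        rw [levelCap, if_neg hpos.ne', hexp, ← mul_div_assoc, ← pow_add, Nat.sub_add_cancel hl,
          div_self (by positivity)]
    rw [min_eq_left hone, ← mul_assoc, div_mul_cancel₀ _ (by positivity)]
    exact min_le_left _ _
  · have hexp : (childExp j l : ℕ) = j := max_eq_left hj
    rw [hexp, div_self (by positivity), one_mul]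

/-- The rounding reaches a node that satisfies `T`. -/
def ReachesTarget (T : List L → Prop) (ω : Seeds L J d) (j : Fin (J + 1)) (lv : List L → ℕ) :
    Prop :=
  ∃ q, q.length ≤ d ∧ T q ∧ Reached ω j lv q

theorem reachesTarget_of_target {T : List L → Prop} (hT : T []) (ω : Seeds L J d)
    (j : Fin (J + 1)) (lv : List L → ℕ) : ReachesTarget T ω j lv :=
  ⟨[], Nat.zero_le _, hT, reached_nil ω j lv⟩

/-- The event, in terms of the coin and the seeds of a child of level `l`, that the rounding moves
on to the child and the event `A` happens below it. -/
def ChildEvent (j : Fin (J + 1)) (l : ℕ) (A : Seeds L J d → Prop)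
    (y : Fin (2 ^ J) × Seeds L J d) : Prop :=
  0 < l ∧ IsHeads ((childExp j l : ℕ) - j) y.1 ∧ A y.2

theorem reachesTarget_of_childEvent {T : List L → Prop} {ω : Seeds L J (d + 1)} {j : Fin (J + 1)}
    {lv : List L → ℕ} {a : L}
    (h : ChildEvent j (lv [a]) (fun ω' => ReachesTarget (T ∘ List.cons a) ω'
      (childExp j (lv [a])) (lv ∘ List.cons a)) (ω (a, childExp j (lv [a])))) :
    ReachesTarget T ω j lv := by
  obtain ⟨hpos, hcoin, q, hqd, hqT, hq⟩ := h
  exact ⟨a :: q, Nat.succ_le_succ hqd, hqT, hpos, hcoin, hq⟩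

variable [Fintype L]

theorem min_div_le_uniformProb_reachesTarget_of_target {T : List L → Prop} (hT : T [])
    (j : Fin (J + 1)) (lv : List L → ℕ) (x : ℝ) :
    min x 1 / (d + 1) ≤ uniformProb fun ω : Seeds L J d => ReachesTarget T ω j lv := by
  rw [uniformProb_of_forall fun ω => reachesTarget_of_target hT ω j lv]
  exact div_le_one_of_le₀ ((min_le_right _ _).trans (by simp)) (by positivity)

theorem min_div_le_uniformProb_childEvent (j : Fin (J + 1)) {l : ℕ} (hl : l ≤ J) {x k : ℝ}
    (hxl : x ≤ levelCap J l) (hk : 0 ≤ k) {A : Seeds L J d → Prop}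
    (hA : min (2 ^ (childExp j l : ℕ) * x) 1 / k ≤ uniformProb A) :
    min (2 ^ (j : ℕ) * x) 1 / k ≤ uniformProb (ChildEvent j l A) := by
  rcases Nat.eq_zero_or_pos l with rfl | hpos
  · have hx : x ≤ 0 := hxl.trans_eq (if_pos rfl)
    refine le_trans (div_nonpos_of_nonpos_of_nonneg ((min_le_left _ _).trans ?_) hk)
      (uniformProb_nonneg _)
    exact mul_nonpos_of_nonneg_of_nonpos (by positivity) hx
  · calc min (2 ^ (j : ℕ) * x) 1 / k
        ≤ 2 ^ (j : ℕ) / 2 ^ (childExp j l : ℕ) * (min (2 ^ (childExp j l : ℕ) * x) 1 / k) := by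
          rw [← mul_div_assoc]
          exact div_le_div_of_nonneg_right (min_pow_mul_le_of_le_levelCap j hl hxl) hk
      _ ≤ 2 ^ (j : ℕ) / 2 ^ (childExp j l : ℕ) * uniformProb A :=
          mul_le_mul_of_nonneg_left hA (by positivity)
      _ = uniformProb (ChildEvent j l A) := by
          rw [← uniformProb_child]
          unfold ChildEvent
          simp only [hpos, true_and]

theorem uniformProb_not_reachesTarget_le_exp (j : Fin (J + 1)) (lv : List L → ℕ)
    (T : List L → Prop) {p : L → ℝ}
    (hp : ∀ a, p a ≤ uniformProb (ChildEvent j (lv [a]) fun ω : Seeds L J d =>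
      ReachesTarget (T ∘ List.cons a) ω (childExp j (lv [a])) (lv ∘ List.cons a))) :
    uniformProb (fun ω : Seeds L J (d + 1) => ¬ ReachesTarget T ω j lv) ≤
      Real.exp (-∑ a, p a) := by
  classical
  have hinj : (fun a : L => (a, childExp j (lv [a]))).Injective :=
    fun a b hab => congrArg Prod.fst hab
  refine (uniformProb_mono ?_).trans
    ((uniformProb_seeds_succ fun ω => ∀ a, ¬ ChildEvent j (lv [a]) (fun ω' : Seeds L J d =>
      ReachesTarget (T ∘ List.cons a) ω' (childExp j (lv [a])) (lv ∘ List.cons a))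
        (ω (a, childExp j (lv [a])))).trans_le (uniformProb_forall_not_le_exp hinj hp))
  exact fun ω hω a ha => hω (reachesTarget_of_childEvent ha)

theorem min_treeFlow_div_le_uniformProb_reachesTarget (j : Fin (J + 1)) {lv : List L → ℕ}
    (hlv : ∀ p, lv p ≤ J) (T : List L → Prop) :
    min (2 ^ (j : ℕ) * treeFlow d (levelCap J ∘ lv) T) 1 / (d + 1) ≤
      uniformProb (fun ω : Seeds L J d => ReachesTarget T ω j lv) := by
  induction d generalizing j lv T with
  | zero =>
    by_cases hT : T []
    · exact min_div_le_uniformProb_reachesTarget_of_target hT j lv _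
    rw [treeFlow_zero_of_not_target hT]
    simpa using uniformProb_nonneg _
  | succ d ih =>
    by_cases hT : T []
    · simpa using min_div_le_uniformProb_reachesTarget_of_target (d := d + 1) hT j lv _
    let F (a : L) : ℝ := treeFlow d ((levelCap J ∘ lv) ∘ List.cons a) (T ∘ List.cons a)
    have hF : ∀ a, 0 ≤ 2 ^ (j : ℕ) * F a := fun a =>
      mul_nonneg (by positivity) (treeFlow_nonneg d (fun _ => levelCap_nonneg _ _) _)
    have hfail := uniformProb_not_reachesTarget_le_exp (d := d) j lv T
      (p := fun a => min (2 ^ (j : ℕ) * F a) 1 / (d + 1)) fun a =>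
        min_div_le_uniformProb_childEvent (x := F a) j (hlv [a])
          (treeFlow_le d (fun _ => levelCap_nonneg _ _) _) (Nat.cast_add_one_pos d).le
          (ih _ (fun p => hlv (a :: p)) _)
    rw [uniformProb_not] at hfail
    set x := min (2 ^ (j : ℕ) * treeFlow (d + 1) (levelCap J ∘ lv) T) 1
    have hx : 0 ≤ x := le_min (mul_nonneg (by positivity)
      (treeFlow_nonneg _ (fun _ => levelCap_nonneg _ _) _)) zero_le_one
    have hsum : x / (d + 1) ≤ ∑ a, min (2 ^ (j : ℕ) * F a) 1 / (d + 1) := by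
      rw [← Finset.sum_div]
      refine div_le_div_of_nonneg_right (le_trans ?_ (min_sum_one_le hF)) (by positivity)
      rw [← Finset.mul_sum]
      refine min_le_min_right _ (mul_le_mul_of_nonneg_left ?_ (by positivity))
      exact (treeFlow_succ_of_not_target hT).trans_le (min_le_right _ _)
    have hexp := hfail.trans (exp_neg_le_one_sub_div hx (min_le_right _ _) hsum)
    push_cast
    rw [add_assoc, one_add_one_eq_two]
    linarith

end Connection

section Success

theorem exists_exponent {J : ℕ} {y : ℝ} (hy1 : y ≤ 1) (hy : 1 ≤ 2 ^ J * y) :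
    ∃ j : Fin (J + 1), 1 ≤ 2 ^ (j : ℕ) * y ∧ 2 ^ (j : ℕ) * y ≤ 2 := by
  classical
  have hex : ∃ j : ℕ, 1 ≤ 2 ^ j * y := ⟨J, hy⟩
  refine ⟨⟨Nat.find hex, Nat.lt_succ_of_le (Nat.find_min' hex hy)⟩, Nat.find_spec hex, ?_⟩
  change 2 ^ Nat.find hex * y ≤ 2
  rcases hj : Nat.find hex with - | j
  · rw [pow_zero]
    linarith
  · have := not_le.1 (Nat.find_min hex (m := j) (by omega))
    rw [pow_succ]
    linarith

theorem exp_neg_two_le : Real.exp (-2) ≤ 1 / 4 := by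
  have hexp : Real.exp 2 = Real.exp 1 * Real.exp 1 := by
    rw [← Real.exp_add, one_add_one_eq_two]
  rw [Real.exp_neg, ← one_div]
  refine one_div_le_one_div_of_le (by norm_num) ?_
  nlinarith [Real.add_one_le_exp (1 : ℝ)]

theorem uniformProb_forall_not_reachesTarget_le {L : Type} [Fintype L] {J d : ℕ}
    (j : Fin (J + 1)) {lv : List L → ℕ} (hlv : ∀ p, lv p ≤ J) (T : List L → Prop)
    (hF : 1 ≤ 2 ^ (j : ℕ) * treeFlow d (levelCap J ∘ lv) T) :
    uniformProb (fun y : Fin (2 * (d + 1)) → Seeds L J d =>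
      ∀ μ, ¬ ReachesTarget T (y μ) j lv) ≤ 1 / 4 := by
  have hone := min_treeFlow_div_le_uniformProb_reachesTarget (d := d) j hlv T
  rw [min_eq_right hF] at hone
  have hfail := uniformProb_forall_not_le_exp (f := fun μ : Fin (2 * (d + 1)) => μ)
    Function.injective_id fun _ => hone
  have hsum : ∑ _μ : Fin (2 * (d + 1)), 1 / ((d : ℝ) + 1) = 2 := by
    rw [Finset.sum_const, Finset.card_univ, Fintype.card_fin, nsmul_eq_mul]
    push_cast
    field_simp
  rw [hsum] at hfail
  exact hfail.trans exp_neg_two_le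

namespace LayeredForest

variable {R V : Type*} {L : Type} (D : LayeredForest R L V) {trials : ℕ}

/-- The random seeds of the rounding: for every root, exponent and trial, the coin that decides
whether the trial takes place, and seeds for `2 * (height + 1)` independent repetitions. -/
abbrev Sample (trials : ℕ) : Type _ :=
  R × Fin (D.levels + 1) × Fin trials →
    Fin (2 ^ D.levels) × (Fin (2 * (D.height + 1)) → Seeds L D.levels D.height)

/-- The loss of the rounding: a node of capacity `x` is selected with probability at most
`selectionFactor * x`, a union bound over the exponents, trials, repetitions and level changes. -/
def selectionFactor (trials : ℕ) : ℕ :=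
  (D.levels + 1) * (trials * (2 * (D.height + 1) * (D.height * D.levels + 1)))

variable {D}

/-- The rounding at the counters `u` selects the node `(r, q)`. -/
def Selected (ω : D.Sample trials) (u : R → List L → ℕ) (r : R) (q : List L) : Prop :=
  ∃ (j : Fin (D.levels + 1)) (c : Fin trials), IsHeads j (ω (r, j, c)).1 ∧
    ∃ μ, Reached ((ω (r, j, c)).2 μ) j (D.level u r) q

theorem Selected.of_prefix {ω : D.Sample trials} {u : R → List L → ℕ} {r : R} {p q : List L}
    (hq : Selected ω u r q) (hpq : p <+: q) : Selected ω u r p := by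
  obtain ⟨j, c, hj, μ, hμ⟩ := hq
  exact ⟨j, c, hj, μ, hμ.of_prefix hpq⟩

/-- In a trial at the root `r` with exponent `j`, some repetition connects the root to `s`, and some
repetition connects it to `t`. -/
def Connects (u : R → List L → ℕ) (s t : V) (m : ℕ) (r : R) (j : Fin (D.levels + 1))
    (y : Fin (2 * (D.height + 1)) → Seeds L D.levels D.height) : Prop :=
  (∃ μ, ReachesTarget (D.IsTarget s m r) (y μ) j (D.level u r)) ∧
    ∃ μ, ReachesTarget (D.IsTarget t m r) (y μ) j (D.level u r)

variable {u : R → List L → ℕ} {s t : V} {m : ℕ} {r : R}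

/-- The rounding at the counters `u` selects all nodes of a valid route. -/
def SelectsRoute [DecidableEq L] (ω : D.Sample trials) (u : R → List L → ℕ) (s t : V) (m : ℕ) :
    Prop :=
  ∃ ρ : Route R L, D.IsValidRoute s t m ρ ∧ ∀ z ∈ ρ.nodes, Selected ω u z.1 z.2

theorem selectsRoute_of_connects [DecidableEq L] {ω : D.Sample trials} {j : Fin (D.levels + 1)}
    {c : Fin trials} (hj : IsHeads j (ω (r, j, c)).1)
    (hω : Connects u s t m r j (ω (r, j, c)).2) : SelectsRoute ω u s t m := by
  obtain ⟨⟨μ, p, hp, hps, hμ⟩, ν, q, hq, hqt, hν⟩ := hω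
  refine ⟨⟨r, p, q⟩, ⟨hp, hq, hps, hqt⟩, fun z hz => ?_⟩
  obtain ⟨rfl, -, hz | hz⟩ := Route.mem_nodes.1 hz
  · exact Selected.of_prefix ⟨j, c, hj, μ, hμ⟩ hz
  · exact Selected.of_prefix ⟨j, c, hj, ν, hν⟩ hz

variable [Fintype L]

theorem uniformProb_exists_selected_le [Fintype R] [DecidableEq R] {us : ℕ → R → List L → ℕ}
    (hus : Monotone us) (N : ℕ) (r : R) {q : List L} (hq : q ≠ []) (hqh : q.length ≤ D.height) :
    uniformProb (fun ω : D.Sample trials => ∃ i ≤ N, Selected ω (us i) r q) ≤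
      D.selectionFactor trials * D.cap (us N) r q := by
  have hone : ∀ z : Fin (D.levels + 1) × Fin trials × Fin (2 * (D.height + 1)),
      uniformProb (fun ω : D.Sample trials => IsHeads z.1 (ω (r, z.1, z.2.1)).1 ∧
        ∃ i ≤ N, Reached ((ω (r, z.1, z.2.1)).2 z.2.2) z.1 (D.level (us i) r) q) ≤
      (D.height * D.levels + 1 : ℕ) * D.cap (us N) r q := by
    rintro ⟨j, c, μ⟩
    dsimp only
    rw [uniformProb_comp_eval (r, j, c) fun y : Fin (2 ^ D.levels) ×
          (Fin (2 * (D.height + 1)) → Seeds L D.levels D.height) => IsHeads j y.1 ∧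
        ∃ i ≤ N, Reached (y.2 μ) j (D.level (us i) r) q,
      uniformProb_prod (IsHeads j) fun y : Fin (2 * (D.height + 1)) → Seeds L _ _ =>
        ∃ i ≤ N, Reached (y μ) j (D.level (us i) r) q,
      uniformProb_comp_eval μ fun y => ∃ i ≤ N, Reached y j (D.level (us i) r) q,
      uniformProb_isHeads (Nat.le_of_lt_succ j.2)]
    refine (mul_le_mul_of_nonneg_left (uniformProb_exists_reached_le j
      (fun _ _ hi q => D.level_mono r q (hus hi)) (fun i q => D.level_le (us i) r q) N hq hqh)
      (by positivity)).trans_eq ?_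
    rw [cap]
    field_simp
  calc uniformProb (fun ω : D.Sample trials => ∃ i ≤ N, Selected ω (us i) r q)
      ≤ uniformProb (fun ω : D.Sample trials =>
          ∃ z : Fin (D.levels + 1) × Fin trials × Fin (2 * (D.height + 1)),
            IsHeads z.1 (ω (r, z.1, z.2.1)).1 ∧
              ∃ i ≤ N, Reached ((ω (r, z.1, z.2.1)).2 z.2.2) z.1 (D.level (us i) r) q) :=
        uniformProb_mono fun _ ⟨i, hi, j, c, hj, μ, hμ⟩ => ⟨(j, c, μ), hj, i, hi, hμ⟩
    _ ≤ ∑ _z, (D.height * D.levels + 1 : ℕ) * D.cap (us N) r q :=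
        (uniformProb_exists_le _).trans (Finset.sum_le_sum fun z _ => hone z)
    _ = _ := by
        rw [Finset.sum_const, Finset.card_univ, nsmul_eq_mul, selectionFactor]
        simp only [Fintype.card_prod, Fintype.card_fin]
        push_cast
        ring

theorem flowTo_le_one (u : R → List L → ℕ) (s : V) (m : ℕ) (r : R) : D.flowTo u s m r ≤ 1 :=
  calc D.flowTo u s m r ≤ D.cap u r [] := treeFlow_le _ (D.cap_nonneg u r) _
    _ ≤ levelCap D.levels D.levels := levelCap_mono _ (D.level_le u r [])
    _ = 1 := levelCap_self D.levels_ne_zero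

theorem half_le_uniformProb_connects {j : Fin (D.levels + 1)}
    (hs : 1 ≤ 2 ^ (j : ℕ) * D.flowTo u s m r) (ht : 1 ≤ 2 ^ (j : ℕ) * D.flowTo u t m r) :
    1 / 2 ≤ uniformProb (Connects (D := D) u s t m r j) := by
  have hfail : uniformProb (fun y => ¬ Connects (D := D) u s t m r j y) ≤ 1 / 4 + 1 / 4 := by
    refine le_trans (uniformProb_mono fun y hy => ?_) ((uniformProb_or_le _ _).trans (add_le_add
      (uniformProb_forall_not_reachesTarget_le j (D.level_le u r) (D.IsTarget s m r) hs)
      (uniformProb_forall_not_reachesTarget_le j (D.level_le u r) (D.IsTarget t m r) ht)))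
    simpa only [not_exists] using not_and_or.1 hy
  rw [uniformProb_not] at hfail
  linarith

theorem exists_exponent_le_uniformProb_connects (u : R → List L → ℕ) (s t : V) (m : ℕ) (r : R) :
    ∃ j : Fin (D.levels + 1),
      (min (D.flowTo u s m r) (D.flowTo u t m r) - 1 / 2 ^ D.levels) / 4 ≤
        uniformProb fun z : Fin (2 ^ D.levels) × _ => IsHeads j z.1 ∧ Connects u s t m r j z.2 := by
  set y := min (D.flowTo u s m r) (D.flowTo u t m r)
  by_cases hy : 1 ≤ 2 ^ D.levels * y
  · obtain ⟨j, hj, hj'⟩ := exists_exponent ((min_le_left _ _).trans (flowTo_le_one u s m r)) hy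
    refine ⟨j, ?_⟩
    have hhalf := half_le_uniformProb_connects (D := D) (u := u) (s := s) (t := t)
      (hj.trans (mul_le_mul_of_nonneg_left (min_le_left _ _) (by positivity)))
      (hj.trans (mul_le_mul_of_nonneg_left (min_le_right _ _) (by positivity)))
    rw [uniformProb_prod (IsHeads j), uniformProb_isHeads (Nat.le_of_lt_succ j.2)]
    calc (y - 1 / 2 ^ D.levels) / 4 ≤ y / 4 := by gcongr; exact sub_le_self _ (by positivity)
      _ ≤ 1 / 2 ^ (j : ℕ) * (1 / 2) := by
          rw [one_div_mul_one_div, div_le_div_iff₀ (by positivity) (by positivity)]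
          linarith
      _ ≤ _ := mul_le_mul_of_nonneg_left hhalf (by positivity)
  · have hsmall : y ≤ 1 / 2 ^ D.levels := by
      rw [le_div_iff₀ (by positivity)]
      linarith
    exact ⟨0, le_trans (by linarith) (uniformProb_nonneg _)⟩

theorem uniformProb_not_selectsRoute_le [Fintype R] [DecidableEq R] [DecidableEq L]
    (hflow : 1 ≤ D.flow u s t m) (hR : 2 * Fintype.card R ≤ 2 ^ D.levels) :
    uniformProb (fun ω : D.Sample trials => ¬ SelectsRoute ω u s t m) ≤
      Real.exp (-(trials / 8)) := by
  choose j hj using exists_exponent_le_uniformProb_connects (D := D) u s t m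
  have hinj : (fun k : R × Fin trials => (k.1, j k.1, k.2)).Injective := fun k k' hk => by
    simp only [Prod.mk.injEq] at hk
    exact Prod.ext hk.1 hk.2.2
  have hfail := uniformProb_forall_not_le_exp hinj fun k => hj k.1
  have hcard : (Fintype.card R : ℝ) * (1 / 2 ^ D.levels) ≤ 1 / 2 := by
    rw [mul_one_div, div_le_div_iff₀ (by positivity) two_pos, one_mul, mul_comm]
    exact_mod_cast hR
  have hsum : (trials : ℝ) / 8 ≤ ∑ k : R × Fin trials,
      (min (D.flowTo u s m k.1) (D.flowTo u t m k.1) - 1 / 2 ^ D.levels) / 4 := by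
    rw [Fintype.sum_prod_type]
    simp only [Finset.sum_const, Finset.card_univ, Fintype.card_fin, nsmul_eq_mul]
    rw [← Finset.mul_sum, ← Finset.sum_div, Finset.sum_sub_distrib, Finset.sum_const,
      Finset.card_univ, nsmul_eq_mul, ← flow]
    nlinarith [Nat.cast_nonneg (α := ℝ) trials]
  refine (uniformProb_mono fun ω hω k hk => ?_).trans
    (hfail.trans (Real.exp_le_exp.2 (neg_le_neg hsum)))
  exact hω (selectsRoute_of_connects hk.1 hk.2)

end LayeredForest

end Success

section Algorithm

instance Route.instNonempty {R L : Type*} [Nonempty R] : Nonempty (Route R L) :=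
  ⟨⟨Classical.arbitrary R, [], []⟩⟩

theorem sum_sum_div_card_eq {α β : Type*} [Fintype α] {S : α → Finset β} {T : Finset β}
    (hS : ∀ x, S x ⊆ T) (f : β → ℝ) :
    (∑ x, ∑ z ∈ S x, f z) / Fintype.card α = ∑ z ∈ T, f z * uniformProb (fun x => z ∈ S x) := by
  classical
  have hsum : ∀ x, ∑ z ∈ S x, f z = ∑ z ∈ T, if z ∈ S x then f z else 0 := fun x => by
    rw [← Finset.sum_filter, Finset.filter_mem_eq_inter, Finset.inter_eq_right.2 (hS x)]
  simp_rw [hsum]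
  rw [Finset.sum_comm, Finset.sum_div]
  refine Finset.sum_congr rfl fun z _ => ?_
  rw [← Finset.sum_filter, Finset.sum_const, nsmul_eq_mul, uniformProb_eq]
  ring

namespace LayeredForest

section Fallback

variable {R L V : Type*} (D : LayeredForest R L V) [DecidableEq L] {s t : V} {m : ℕ}
  {ρ : Route R L}

/-- The total cost of the nodes on a route. -/
def routeCost (ρ : Route R L) : ℕ := ∑ z ∈ ρ.nodes, D.cost z.1 z.2

theorem sum_ite_mem_nodes_le_routeCost [DecidableEq R] (ρ : Route R L) (T : Finset (R × List L))
    {a : ℝ} (ha : 0 ≤ a) :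
    ∑ z ∈ T, (if z ∈ ρ.nodes then a * D.cost z.1 z.2 else 0) ≤ a * D.routeCost ρ := by
  rw [← Finset.sum_filter, routeCost, Nat.cast_sum, Finset.mul_sum]
  exact Finset.sum_le_sum_of_subset_of_nonneg (fun z hz => (Finset.mem_filter.1 hz).2)
    fun _ _ _ => by positivity

/-- A valid route of minimum cost, which is arbitrary if there is no valid route. It is used
whenever the rounding fails to provide a route. -/
noncomputable def cheapestRoute [Nonempty R] (s t : V) (m : ℕ) : Route R L :=
  Classical.epsilon (MinimalFor (D.IsValidRoute s t m) D.routeCost)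

theorem minimalFor_cheapestRoute [Nonempty R] (hρ : D.IsValidRoute s t m ρ) :
    MinimalFor (D.IsValidRoute s t m) D.routeCost (D.cheapestRoute s t m) :=
  Classical.epsilon_spec (exists_minimalFor_of_wellFoundedLT _ _ ⟨ρ, hρ⟩)

theorem routeCost_cheapestRoute_le [Nonempty R] (hρ : D.IsValidRoute s t m ρ) :
    D.routeCost (D.cheapestRoute s t m) ≤ D.routeCost ρ :=
  (le_total _ _).elim id ((D.minimalFor_cheapestRoute hρ).2 hρ)

variable [Fintype R] [Fintype L]

/-- The largest node length not exceeding `m`. Replacing `m` by it does not affect the valid routes,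
but leaves only few possible values. -/
noncomputable def roundBudget (m : ℕ) : ℕ :=
  ((Finset.univ ×ˢ listsUpTo L D.height).filter fun z : R × List L => D.len z.1 z.2 ≤ m).sup
    fun z => D.len z.1 z.2

/-- The possible values of `roundBudget`. -/
noncomputable def budgets : Finset ℕ :=
  insert 0 ((Finset.univ ×ˢ listsUpTo L D.height).image fun z : R × List L => D.len z.1 z.2)

theorem roundBudget_mem_budgets (m : ℕ) : D.roundBudget m ∈ D.budgets := by
  unfold roundBudget budgets
  rcases Finset.eq_empty_or_nonempty
    ((Finset.univ ×ˢ listsUpTo L D.height).filter fun z : R × List L => D.len z.1 z.2 ≤ m)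
    with hempty | hne
  · rw [hempty]
    exact Finset.mem_insert_self _ _
  · obtain ⟨z, hz, hsup⟩ := Finset.exists_mem_eq_sup _ hne fun z : R × List L => D.len z.1 z.2
    rw [hsup]
    exact Finset.mem_insert_of_mem (Finset.mem_image_of_mem _ (Finset.mem_filter.1 hz).1)

theorem card_budgets_le :
    D.budgets.card ≤ Fintype.card R * (listsUpTo L D.height).card + 1 := by
  refine (Finset.card_insert_le _ _).trans (Nat.add_le_add_right ?_ 1)
  rw [← Finset.card_univ, ← Finset.card_product]
  exact Finset.card_image_le

theorem len_le_roundBudget_iff {r : R} {q : List L} (hq : q.length ≤ D.height) :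
    D.len r q ≤ D.roundBudget m ↔ D.len r q ≤ m := by
  refine ⟨fun h => h.trans (Finset.sup_le fun z hz => (Finset.mem_filter.1 hz).2), fun h => ?_⟩
  have hmem : (r, q) ∈ Finset.univ ×ˢ listsUpTo L D.height :=
    Finset.mem_product.2 ⟨Finset.mem_univ r, mem_listsUpTo.2 hq⟩
  exact Finset.le_sup (f := fun z : R × List L => D.len z.1 z.2) (Finset.mem_filter.2 ⟨hmem, h⟩)

theorem isValidRoute_roundBudget :
    D.IsValidRoute s t (D.roundBudget m) ρ ↔ D.IsValidRoute s t m ρ where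
  mp hρ :=
    { hρ with
      left_isTarget := hρ.left_isTarget.imp_right (D.len_le_roundBudget_iff hρ.left_length_le).1
      right_isTarget :=
        hρ.right_isTarget.imp_right (D.len_le_roundBudget_iff hρ.right_length_le).1 }
  mpr hρ :=
    { hρ with
      left_isTarget := hρ.left_isTarget.imp_right (D.len_le_roundBudget_iff hρ.left_length_le).2
      right_isTarget :=
        hρ.right_isTarget.imp_right (D.len_le_roundBudget_iff hρ.right_length_le).2 }

end Fallback

variable {R V : Type*} {L : Type} {D : LayeredForest R L V} {trials : ℕ}
  [Fintype R] [Fintype L] [DecidableEq L]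

/-- The rounding has selected the node `(r, q)` by the time of the last request in `X`. -/
def Bought (ω : D.Sample trials) (X : List (V × V)) (r : R) (q : List L) : Prop :=
  ∃ i ≤ X.length, Selected ω (D.counters (X.take i)) r q

/-- A route that is valid for the current budget and consists of nodes that have been bought. -/
structure IsBoughtRoute (ω : D.Sample trials) (X : List (V × V)) (s t : V) (ρ : Route R L) :
    Prop where
  isValidRoute : D.IsValidRoute s t (D.budget X) ρ
  bought : ∀ z ∈ ρ.nodes, Bought ω X z.1 z.2

variable {ω : D.Sample trials} {X Y : List (V × V)} {s t : V} {r : R} {q : List L} {ρ : Route R L}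

theorem Bought.of_prefix (hY : Bought ω Y r q) (hYX : Y <+: X) : Bought ω X r q := by
  obtain ⟨i, hi, hq⟩ := hY
  obtain ⟨Z, rfl⟩ := hYX
  refine ⟨i, hi.trans (List.length_append ▸ Nat.le_add_right _ _), ?_⟩
  rwa [List.take_append_of_le_length hi]

section Choice

variable [Nonempty R]

open Classical in
/-- The route for the request `(s, t)` at the end of `X`: a bought route if there is one, and the
cheapest valid route otherwise. -/
noncomputable def chooseRoute (ω : D.Sample trials) (X : List (V × V)) (s t : V) : Route R L :=
  if ∃ ρ, IsBoughtRoute ω X s t ρ then Classical.epsilon (IsBoughtRoute ω X s t)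
  else D.cheapestRoute s t (D.roundBudget (D.budget X))

theorem isBoughtRoute_chooseRoute (h : ∃ ρ, IsBoughtRoute ω X s t ρ) :
    IsBoughtRoute ω X s t (chooseRoute ω X s t) := by
  rw [chooseRoute, if_pos h]
  exact Classical.epsilon_spec h

theorem chooseRoute_of_not_exists (h : ¬ ∃ ρ, IsBoughtRoute ω X s t ρ) :
    chooseRoute ω X s t = D.cheapestRoute s t (D.roundBudget (D.budget X)) := by
  rw [chooseRoute, if_neg h]

theorem isValidRoute_chooseRoute (ω : D.Sample trials) (hρ : D.IsValidRoute s t (D.budget X) ρ) :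
    D.IsValidRoute s t (D.budget X) (chooseRoute ω X s t) := by
  by_cases h : ∃ ρ, IsBoughtRoute ω X s t ρ
  · exact (isBoughtRoute_chooseRoute h).isValidRoute
  · rw [chooseRoute_of_not_exists h, ← D.isValidRoute_roundBudget]
    exact (D.minimalFor_cheapestRoute (D.isValidRoute_roundBudget.2 hρ)).1

/-- The route for the `i`-th request in `X`. -/
noncomputable def solution (ω : D.Sample trials) (X : List (V × V)) (i : Fin X.length) :
    Route R L :=
  chooseRoute ω (X.take (i + 1)) (X.get i).1 (X.get i).2

end Choice

/-- There is no bought route for the `i`-th request in `X`. -/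
def Fails (ω : D.Sample trials) (X : List (V × V)) (i : Fin X.length) : Prop :=
  ¬ ∃ ρ, IsBoughtRoute ω (X.take (i + 1)) (X.get i).1 (X.get i).2 ρ

variable (D) in
/-- The data that determines the fallback route of the `i`-th request in `X`. -/
noncomputable def key (X : List (V × V)) (i : Fin X.length) : V × V × ℕ :=
  ((X.get i).1, (X.get i).2, D.roundBudget (D.budget (X.take (i + 1))))

theorem not_selectsRoute_of_fails {i j : Fin X.length} (hij : i ≤ j)
    (hkey : D.key X i = D.key X j) (hj : Fails ω X j) :
    ¬ SelectsRoute ω (D.counters (X.take (i + 1))) (X.get i).1 (X.get i).2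
      (D.budget (X.take (i + 1))) := by
  rintro ⟨ρ, hρ, hsel⟩
  simp only [key, Prod.mk.injEq] at hkey
  rw [← D.isValidRoute_roundBudget, hkey.1, hkey.2.1, hkey.2.2, D.isValidRoute_roundBudget] at hρ
  refine hj ⟨ρ, hρ, fun z hz => Bought.of_prefix (Y := X.take (i + 1)) ⟨i + 1, ?_, ?_⟩ ?_⟩
  · exact (List.length_take_of_le i.2).ge
  · rw [List.take_take, min_self]
    exact hsel z hz
  · exact List.take_prefix_take_left (Nat.succ_le_succ hij)

theorem bought_or_fails_of_mem_nodes [Nonempty R] {i : Fin X.length} {z : R × List L}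
    (hz : z ∈ (solution ω X i).nodes) :
    Bought ω X z.1 z.2 ∨ Fails ω X i ∧
      z ∈ (D.cheapestRoute (D.key X i).1 (D.key X i).2.1 (D.key X i).2.2).nodes := by
  by_cases h : ∃ ρ, IsBoughtRoute ω (X.take (i + 1)) (X.get i).1 (X.get i).2 ρ
  · exact .inl (((isBoughtRoute_chooseRoute h).bought z hz).of_prefix (List.take_prefix _ _))
  · rw [solution, chooseRoute_of_not_exists h] at hz
    exact .inr ⟨h, hz⟩

theorem one_le_flow_take (hX : ∀ x ∈ X, ∃ m ρ, D.IsValidRoute x.1 x.2 m ρ) (i : Fin X.length) :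
    1 ≤ D.flow (D.counters (X.take (i + 1))) (X.get i).1 (X.get i).2
      (D.budget (X.take (i + 1))) := by
  obtain ⟨m, ρ, hρ⟩ := hX _ (X.get_mem i)
  rw [List.take_succ_eq_append_getElem i.2]
  exact D.one_le_flow_counters (X.take i) hρ

theorem counters_take_le (X : List (V × V)) (i : ℕ) : D.counters (X.take i) ≤ D.counters X := by
  have hmono : D.counters (X.take i) ≤ D.counters (X.take (max i X.length)) :=
    D.counters_take_mono X (le_max_left i X.length)
  rwa [List.take_of_length_le (le_max_right i X.length)] at hmono

theorem isValidRoute_solution [Nonempty R] (hX : ∀ x ∈ X, ∃ m ρ, D.IsValidRoute x.1 x.2 m ρ)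
    (ω : D.Sample trials) (i : Fin X.length) :
    D.IsValidRoute (X.get i).1 (X.get i).2 (D.budget (X.take (i + 1))) (solution ω X i) := by
  obtain ⟨ρ, hρ, -⟩ := D.exists_isValidRoute_of_one_le_flow (one_le_flow_take hX i)
  exact isValidRoute_chooseRoute ω hρ

theorem routeCost_cheapestRoute_key_le [Nonempty R]
    (hX : ∀ x ∈ X, ∃ m ρ, D.IsValidRoute x.1 x.2 m ρ) (i : Fin X.length) :
    (D.routeCost (D.cheapestRoute (D.key X i).1 (D.key X i).2.1 (D.key X i).2.2) : ℝ) ≤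
      2 * D.fracCost (D.counters X) := by
  obtain ⟨ρ, hρ, hcost⟩ := D.exists_isValidRoute_of_one_le_flow (one_le_flow_take hX i)
  calc (D.routeCost (D.cheapestRoute (D.key X i).1 (D.key X i).2.1 (D.key X i).2.2) : ℝ)
      ≤ D.routeCost ρ :=
        Nat.cast_le.2 (D.routeCost_cheapestRoute_le (D.isValidRoute_roundBudget.2 hρ))
    _ ≤ 2 * D.fracCost (D.counters (X.take (i + 1))) := by
        rw [routeCost, Nat.cast_sum]
        exact hcost
    _ ≤ 2 * D.fracCost (D.counters X) := by
        gcongr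
        exact D.fracCost_mono (counters_take_le X _)

variable (D) in
/-- The keys of the requests in `X`. -/
noncomputable def keys [DecidableEq V] (X : List (V × V)) : Finset (V × V × ℕ) :=
  Finset.univ.image (D.key X)

theorem card_keys_le [Fintype V] [DecidableEq V] (X : List (V × V)) :
    (D.keys X).card ≤ Fintype.card V *
      (Fintype.card V * (Fintype.card R * (listsUpTo L D.height).card + 1)) := by
  have hsub : D.keys X ⊆ Finset.univ ×ˢ Finset.univ ×ˢ D.budgets :=
    Finset.image_subset_iff.2 fun i _ => Finset.mem_product.2 ⟨Finset.mem_univ _,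
      Finset.mem_product.2 ⟨Finset.mem_univ _, D.roundBudget_mem_budgets _⟩⟩
  refine (Finset.card_le_card hsub).trans ?_
  rw [Finset.card_product, Finset.card_product, Finset.card_univ]
  gcongr
  exact D.card_budgets_le

variable [DecidableEq R]

-- Only the first request with a given key matters: all nodes selected then stay bought.
theorem uniformProb_exists_fails_le (hX : ∀ x ∈ X, ∃ m ρ, D.IsValidRoute x.1 x.2 m ρ)
    (hR : 2 * Fintype.card R ≤ 2 ^ D.levels) (κ : V × V × ℕ) :
    uniformProb (fun ω : D.Sample trials => ∃ i, D.key X i = κ ∧ Fails ω X i) ≤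
      Real.exp (-(trials / 8)) := by
  by_cases hκ : ∃ i, D.key X i = κ
  · obtain ⟨i, hi, hmin⟩ := exists_minimalFor_of_wellFoundedLT (D.key X · = κ) id hκ
    refine (uniformProb_mono fun ω hω => ?_).trans
      (uniformProb_not_selectsRoute_le (one_le_flow_take hX i) hR)
    obtain ⟨j, hj, hfail⟩ := hω
    exact not_selectsRoute_of_fails ((le_total i j).elim id (hmin hj)) (hi.trans hj.symm) hfail
  · rw [uniformProb_of_forall_not fun ω ⟨i, hi, _⟩ => hκ ⟨i, hi⟩]
    positivity

theorem uniformProb_bought_le {z : R × List L} (hz : z.2 ≠ []) (hzh : z.2.length ≤ D.height) :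
    uniformProb (fun ω : D.Sample trials => Bought ω X z.1 z.2) ≤
      D.selectionFactor trials * D.cap (D.counters X) z.1 z.2 := by
  have hsel := uniformProb_exists_selected_le (trials := trials) (D.counters_take_mono X) X.length
    z.1 hz hzh
  rwa [List.take_length] at hsel

variable [Nonempty R]

theorem uniformProb_exists_mem_nodes_le [DecidableEq V]
    (hX : ∀ x ∈ X, ∃ m ρ, D.IsValidRoute x.1 x.2 m ρ)
    (hR : 2 * Fintype.card R ≤ 2 ^ D.levels) {z : R × List L} (hz : z.2 ≠ [])
    (hzh : z.2.length ≤ D.height) :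
    uniformProb (fun ω : D.Sample trials => ∃ i, z ∈ (solution ω X i).nodes) ≤
      D.selectionFactor trials * D.cap (D.counters X) z.1 z.2 +
        ∑ κ ∈ D.keys X, if z ∈ (D.cheapestRoute κ.1 κ.2.1 κ.2.2).nodes then
          Real.exp (-(trials / 8)) else 0 := by
  have hused : ∀ ω : D.Sample trials, (∃ i, z ∈ (solution ω X i).nodes) →
      Bought ω X z.1 z.2 ∨ ∃ κ ∈ D.keys X, z ∈ (D.cheapestRoute κ.1 κ.2.1 κ.2.2).nodes ∧
        ∃ i, D.key X i = κ ∧ Fails ω X i := fun ω ⟨i, hi⟩ =>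
    (bought_or_fails_of_mem_nodes hi).imp_right fun ⟨hfail, hmem⟩ =>
      ⟨D.key X i, Finset.mem_image_of_mem _ (Finset.mem_univ i), hmem, i, rfl, hfail⟩
  refine (uniformProb_mono hused).trans ((uniformProb_or_le _ _).trans (add_le_add
    (uniformProb_bought_le hz hzh) ((uniformProb_exists_mem_le _ _).trans
      (Finset.sum_le_sum fun κ _ => ?_))))
  split_ifs with hmem
  · exact (uniformProb_mono fun _ h => h.2).trans (uniformProb_exists_fails_le hX hR κ)
  · exact (uniformProb_of_forall_not fun _ h => hmem h.1).le

theorem cost_mul_uniformProb_le [DecidableEq V]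
    (hX : ∀ x ∈ X, ∃ m ρ, D.IsValidRoute x.1 x.2 m ρ)
    (hR : 2 * Fintype.card R ≤ 2 ^ D.levels) {z : R × List L} (hzh : z.2.length ≤ D.height) :
    D.cost z.1 z.2 * uniformProb (fun ω : D.Sample trials => ∃ i, z ∈ (solution ω X i).nodes) ≤
      D.selectionFactor trials * (D.cost z.1 z.2 * D.cap (D.counters X) z.1 z.2) +
        ∑ κ ∈ D.keys X, if z ∈ (D.cheapestRoute κ.1 κ.2.1 κ.2.2).nodes then
          Real.exp (-(trials / 8)) * D.cost z.1 z.2 else 0 := by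
  by_cases hz : z.2 = []
  · simp [hz, D.cost_nil]
  · refine (mul_le_mul_of_nonneg_left (uniformProb_exists_mem_nodes_le hX hR hz hzh)
      (Nat.cast_nonneg _)).trans_eq ?_
    rw [mul_add, Finset.mul_sum, mul_left_comm]
    simp only [mul_ite, mul_zero, mul_comm (D.cost z.1 z.2 : ℝ) (Real.exp _)]

/-- The nodes used by the solution. -/
noncomputable def solutionNodes (ω : D.Sample trials) (X : List (V × V)) : Finset (R × List L) :=
  Finset.univ.biUnion fun i => (solution ω X i).nodes

theorem solutionNodes_subset (hX : ∀ x ∈ X, ∃ m ρ, D.IsValidRoute x.1 x.2 m ρ)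
    (ω : D.Sample trials) : solutionNodes ω X ⊆ Finset.univ ×ˢ listsUpTo L D.height := by
  refine Finset.biUnion_subset.2 fun i _ z hz => Finset.mem_product.2
    ⟨Finset.mem_univ _, mem_listsUpTo.2 ?_⟩
  have hvalid := isValidRoute_solution hX ω i
  exact (Route.mem_nodes.1 hz).2.2.elim (fun h => h.length_le.trans hvalid.left_length_le)
    fun h => h.length_le.trans hvalid.right_length_le

theorem average_cost_solutionNodes_le [Fintype V]
    (hX : ∀ x ∈ X, ∃ m ρ, D.IsValidRoute x.1 x.2 m ρ)
    (hR : 2 * Fintype.card R ≤ 2 ^ D.levels)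
    (hK : (Fintype.card V * (Fintype.card V * (Fintype.card R * (listsUpTo L D.height).card + 1)) :
      ℕ) * Real.exp (-(trials / 8)) ≤ 1) :
    (∑ ω : D.Sample trials, ∑ z ∈ solutionNodes ω X, (D.cost z.1 z.2 : ℝ)) /
        Fintype.card (D.Sample trials) ≤
      (D.selectionFactor trials + 2) * D.fracCost (D.counters X) := by
  classical
  rw [sum_sum_div_card_eq (solutionNodes_subset hX) fun z => (D.cost z.1 z.2 : ℝ)]
  set T : Finset (R × List L) := Finset.univ ×ˢ listsUpTo L D.height
  set a := Real.exp (-((trials : ℝ) / 8))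
  have hfrac := D.fracCost_nonneg (D.counters X)
  have hcard : ((D.keys X).card : ℝ) * a ≤ 1 :=
    (mul_le_mul_of_nonneg_right (Nat.cast_le.2 (card_keys_le X)) (Real.exp_pos _).le).trans hK
  have hfallback : ∑ κ ∈ D.keys X, ∑ z ∈ T,
      (if z ∈ (D.cheapestRoute κ.1 κ.2.1 κ.2.2).nodes then a * D.cost z.1 z.2 else 0) ≤
      2 * D.fracCost (D.counters X) :=
    calc _ ≤ ∑ κ ∈ D.keys X, a * (2 * D.fracCost (D.counters X)) := by
          refine Finset.sum_le_sum fun κ hκ =>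
            (D.sum_ite_mem_nodes_le_routeCost _ T (Real.exp_pos _).le).trans ?_
          obtain ⟨i, -, rfl⟩ := Finset.mem_image.1 hκ
          gcongr
          exact routeCost_cheapestRoute_key_le hX i
      _ = (D.keys X).card * a * (2 * D.fracCost (D.counters X)) := by
          rw [Finset.sum_const, nsmul_eq_mul, mul_assoc]
      _ ≤ 2 * D.fracCost (D.counters X) := mul_le_of_le_one_left (by positivity) hcard
  calc _ ≤ ∑ z ∈ T, (D.selectionFactor trials * (D.cost z.1 z.2 * D.cap (D.counters X) z.1 z.2) +
          ∑ κ ∈ D.keys X, if z ∈ (D.cheapestRoute κ.1 κ.2.1 κ.2.2).nodes then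
            a * D.cost z.1 z.2 else 0) := by
        refine Finset.sum_le_sum fun z hz => ?_
        simp only [solutionNodes, Finset.mem_biUnion, Finset.mem_univ, true_and]
        exact cost_mul_uniformProb_le hX hR (mem_listsUpTo.1 (Finset.mem_product.1 hz).2)
    _ ≤ D.selectionFactor trials * D.fracCost (D.counters X) +
          2 * D.fracCost (D.counters X) := by
        rw [Finset.sum_add_distrib, ← Finset.mul_sum, Finset.sum_comm, Finset.sum_product]
        exact add_le_add_right hfallback _
    _ = _ := (add_mul _ _ _).symm

end LayeredForest

end Algorithm

namespace Network

section RouteWalk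

variable {V : Type} [Fintype V] {N : Network V}

variable (N) in
/-- The walk of a route: along the left chain back to the root, then along the right chain. -/
noncomputable def routeWalk (r : Route V (StepLabel V)) : List (V × V) :=
  reverseWalk (N.chainPath r.root r.left) ++ N.chainPath r.root r.right

theorem isWalk_routeWalk (hN : Undirected N.edges N.cost N.len) (r : Route V (StepLabel V)) :
    IsWalk N.edges (N.chainEnd r.root r.left) (N.chainEnd r.root r.right) (N.routeWalk r) :=
  ((N.isWalk_chainPath _ _).reverse fun _ => hN.swap_mem).append (N.isWalk_chainPath _ _)

theorem weight_len_routeWalk (hN : Undirected N.edges N.cost N.len) (r : Route V (StepLabel V)) :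
    weight N.len (N.routeWalk r) = N.routeLen r := by
  rw [routeWalk, weight_append, weight_reverseWalk hN.len_swap]
  rfl

variable (N) in
/-- The edges of the last step of the chain to a node, in both directions. -/
noncomputable def nodeEdges (z : V × List (StepLabel V)) : List (V × V) :=
  reverseWalk (N.lastStep z.1 z.2) ++ N.lastStep z.1 z.2

theorem weight_cost_nodeEdges (hN : Undirected N.edges N.cost N.len)
    (z : V × List (StepLabel V)) : weight N.cost (N.nodeEdges z) = 2 * N.lastCost z.1 z.2 := by
  rw [nodeEdges, weight_append, weight_reverseWalk hN.cost_swap, two_mul]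
  rfl

variable [DecidableEq V]

theorem exists_mem_nodeEdges {r : Route V (StepLabel V)} {e : V × V} (he : e ∈ N.routeWalk r) :
    ∃ z ∈ r.nodes, e ∈ N.nodeEdges z := by
  simp only [routeWalk, nodeEdges, reverseWalk, List.mem_append, List.mem_reverse,
    List.mem_map] at he ⊢
  simp only [Route.mem_nodes]
  rcases he with ⟨e', he', rfl⟩ | he
  · obtain ⟨p, hp, hep⟩ := N.exists_mem_lastStep he'
    obtain ⟨hne, hpre⟩ := mem_nonnilPrefixes.1 hp
    exact ⟨(r.root, p), ⟨rfl, hne, .inl hpre⟩, .inl ⟨e', hep, rfl⟩⟩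
  · obtain ⟨p, hp, hep⟩ := N.exists_mem_lastStep he
    obtain ⟨hne, hpre⟩ := mem_nonnilPrefixes.1 hp
    exact ⟨(r.root, p), ⟨rfl, hne, .inr hpre⟩, .inr hep⟩

theorem objVal_routeWalk_le (hN : Undirected N.edges N.cost N.len) {k : ℕ}
    (route : Fin k → Route V (StepLabel V)) :
    objVal N.cost N.len (fun i => N.routeWalk (route i)) ≤
      2 * N.routesCost Finset.univ route + ∑ i, N.routeLen (route i) := by
  refine add_le_add ?_ (Finset.sum_le_sum fun i _ => (weight_len_routeWalk hN (route i)).le)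
  set S := Finset.univ.biUnion fun i => (route i).nodes
  have hsub : (Finset.univ.biUnion fun i => (N.routeWalk (route i)).toFinset) ⊆
      S.biUnion fun z => (N.nodeEdges z).toFinset := fun e he => by
    obtain ⟨i, -, hi⟩ := Finset.mem_biUnion.1 he
    obtain ⟨z, hz, hez⟩ := exists_mem_nodeEdges (List.mem_toFinset.1 hi)
    exact Finset.mem_biUnion.2 ⟨z, Finset.mem_biUnion.2 ⟨i, Finset.mem_univ i, hz⟩,
      List.mem_toFinset.2 hez⟩
  calc ∑ e ∈ Finset.univ.biUnion fun i => (N.routeWalk (route i)).toFinset, N.cost e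
      ≤ ∑ e ∈ S.biUnion fun z => (N.nodeEdges z).toFinset, N.cost e :=
        Finset.sum_le_sum_of_subset_of_nonneg hsub fun e _ _ => N.cost_nonneg e
    _ ≤ ∑ z ∈ S, ∑ e ∈ (N.nodeEdges z).toFinset, N.cost e := sum_biUnion_le N.cost_nonneg _ _
    _ ≤ ∑ z ∈ S, 2 * N.lastCost z.1 z.2 := Finset.sum_le_sum fun z _ =>
        (sum_toFinset_le_weight N.cost_nonneg _).trans_eq (weight_cost_nodeEdges hN z)
    _ = 2 * N.routesCost Finset.univ route := (Finset.mul_sum _ _ _).symm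

end RouteWalk

end Network

theorem le_mul_ceil_div {η : ℝ} (hη : 0 < η) (x : ℝ) : x ≤ η * ⌈x / η⌉₊ := by
  rw [← div_le_iff₀' hη]
  exact Nat.le_ceil _

theorem mul_ceil_div_le {η x : ℝ} (hη : 0 < η) (hx : x = 0 ∨ η ≤ x) :
    η * ⌈x / η⌉₊ ≤ 2 * x := by
  rcases hx with rfl | hx
  · simp
  · have hceil := (Nat.ceil_lt_add_one (div_nonneg (hη.le.trans hx) hη.le)).le
    calc η * ⌈x / η⌉₊ ≤ η * (x / η + 1) := mul_le_mul_of_nonneg_left hceil hη.le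
      _ = x + η := by field_simp
      _ ≤ 2 * x := by linarith

section CardBounds

variable {V : Type} [Fintype V] {m : ℕ}

theorem card_stepLabel_add_one_le (hm : 0 < m) (hcard : Fintype.card V < 2 ^ m) :
    Fintype.card (StepLabel V) + 1 ≤ 2 ^ (5 * m) := by
  have hfour : Fintype.card (StepLabel V) ≤ 2 ^ (4 * m) :=
    calc Fintype.card (StepLabel V)
        = Fintype.card V * (Fintype.card V * Fintype.card V * (Fintype.card V + 1)) := by simp
      _ ≤ 2 ^ m * (2 ^ m * 2 ^ m * 2 ^ m) := by gcongr; exact hcard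
      _ = 2 ^ (4 * m) := by ring
  calc Fintype.card (StepLabel V) + 1 ≤ 2 ^ (4 * m) + 2 ^ (4 * m) :=
        add_le_add hfour Nat.one_le_two_pow
    _ = 2 ^ (4 * m + 1) := by ring
    _ ≤ 2 ^ (5 * m) := Nat.pow_le_pow_right two_pos (by lia)

variable [DecidableEq V]

theorem card_mul_card_listsUpTo_le (hm : 0 < m) (hcard : Fintype.card V < 2 ^ m) :
    Fintype.card V * (listsUpTo (StepLabel V) m).card ≤ 2 ^ (6 * m ^ 2) := by
  have hlists : (listsUpTo (StepLabel V) m).card ≤ 2 ^ (5 * m ^ 2) :=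
    calc (listsUpTo (StepLabel V) m).card ≤ (Fintype.card (StepLabel V) + 1) ^ m :=
          card_listsUpTo_le _ _
      _ ≤ (2 ^ (5 * m)) ^ m := Nat.pow_le_pow_left (card_stepLabel_add_one_le hm hcard) m
      _ = 2 ^ (5 * m ^ 2) := by rw [← pow_mul]; ring_nf
  calc Fintype.card V * (listsUpTo (StepLabel V) m).card ≤ 2 ^ m * 2 ^ (5 * m ^ 2) := by gcongr
    _ = 2 ^ (m + 5 * m ^ 2) := (pow_add _ _ _).symm
    _ ≤ 2 ^ (6 * m ^ 2) := Nat.pow_le_pow_right two_pos (by nlinarith)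

theorem card_keys_mul_exp_le_one (hm : 0 < m) (hcard : Fintype.card V < 2 ^ m) :
    (Fintype.card V * (Fintype.card V *
      (Fintype.card V * (listsUpTo (StepLabel V) m).card + 1)) : ℕ) *
        Real.exp (-((72 * m ^ 2 : ℕ) / 8)) ≤ 1 := by
  have hkeys : Fintype.card V * (Fintype.card V *
      (Fintype.card V * (listsUpTo (StepLabel V) m).card + 1)) ≤ 2 ^ (9 * m ^ 2) :=
    calc _ ≤ 2 ^ m * (2 ^ m * (2 ^ (6 * m ^ 2) + 2 ^ (6 * m ^ 2))) := by
          gcongr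
          · exact card_mul_card_listsUpTo_le hm hcard
          · exact Nat.one_le_two_pow
      _ = 2 ^ (m + (m + (6 * m ^ 2 + 1))) := by ring
      _ ≤ 2 ^ (9 * m ^ 2) := Nat.pow_le_pow_right two_pos (by nlinarith)
  have hexp : ((2 ^ (9 * m ^ 2) : ℕ) : ℝ) ≤ Real.exp ((72 * m ^ 2 : ℕ) / 8) :=
    calc ((2 ^ (9 * m ^ 2) : ℕ) : ℝ) = 2 ^ (9 * m ^ 2) := by push_cast; rfl
      _ ≤ Real.exp 1 ^ (9 * m ^ 2) := by gcongr; linarith [Real.add_one_le_exp (1 : ℝ)]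
      _ = Real.exp ((72 * m ^ 2 : ℕ) / 8) := by rw [← Real.exp_nat_mul]; push_cast; ring_nf
  rw [Real.exp_neg, ← div_eq_mul_inv]
  exact div_le_one_of_le₀ ((Nat.cast_le.2 hkeys).trans hexp) (Real.exp_pos _).le

end CardBounds

section ObjVal

variable {V : Type} [DecidableEq V] {c ℓ : V × V → ℝ} {k : ℕ}

theorem objVal_eq_sum_add_sum_weight (P : Fin k → List (V × V)) : objVal c ℓ P =
    (∑ e ∈ Finset.univ.biUnion fun i => (P i).toFinset, c e) + ∑ i, weight ℓ (P i) := rfl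

theorem objVal_nonneg (hc : ∀ e, 0 ≤ c e) (hℓ : ∀ e, 0 ≤ ℓ e) (P : Fin k → List (V × V)) :
    0 ≤ objVal c ℓ P :=
  add_nonneg (Finset.sum_nonneg fun e _ => hc e)
    (Finset.sum_nonneg fun i _ => weight_nonneg hℓ (P i))

end ObjVal

namespace Network

variable {V : Type} [Fintype V] {N : Network V} {m : ℕ} {η : ℝ}

variable (N m η) in
/-- A unit for rounding costs and lengths up to integers: the positive ones among them are at
least one unit, hence at most double when rounded up. -/
structure IsRoundingUnit : Prop where
  pos : 0 < η
  lastCost_eq_zero_or_le : ∀ r q, q.length ≤ m → N.lastCost r q = 0 ∨ η ≤ N.lastCost r q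
  chainLen_eq_zero_or_le : ∀ r q, q.length ≤ m → N.chainLen r q = 0 ∨ η ≤ N.chainLen r q

variable (N m) in
theorem exists_isRoundingUnit : ∃ η, N.IsRoundingUnit m η := by
  classical
  let T : Finset (V × List (StepLabel V)) := Finset.univ ×ˢ listsUpTo (StepLabel V) m
  obtain ⟨η, hη, hle⟩ := exists_pos_forall_eq_zero_or_le (α := T ⊕ T)
    (f := Sum.elim (fun z => N.lastCost z.1.1 z.1.2) fun z => N.chainLen z.1.1 z.1.2) fun z =>
      z.rec (fun _ => N.lastCost_nonneg _ _) fun _ => N.chainLen_nonneg _ _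
  have hT : ∀ r q, q.length ≤ m → (r, q) ∈ T := fun r q hq =>
    Finset.mem_product.2 ⟨Finset.mem_univ r, mem_listsUpTo.2 hq⟩
  exact ⟨η, hη, fun r q hq => hle (.inl ⟨(r, q), hT r q hq⟩),
    fun r q hq => hle (.inr ⟨(r, q), hT r q hq⟩)⟩

variable (N m η) in
/-- The forest of chains of at most `m` steps, with costs and lengths rounded up to multiples of
the unit `η`. -/
noncomputable def roundedForest : LayeredForest V (StepLabel V) V where
  height := m
  levels := 6 * m ^ 2 + 1
  cost r q := ⌈N.lastCost r q / η⌉₊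
  len r q := ⌈N.chainLen r q / η⌉₊
  endpt := N.chainEnd
  cost_nil r := by simp [lastCost, lastStep]
  levels_ne_zero := Nat.succ_ne_zero _

theorem lastCost_le (hη : 0 < η) (r : V) (q : List (StepLabel V)) :
    N.lastCost r q ≤ η * (N.roundedForest m η).cost r q := le_mul_ceil_div hη _

theorem chainLen_le (hη : 0 < η) (r : V) (q : List (StepLabel V)) :
    N.chainLen r q ≤ η * (N.roundedForest m η).len r q := le_mul_ceil_div hη _

theorem IsRoundingUnit.cost_le (h : N.IsRoundingUnit m η) {r : V} {q : List (StepLabel V)}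
    (hq : q.length ≤ m) : η * (N.roundedForest m η).cost r q ≤ 2 * N.lastCost r q :=
  mul_ceil_div_le h.pos (h.lastCost_eq_zero_or_le r q hq)

theorem IsRoundingUnit.len_le (h : N.IsRoundingUnit m η) {r : V} {q : List (StepLabel V)}
    (hq : q.length ≤ m) : η * (N.roundedForest m η).len r q ≤ 2 * N.chainLen r q :=
  mul_ceil_div_le h.pos (h.chainLen_eq_zero_or_le r q hq)

theorem IsRoute.isValidRoute {u v : V} {ρ : Route V (StepLabel V)} (hρ : N.IsRoute m u v ρ) :
    (N.roundedForest m η).IsValidRoute u v ((N.roundedForest m η).len ρ.root ρ.left +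
      (N.roundedForest m η).len ρ.root ρ.right) ρ where
  left_length_le := hρ.left_length_le
  right_length_le := hρ.right_length_le
  left_isTarget := ⟨hρ.left_end, Nat.le_add_right _ _⟩
  right_isTarget := ⟨hρ.right_end, Nat.le_add_left _ _⟩

theorem isWalk_routeWalk_of_isValidRoute (hN : Undirected N.edges N.cost N.len) {u v : V} {b : ℕ}
    {ρ : Route V (StepLabel V)} (hρ : (N.roundedForest m η).IsValidRoute u v b ρ) :
    IsWalk N.edges u v (N.routeWalk ρ) := by
  obtain ⟨rfl, -⟩ := hρ.left_isTarget
  obtain ⟨rfl, -⟩ := hρ.right_isTarget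
  exact isWalk_routeWalk hN ρ

theorem routeLen_le_of_isValidRoute (hη : 0 < η) {u v : V} {b : ℕ} {ρ : Route V (StepLabel V)}
    (hρ : (N.roundedForest m η).IsValidRoute u v b ρ) : N.routeLen ρ ≤ 2 * η * b := by
  have hleft : N.chainLen ρ.root ρ.left ≤ η * b := (chainLen_le hη _ _).trans
    (mul_le_mul_of_nonneg_left (Nat.cast_le.2 hρ.left_isTarget.2) hη.le)
  have hright : N.chainLen ρ.root ρ.right ≤ η * b := (chainLen_le hη _ _).trans
    (mul_le_mul_of_nonneg_left (Nat.cast_le.2 hρ.right_isTarget.2) hη.le)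
  rw [routeLen]
  linarith

theorem exists_isValidRoute (hN : Undirected N.edges N.cost N.len) (hm : 0 < m)
    (hcard : Fintype.card V < 2 ^ m) {X : List (V × V)} (hX : Routable N.edges X) :
    ∀ x ∈ X, ∃ b ρ, (N.roundedForest m η).IsValidRoute x.1 x.2 b ρ := by
  classical
  intro x hx
  obtain ⟨p, hp⟩ := hX x hx
  obtain ⟨route, hroute, -⟩ := exists_routes_of_isWalk (s := fun _ : Unit => x.1)
    (t := fun _ => x.2) (P := fun _ => p) hN hm hcard fun _ => hp
  exact ⟨_, _, (hroute ()).isValidRoute⟩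

theorem sum_len_le (hη : N.IsRoundingUnit m η) {ι : Type*} [Fintype ι] {s t : ι → V}
    {route : ι → Route V (StepLabel V)} (hroute : ∀ i, N.IsRoute m (s i) (t i) (route i)) :
    η * ∑ i, (((N.roundedForest m η).len (route i).root (route i).left : ℝ) +
        (N.roundedForest m η).len (route i).root (route i).right) ≤
      2 * ∑ i, N.routeLen (route i) := by
  rw [Finset.mul_sum, Finset.mul_sum]
  refine Finset.sum_le_sum fun i _ => ?_
  have hleft := hη.len_le (r := (route i).root) (hroute i).left_length_le
  have hright := hη.len_le (r := (route i).root) (hroute i).right_length_le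
  rw [routeLen]
  linarith

variable [DecidableEq V]

theorem sum_cost_nodes_le (hη : N.IsRoundingUnit m η) {ι : Type*} [Fintype ι] {s t : ι → V}
    {route : ι → Route V (StepLabel V)} (hroute : ∀ i, N.IsRoute m (s i) (t i) (route i)) :
    η * ∑ z ∈ Finset.univ.biUnion fun i => (route i).nodes, ((N.roundedForest m η).cost z.1 z.2 : ℝ)
      ≤ 2 * N.routesCost Finset.univ route := by
  rw [routesCost, Finset.mul_sum, Finset.mul_sum]
  refine Finset.sum_le_sum fun z hz => hη.cost_le ?_
  obtain ⟨i, -, hi⟩ := Finset.mem_biUnion.1 hz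
  exact (Route.mem_nodes.1 hi).2.2.elim (fun h => h.length_le.trans (hroute i).left_length_le)
    fun h => h.length_le.trans (hroute i).right_length_le

theorem sum_budget_le_objVal (hN : Undirected N.edges N.cost N.len) (hm : 0 < m)
    (hcard : Fintype.card V < 2 ^ m) (hη : N.IsRoundingUnit m η)
    {X : List (V × V)} {P : Fin X.length → List (V × V)}
    (hP : ∀ i, IsWalk N.edges (X.get i).1 (X.get i).2 (P i)) :
    η * ∑ i : Fin X.length, ((N.roundedForest m η).budget (X.take (i + 1)) : ℝ) ≤
      152 * m ^ 4 * objVal N.cost N.len P := by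
  obtain ⟨route, hroute, hcost, hlen⟩ := exists_routes_of_isWalk hN hm hcard hP
  set D := N.roundedForest m η with hD
  have hbudget := Nat.cast_le (α := ℝ).2 (D.sum_budget_le (fun i => (hroute i).isValidRoute)
    fun i => Finset.subset_biUnion_of_mem (fun i => (route i).nodes) (Finset.mem_univ i))
  push_cast at hbudget
  have hm1 : (1 : ℝ) ≤ m := by exact_mod_cast hm
  have hlevels : (D.levels : ℝ) ≤ 7 * m ^ 2 := by
    simp only [hD, roundedForest]
    push_cast
    nlinarith
  rw [objVal_eq_sum_add_sum_weight]
  set cost := ∑ e ∈ Finset.univ.biUnion fun i => (P i).toFinset, N.cost e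
  set len := ∑ i, weight N.len (P i)
  have hcost0 : 0 ≤ cost := Finset.sum_nonneg fun e _ => N.cost_nonneg e
  have hlen0 : 0 ≤ len := Finset.sum_nonneg fun i _ => weight_nonneg N.len_nonneg (P i)
  have hlens := (sum_len_le hη hroute).trans (mul_le_mul_of_nonneg_left hlen zero_le_two)
  have hcosts := (sum_cost_nodes_le hη hroute).trans (mul_le_mul_of_nonneg_left hcost zero_le_two)
  calc η * ∑ i : Fin X.length, (D.budget (X.take (i + 1)) : ℝ)
      ≤ η * ∑ i, ((D.len (route i).root (route i).left : ℝ) +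
            D.len (route i).root (route i).right) + D.levels *
          (η * ∑ z ∈ Finset.univ.biUnion fun i => (route i).nodes, (D.cost z.1 z.2 : ℝ)) := by
        rw [mul_left_comm, ← mul_add]
        exact mul_le_mul_of_nonneg_left hbudget hη.pos.le
    _ ≤ 2 * (76 * m ^ 2 * len) + 7 * m ^ 2 * (2 * (4 * m ^ 2 * cost)) :=
        add_le_add hlens (mul_le_mul hlevels hcosts
          (mul_nonneg hη.pos.le (Finset.sum_nonneg fun _ _ => Nat.cast_nonneg _)) (by positivity))
    _ = 152 * m ^ 2 * len + 56 * m ^ 4 * cost := by ring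
    _ ≤ 152 * m ^ 4 * len + 152 * m ^ 4 * cost := by gcongr <;> norm_num [hm1]
    _ = 152 * m ^ 4 * (cost + len) := by ring

end Network

theorem optVal_nonneg {V : Type} [DecidableEq V] {E : Set (V × V)} {c ℓ : V × V → ℝ}
    (hc : ∀ e, 0 ≤ c e) (hℓ : ∀ e, 0 ≤ ℓ e) (X : List (V × V)) : 0 ≤ optVal E c ℓ X :=
  Real.sInf_nonneg fun _ ⟨P, _, hP⟩ => hP ▸ objVal_nonneg hc hℓ P

theorem CompetitiveOn.mono {V : Type} [DecidableEq V] {A : OnlineAlg V} {E : Set (V × V)}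
    {c ℓ : V × V → ℝ} {γ γ' : ℝ} {X : List (V × V)} (h : CompetitiveOn A E c ℓ γ X)
    (hc : ∀ e, 0 ≤ c e) (hℓ : ∀ e, 0 ≤ ℓ e) (hγ : γ ≤ γ') : CompetitiveOn A E c ℓ γ' X :=
  fun hX => (h hX).imp_right fun hle =>
    hle.trans (mul_le_mul_of_nonneg_right hγ (optVal_nonneg hc hℓ X))

theorem le_mul_optVal {V : Type} [DecidableEq V] {E : Set (V × V)} {c ℓ : V × V → ℝ}
    {X : List (V × V)} {a γ : ℝ} (hγ : 0 < γ) (hX : Routable E X)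
    (h : ∀ P : Fin X.length → List (V × V),
      (∀ i, IsWalk E (X.get i).1 (X.get i).2 (P i)) → a ≤ γ * objVal c ℓ P) :
    a ≤ γ * optVal E c ℓ X := by
  choose P hP using fun i => hX _ (X.get_mem i)
  rw [← div_le_iff₀' hγ]
  refine le_csInf ⟨_, P, hP, rfl⟩ ?_
  rintro _ ⟨P, hP, rfl⟩
  exact (div_le_iff₀' hγ).2 (h P hP)

namespace Network

section Algorithm

variable {V : Type} [Fintype V] {N : Network V} {m : ℕ} {η : ℝ}

theorem selectionFactor_roundedForest_le (hm : 0 < m) :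
    (N.roundedForest m η).selectionFactor (72 * m ^ 2) ≤ 18432 * m ^ 8 := by
  have hlevels : 6 * m ^ 2 + 2 ≤ 8 * m ^ 2 := by nlinarith
  have hlengths : 2 * (m + 1) ≤ 4 * m := by lia
  have hcells : m * (6 * m ^ 2 + 1) + 1 ≤ 8 * m ^ 3 :=
    calc m * (6 * m ^ 2 + 1) + 1 ≤ m * (6 * m ^ 2 + m ^ 2) + m ^ 3 := by
          gcongr <;> exact Nat.one_le_pow _ _ hm
      _ = 8 * m ^ 3 := by ring
  calc (N.roundedForest m η).selectionFactor (72 * m ^ 2)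
      = (6 * m ^ 2 + 2) * (72 * m ^ 2 * (2 * (m + 1) * (m * (6 * m ^ 2 + 1) + 1))) := rfl
    _ ≤ 8 * m ^ 2 * (72 * m ^ 2 * (4 * m * (8 * m ^ 3))) :=
        Nat.mul_le_mul hlevels (Nat.mul_le_mul_left _ (Nat.mul_le_mul hlengths hcells))
    _ = 18432 * m ^ 8 := by ring

variable [DecidableEq V]

variable (N m η) in
/-- The random seeds of the rounding of `N.roundedForest m η`. The `72 * m ^ 2` trials per node make
the failure probability smaller than the inverse of the number of keys. -/
abbrev Seed : Type := (N.roundedForest m η).Sample (72 * m ^ 2)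

variable [Nonempty V] {X : List (V × V)}

open LayeredForest in
/-- The walk with which the algorithm answers the last request in `X`. -/
noncomputable def onlineWalk (ω : N.Seed m η) (X : List (V × V)) : List (V × V) :=
  match X.getLast? with
  | none => []
  | some x => N.routeWalk (chooseRoute ω X x.1 x.2)

open LayeredForest in
theorem onlineWalk_take (ω : N.Seed m η) (X : List (V × V)) (i : Fin X.length) :
    onlineWalk ω (X.take (i + 1)) = N.routeWalk (solution ω X i) := by
  have hlast : (X.take (i + 1)).getLast? = some (X.get i) := by
    rw [List.take_succ_eq_append_getElem i.2, List.getLast?_append_cons, List.getLast?_singleton]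
    rfl
  rw [onlineWalk, hlast]
  rfl

variable (N m η) in
/-- The online algorithm: the randomized rounding with a uniformly random seed. -/
noncomputable def onlineAlg : OnlineAlg V where
  Ω := N.Seed m η
  m := ⊤
  μ := @PMF.toMeasure _ ⊤ (PMF.uniformOfFintype (N.Seed m η))
  prob := @PMF.toMeasure.isProbabilityMeasure _ ⊤ (PMF.uniformOfFintype (N.Seed m η))
  act := onlineWalk

open LayeredForest in
theorem expObj_onlineAlg (X : List (V × V)) :
    expObj (N.onlineAlg m η) N.cost N.len X =
      (∑ ω : N.Seed m η, objVal N.cost N.len fun i => N.routeWalk (solution ω X i)) /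
        Fintype.card (N.Seed m η) := by
  let _ : MeasurableSpace (N.Seed m η) := ⊤
  have _ : MeasurableSingletonClass (N.Seed m η) := ⟨fun _ => trivial⟩
  refine (PMF.integral_eq_sum (PMF.uniformOfFintype (N.Seed m η)) _).trans ?_
  rw [Finset.sum_div]
  refine Finset.sum_congr rfl fun ω _ => ?_
  simp only [onlineAlg, onlineWalk_take, PMF.uniformOfFintype_apply, ENNReal.toReal_inv,
    ENNReal.toReal_natCast, smul_eq_mul]
  ring

open LayeredForest in
theorem objVal_solution_le (hN : Undirected N.edges N.cost N.len) (hη : 0 < η)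
    (hX : ∀ x ∈ X, ∃ b ρ, (N.roundedForest m η).IsValidRoute x.1 x.2 b ρ) (ω : N.Seed m η) :
    objVal N.cost N.len (fun i => N.routeWalk (solution ω X i)) ≤
      2 * η * ∑ z ∈ solutionNodes ω X, ((N.roundedForest m η).cost z.1 z.2 : ℝ) +
        2 * η * ∑ i : Fin X.length, ((N.roundedForest m η).budget (X.take (i + 1)) : ℝ) := by
  refine (objVal_routeWalk_le hN _).trans ?_
  rw [mul_assoc, Finset.mul_sum, Finset.mul_sum (Finset.univ : Finset (Fin X.length))]
  exact add_le_add
    (mul_le_mul_of_nonneg_left (Finset.sum_le_sum fun _ _ => lastCost_le hη _ _) zero_le_two)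
    (Finset.sum_le_sum fun i _ => routeLen_le_of_isValidRoute hη (isValidRoute_solution hX ω i))

theorem expObj_onlineAlg_le (hN : Undirected N.edges N.cost N.len) (hm : 0 < m)
    (hcard : Fintype.card V < 2 ^ m) (hη : 0 < η)
    (hX : ∀ x ∈ X, ∃ b ρ, (N.roundedForest m η).IsValidRoute x.1 x.2 b ρ) :
    expObj (N.onlineAlg m η) N.cost N.len X ≤ 147474 * m ^ 8 *
      (η * ∑ i : Fin X.length, ((N.roundedForest m η).budget (X.take (i + 1)) : ℝ)) := by
  set D := N.roundedForest m η
  set budgets := ∑ i : Fin X.length, (D.budget (X.take (i + 1)) : ℝ)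
  have hroots : 2 * Fintype.card V ≤ 2 ^ D.levels :=
    calc 2 * Fintype.card V ≤ 2 * 2 ^ m := Nat.mul_le_mul_left 2 hcard.le
      _ = 2 ^ (m + 1) := (pow_succ' 2 m).symm
      _ ≤ 2 ^ D.levels := Nat.pow_le_pow_right two_pos (Nat.succ_le_succ (by nlinarith))
  have hnodes : Fintype.card V * (listsUpTo (StepLabel V) m).card ≤ 2 ^ D.levels :=
    (card_mul_card_listsUpTo_le hm hcard).trans (Nat.pow_le_pow_right two_pos (Nat.le_succ _))
  have hfactor : (D.selectionFactor (72 * m ^ 2) : ℝ) ≤ 18432 * m ^ 8 := by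
    exact_mod_cast selectionFactor_roundedForest_le (N := N) (η := η) hm
  have hm8 : (1 : ℝ) ≤ m ^ 8 := one_le_pow₀ (by exact_mod_cast hm)
  set nodeCost : N.Seed m η → ℝ := fun ω =>
    ∑ z ∈ LayeredForest.solutionNodes ω X, (D.cost z.1 z.2 : ℝ)
  have hcost : (∑ ω, nodeCost ω) / Fintype.card (N.Seed m η) ≤
      (18432 * m ^ 8 + 2) * (4 * budgets) :=
    (LayeredForest.average_cost_solutionNodes_le hX hroots
      (card_keys_mul_exp_le_one hm hcard)).trans
      (mul_le_mul (add_le_add_left hfactor 2) (D.fracCost_counters_le X hnodes)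
        (D.fracCost_nonneg _) (by positivity))
  rw [expObj_onlineAlg]
  calc _ ≤ (∑ ω : N.Seed m η, (2 * η * nodeCost ω + 2 * η * budgets)) /
          Fintype.card (N.Seed m η) := by
        gcongr with ω
        exact objVal_solution_le hN hη hX ω
    _ = 2 * η * ((∑ ω, nodeCost ω) / Fintype.card (N.Seed m η)) + 2 * η * budgets := by
        rw [Finset.sum_add_distrib, Finset.sum_const, ← Finset.mul_sum, Finset.card_univ,
          nsmul_eq_mul, add_div, mul_div_assoc, mul_div_cancel_left₀]
        exact Nat.cast_ne_zero.2 Fintype.card_ne_zero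
    _ ≤ 2 * η * ((18432 * m ^ 8 + 2) * (4 * budgets)) + 2 * η * budgets := by gcongr
    _ = (147456 * m ^ 8 + 18) * (η * budgets) := by ring
    _ ≤ 147474 * m ^ 8 * (η * budgets) := by
        refine mul_le_mul_of_nonneg_right ?_ (by positivity)
        linarith

theorem competitiveOn_onlineAlg (hN : Undirected N.edges N.cost N.len) (hm : 0 < m)
    (hcard : Fintype.card V < 2 ^ m) (hη : N.IsRoundingUnit m η) (X : List (V × V)) :
    CompetitiveOn (N.onlineAlg m η) N.edges N.cost N.len (2 ^ 25 * m ^ 12) X := by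
  intro hX
  have hroutes := exists_isValidRoute (η := η) hN hm hcard hX
  refine ⟨fun ω i => ?_, le_mul_optVal (by positivity) hX fun P hP => ?_⟩
  · rw [show (N.onlineAlg m η).act ω (X.take (i + 1)) = _ from onlineWalk_take ω X i]
    exact isWalk_routeWalk_of_isValidRoute hN (LayeredForest.isValidRoute_solution hroutes ω i)
  · have hobj : 0 ≤ objVal N.cost N.len P := objVal_nonneg N.cost_nonneg N.len_nonneg P
    calc expObj (N.onlineAlg m η) N.cost N.len X
        ≤ 147474 * m ^ 8 * (152 * m ^ 4 * objVal N.cost N.len P) :=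
          (expObj_onlineAlg_le hN hm hcard hη.pos hroutes).trans
            (mul_le_mul_of_nonneg_left (sum_budget_le_objVal hN hm hcard hη hP) (by positivity))
      _ = 22416048 * (m ^ 12 * objVal N.cost N.len P) := by ring
      _ ≤ 2 ^ 25 * (m ^ 12 * objVal N.cost N.len P) := by gcongr; norm_num
      _ = 2 ^ 25 * m ^ 12 * objVal N.cost N.len P := (mul_assoc _ _ _).symm

end Algorithm

end Network

theorem log_two_add_one_le {n : ℕ} (hn : 2 ≤ n) : ((Nat.log 2 n + 1 : ℕ) : ℝ) ≤ 4 * Real.log n := by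
  have hlog : 1 ≤ Nat.log 2 n := Nat.log_pos one_lt_two hn
  have hpow : (2 : ℝ) ^ Nat.log 2 n ≤ n := by
    exact_mod_cast Nat.pow_log_le_self 2 (by lia)
  calc ((Nat.log 2 n + 1 : ℕ) : ℝ) ≤ 4 * (Nat.log 2 n * (1 / 2)) := by
        push_cast
        linarith [Nat.one_le_cast (α := ℝ).2 hlog]
    _ ≤ 4 * (Nat.log 2 n * Real.log 2) := by
        gcongr
        linarith [Real.log_two_gt_d9]
    _ ≤ 4 * Real.log n := by
        rw [← Real.log_pow]
        gcongr

/-- **Online multicommodity buy-at-bulk in undirected edge-weighted graphs.**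
There are absolute constants `C, d` such that every undirected edge-weighted
buy-at-bulk instance on `n ≥ 2` vertices admits a randomized online algorithm whose
expected objective value, on every finite request sequence in every arrival order,
is at most `C·(log n)^d` times the optimum of that multicommodity instance. -/
theorem online_undirected_edge_buy_at_bulk :
    ∃ (C : ℝ) (d : ℕ), 0 < C ∧
      ∀ (V : Type) [Fintype V] [DecidableEq V],
        ∀ (E : Set (V × V)) (c ℓ : V × V → ℝ) (n : ℕ),
        n = Fintype.card V → 2 ≤ n →
        (∀ e, 0 ≤ c e) → (∀ e, 0 ≤ ℓ e) →
        Undirected E c ℓ →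
        ∃ A : OnlineAlg V, ∀ X : List (V × V),
          CompetitiveOn A E c ℓ (C * Real.log n ^ d) X := by
  refine ⟨2 ^ 49, 12, by positivity, ?_⟩
  intro V _ _ E c ℓ n hn hn2 hc hℓ hE
  have hV : Nonempty V := Fintype.card_pos_iff.1 (hn ▸ two_pos.trans_le hn2)
  let N : Network V := ⟨E, c, ℓ, hc, hℓ⟩
  let m := Nat.log 2 n + 1
  obtain ⟨η, hη⟩ := N.exists_isRoundingUnit m
  have hcard : Fintype.card V < 2 ^ m := hn ▸ Nat.lt_pow_succ_log_self one_lt_two n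
  have hm : (2 : ℝ) ^ 25 * m ^ 12 ≤ 2 ^ 49 * Real.log n ^ 12 :=
    calc (2 : ℝ) ^ 25 * m ^ 12 ≤ 2 ^ 25 * (4 * Real.log n) ^ 12 := by
          gcongr
          exact log_two_add_one_le hn2
      _ = 2 ^ 49 * Real.log n ^ 12 := by ring
  exact ⟨N.onlineAlg m η, fun X => CompetitiveOn.mono
    (N.competitiveOn_onlineAlg hE (Nat.succ_pos _) hcard hη X) hc hℓ hm⟩

end BaB
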